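/- arXiv:2508.07097 — 2 statements merged into one kernel-verified Lean document; each statement's English description precedes it below -/
import Mathlib

section
/- Let φ: (R,m,k) → (S,n,ℓ) be a flat local ring homomorphism between commutative Noetherian local rings which is essentially of finite type and complete intersection at n, let M be a finitely generated S-module, and assume the residue field ℓ is separable over k. If CI*-fd_R M < ∞, then CI*-dim_S M < ∞. -/
/-!
Common definitions: André–Quillen homology via the standard (comonad/polynomial)
simplicial resolution, complete-intersection (flat) dimensions via quasi-deformations,
Cohen factorizations, Koszul homology `H₁`, and related notions.
-/

universe u

open TensorProduct IsLocalRing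

noncomputable section

/-! ### Flat and projective dimension -/

/-- `FlatDimLE Q n N` : the `Q`-module `N` has flat dimension at most `n`,
i.e. it admits a flat resolution of length at most `n`. -/
def FlatDimLE (Q : Type u) [CommRing Q] : ℕ → (N : Type u) → [AddCommGroup N] → [Module Q N] → Prop
  | 0, N, _, _ => Module.Flat Q N
  | n+1, N, _, _ =>
      ∃ (F : Type u) (_ : AddCommGroup F) (_ : Module Q F) (f : F →ₗ[Q] N),
        Module.Flat Q F ∧ Function.Surjective f ∧ FlatDimLE Q n (LinearMap.ker f)

/-- `ProjDimLE Q n N` : the `Q`-module `N` has projective dimension at most `n`. -/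
def ProjDimLE (Q : Type u) [CommRing Q] : ℕ → (N : Type u) → [AddCommGroup N] → [Module Q N] → Prop
  | 0, N, _, _ => Module.Projective Q N
  | n+1, N, _, _ =>
      ∃ (F : Type u) (_ : AddCommGroup F) (_ : Module Q F) (f : F →ₗ[Q] N),
        Module.Projective Q F ∧ Function.Surjective f ∧ ProjDimLE Q n (LinearMap.ker f)

/-- The flat dimension `fd_Q N` is finite. -/
def FlatDimFinite (Q : Type u) [CommRing Q] (N : Type u) [AddCommGroup N] [Module Q N] : Prop :=
  ∃ n : ℕ, FlatDimLE Q n N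

/-- The projective dimension `pd_Q N` is finite. -/
def ProjDimFinite (Q : Type u) [CommRing Q] (N : Type u) [AddCommGroup N] [Module Q N] : Prop :=
  ∃ n : ℕ, ProjDimLE Q n N

/-! ### Regular sequences, regular local rings, complete intersection conditions -/

/-- The ideal `I` is generated by an `A`-regular sequence. -/
def GeneratedByRegularSequence (A : Type u) [CommRing A] (I : Ideal A) : Prop :=
  ∃ rs : List A, RingTheory.Sequence.IsRegular A rs ∧ Ideal.span {x | x ∈ rs} = I

/-- A (Noetherian local) ring is regular iff its maximal ideal is generated by a
regular sequence. -/
def IsRegularLocal (A : Type u) [CommRing A] : Prop :=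
  IsNoetherianRing A ∧
    ∃ h : IsLocalRing A, GeneratedByRegularSequence A (@IsLocalRing.maximalIdeal A _ h)

/-- A local homomorphism is weakly regular if it is flat with regular closed fibre. -/
def IsWeaklyRegularHom (A B : Type u) [CommRing A] [CommRing B] [IsLocalRing A]
    (f : A →+* B) : Prop :=
  IsLocalHom f ∧ (letI := f.toAlgebra; Module.Flat A B) ∧
    IsRegularLocal (B ⧸ Ideal.map f (maximalIdeal A))

/-- `R'' → f → g` is a Cohen factorization of the semi-completion of `ψ : A → B`
with respect to the (maximal) ideal `J` of `B`:  `A → R'' → B̂` with `A → R''`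
weakly regular, `R''` complete Noetherian local and `R'' → B̂` surjective local. -/
def IsCohenFactorizationAt (A B : Type u) [CommRing A] [CommRing B] [IsLocalRing A]
    (ψ : A →+* B) (J : Ideal B) (R'' : Type u) [CommRing R'']
    (f : A →+* R'') (g : R'' →+* AdicCompletion J B) : Prop :=
  g.comp f = (algebraMap B (AdicCompletion J B)).comp ψ ∧
  IsNoetherianRing R'' ∧
  (∃ h : IsLocalRing R'', IsAdicComplete (@IsLocalRing.maximalIdeal R'' _ h) R'') ∧
  IsWeaklyRegularHom A R'' f ∧
  Function.Surjective g ∧ IsLocalHom g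

/-- `ψ : A → B` is complete intersection (c.i.) at the ideal `J` (typically the
maximal ideal of `B`): in a Cohen factorization `A → R'' → B̂` of the
semi-completion of `ψ`, the kernel of `R'' → B̂` is generated by a regular sequence. -/
def IsCIAt (A B : Type u) [CommRing A] [CommRing B] [IsLocalRing A]
    (ψ : A →+* B) (J : Ideal B) : Prop :=
  ∃ (R'' : Type u) (_ : CommRing R'') (f : A →+* R'') (g : R'' →+* AdicCompletion J B),
    IsCohenFactorizationAt A B ψ J R'' f g ∧ GeneratedByRegularSequence R'' (RingHom.ker g)

/-- A Noetherian local ring is a complete intersection if its completion is the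
quotient of a complete regular local ring by an ideal generated by a regular sequence. -/
def IsCompleteIntersectionRing (A : Type u) [CommRing A] : Prop :=
  IsNoetherianRing A ∧
  ∃ h : IsLocalRing A,
    ∃ (Q : Type u) (_ : CommRing Q)
      (g : Q →+* AdicCompletion (@IsLocalRing.maximalIdeal A _ h) A),
      IsRegularLocal Q ∧ (∃ hq : IsLocalRing Q, IsAdicComplete (@IsLocalRing.maximalIdeal Q _ hq) Q) ∧
      Function.Surjective g ∧ GeneratedByRegularSequence Q (RingHom.ker g)

/-! ### Complete intersection (flat) dimensions via quasi-deformations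

`R → R' ← Q` is a quasi-deformation when `R → R'` is flat local and `Q → R'` is
surjective local with kernel generated by a `Q`-regular sequence (all rings
Noetherian local).  The various complete intersection (flat) dimensions
`CI-fd`, `CI-dim`, `CI*-fd`, `CI*-dim`, `cidim-fd`, `cidim` of a module `M` are
`inf { fd_Q(R' ⊗_R M) - pd_Q R' }` over (upper / complete intersection)
quasi-deformations; such a dimension is finite iff there is a quasi-deformation
of the appropriate kind for which both `fd_Q (R' ⊗_R M)` and `pd_Q R'` are finite. -/

/-- The conditions on `R → R' ← Q` making it a quasi-deformation. -/
def IsQuasiDeformation (R R' Q : Type u) [CommRing R] [CommRing R'] [CommRing Q]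
    (f : R →+* R') (g : Q →+* R') : Prop :=
  IsLocalRing R' ∧ IsLocalRing Q ∧ IsNoetherianRing R' ∧ IsNoetherianRing Q ∧
  IsLocalHom f ∧ IsLocalHom g ∧ (letI := f.toAlgebra; Module.Flat R R') ∧
  Function.Surjective g ∧ GeneratedByRegularSequence Q (RingHom.ker g)

/-- `CI-fd_R M < ∞` (equivalently, for finitely generated `M`, `CI-dim_R M < ∞`):
there is a quasi-deformation `R → R' ← Q` with `fd_Q (R' ⊗_R M)` and `pd_Q R'` finite. -/
def HasFiniteCIDim (R : Type u) [CommRing R] (M : Type u) [AddCommGroup M] [Module R M] : Prop :=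
  ∃ (R' Q : Type u) (_ : CommRing R') (_ : CommRing Q) (f : R →+* R') (g : Q →+* R'),
    IsQuasiDeformation R R' Q f g ∧
    (letI := f.toAlgebra;
     letI := g.toAlgebra;
     letI : Module Q (R' ⊗[R] M) := Module.compHom _ g;
     FlatDimFinite Q (R' ⊗[R] M) ∧ ProjDimFinite Q R')

/-- `CI*-fd_R M < ∞` (resp. `CI*-dim_R M < ∞`): as in `HasFiniteCIDim` but over
upper quasi-deformations, i.e. `R → R'` is weakly regular. -/
def HasFiniteUpperCIDim (R : Type u) [CommRing R] [IsLocalRing R]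
    (M : Type u) [AddCommGroup M] [Module R M] : Prop :=
  ∃ (R' Q : Type u) (_ : CommRing R') (_ : CommRing Q) (f : R →+* R') (g : Q →+* R'),
    IsQuasiDeformation R R' Q f g ∧ IsWeaklyRegularHom R R' f ∧
    (letI := f.toAlgebra;
     letI := g.toAlgebra;
     letI : Module Q (R' ⊗[R] M) := Module.compHom _ g;
     FlatDimFinite Q (R' ⊗[R] M) ∧ ProjDimFinite Q R')

/-- `cidim-fd_R M < ∞` (resp. `cidim_R M < ∞`): as in `HasFiniteCIDim` but over
complete intersection quasi-deformations, i.e. `R → R'` is c.i. at the maximal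
ideal of `R'`. -/
def HasFiniteCIQDDim (R : Type u) [CommRing R] [IsLocalRing R]
    (M : Type u) [AddCommGroup M] [Module R M] : Prop :=
  ∃ (R' Q : Type u) (_ : CommRing R') (_ : CommRing Q) (hR' : IsLocalRing R')
    (f : R →+* R') (g : Q →+* R'),
    IsQuasiDeformation R R' Q f g ∧
    IsCIAt R R' f (@IsLocalRing.maximalIdeal R' _ hR') ∧
    (letI := f.toAlgebra;
     letI := g.toAlgebra;
     letI : Module Q (R' ⊗[R] M) := Module.compHom _ g;
     FlatDimFinite Q (R' ⊗[R] M) ∧ ProjDimFinite Q R')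

/-! ### André–Quillen homology

`D_n(S|R, M)` is defined as the `n`-th homology of `L ⊗_S M`, where `L` is the
cotangent complex of the `R`-algebra `S`: the complex associated to the standard
simplicial resolution `X` of `S` by polynomial `R`-algebras (the comonad
resolution `X_n = G^{n+1} S`, `G A = R[A]`), with `L_n = S ⊗_{X_n} Ω_{X_n/R}`
the free `S`-module on the variables of `X_n` and differentials the alternating
sums of the maps induced by the face maps. -/

/-- `AQV R S n` is, for `n ≥ 1`, the `n`-th ring in the standard simplicial
polynomial resolution of `S` over `R` (and `AQV R S 0 = S` as an index set). -/
def AQV (R S : Type u) [CommRing R] : ℕ → Type u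
  | 0 => S
  | n+1 => MvPolynomial (AQV R S n) R

noncomputable instance (R S : Type u) [CommRing R] (n : ℕ) : CommRing (AQV R S (n+1)) :=
  inferInstanceAs (CommRing (MvPolynomial (AQV R S n) R))

noncomputable instance (R S : Type u) [CommRing R] (n : ℕ) : Algebra R (AQV R S (n+1)) :=
  inferInstanceAs (Algebra R (MvPolynomial (AQV R S n) R))

/-- The augmentations `X_n → S` of the standard resolution. -/
def AQaug (R S : Type u) [CommRing R] [CommRing S] [Algebra R S] :
    (n : ℕ) → (AQV R S (n+1) →ₐ[R] S)
  | 0 => MvPolynomial.aeval (id : S → S)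
  | n+1 => MvPolynomial.aeval (fun v : AQV R S (n+1) => AQaug R S n v)

/-- The face maps `dᵢ : X_{n+1} → X_n` of the standard resolution: `d₀` is the
counit and `d_{i+1} = G(dᵢ)`. -/
def AQface (R S : Type u) [CommRing R] [CommRing S] [Algebra R S] :
    (n : ℕ) → (i : ℕ) → (AQV R S (n+2) →ₐ[R] AQV R S (n+1))
  | n, 0 => MvPolynomial.aeval (id : AQV R S (n+1) → AQV R S (n+1))
  | 0, _+1 => MvPolynomial.rename ⇑(AQaug R S 0)
  | n+1, i+1 => MvPolynomial.rename ⇑(AQface R S n i)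

variable (R S : Type u) [CommRing R] [CommRing S] [Algebra R S]
variable (M : Type u) [AddCommGroup M] [Module S M]

/-- The map `L_{n+1} ⊗ M → L_n ⊗ M` induced by an `R`-algebra map
`f : X_{n+1} → X_n` on the (base-changed) Kähler differentials: the free module
on the variables `v` of `X_{n+1}` maps by `e_v ↦ ∑_w aug(∂(f Xᵥ)/∂w) • e_w`. -/
def AQind (n : ℕ) (f : AQV R S (n+2) →ₐ[R] AQV R S (n+1)) :
    (AQV R S (n+1) →₀ M) →ₗ[S] (AQV R S n →₀ M) :=
  Finsupp.lsum S fun v : AQV R S (n+1) =>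
    letI : DecidableEq (AQV R S n) := Classical.decEq _
    let P : MvPolynomial (AQV R S n) R := f (MvPolynomial.X v)
    ∑ w ∈ P.vars,
      (Finsupp.lsingle w).comp
        ((AQaug R S n ((MvPolynomial.pderiv w) P) : S) • (LinearMap.id : M →ₗ[S] M))

/-- The differential `L_{n+1} ⊗ M → L_n ⊗ M` of the cotangent complex:
the alternating sum of the maps induced by the face maps. -/
def AQdiff (n : ℕ) : (AQV R S (n+1) →₀ M) →ₗ[S] (AQV R S n →₀ M) :=
  ∑ i ∈ Finset.range (n+2), ((-1 : ℤ)^i) • AQind R S M n (AQface R S n i)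

/-- Cycles of the cotangent complex with coefficients in `M`. -/
def AQcycles : (n : ℕ) → Submodule S (AQV R S n →₀ M)
  | 0 => ⊤
  | n+1 => LinearMap.ker (AQdiff R S M n)

/-- André–Quillen homology `D_n(S|R, M)`. -/
def AQH (n : ℕ) : Type u :=
  AQcycles R S M n ⧸
    (LinearMap.range (AQdiff R S M n)).comap (AQcycles R S M n).subtype

noncomputable instance (n : ℕ) : AddCommGroup (AQH R S M n) :=
  inferInstanceAs (AddCommGroup (AQcycles R S M n ⧸
    (LinearMap.range (AQdiff R S M n)).comap (AQcycles R S M n).subtype))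

/-- `AQdimLE R S d`: the André–Quillen dimension of the `R`-algebra `S` is at
most `d`, i.e. `D_n(S|R, -) = 0` for all `n > d`. -/
def AQdimLE (d : ℕ) : Prop :=
  ∀ n : ℕ, d < n → ∀ (N : Type u) (iN : AddCommGroup N) (mN : Module S N),
    Subsingleton (@AQH R S _ _ _ N iN mN n)

/-- `AQ-dim_R S < ∞`. -/
def AQdimFinite : Prop := ∃ d : ℕ, AQdimLE R S d

/-! ### Koszul homology `H₁` -/

/-- First differential of the Koszul complex on `x : Fin c → A`. -/
def koszulD1 (A : Type u) [CommRing A] {c : ℕ} (x : Fin c → A) : (Fin c → A) →ₗ[A] A :=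
  ∑ i, x i • (LinearMap.proj i : ((Fin c → A)) →ₗ[A] A)

/-- One-cycles of the Koszul complex on `x`. -/
def koszulZ1 (A : Type u) [CommRing A] {c : ℕ} (x : Fin c → A) : Submodule A (Fin c → A) :=
  LinearMap.ker (koszulD1 A x)

/-- One-boundaries of the Koszul complex on `x` (the image of the second Koszul
differential, spanned by the elements `xᵢ eⱼ - xⱼ eᵢ`). -/
def koszulB1 (A : Type u) [CommRing A] {c : ℕ} (x : Fin c → A) : Submodule A (Fin c → A) :=
  Submodule.span A
    {v : Fin c → A | ∃ i j, v =
      x i • (Pi.single j (1 : A) : Fin c → A) - x j • (Pi.single i (1 : A) : Fin c → A)}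

/-- First Koszul homology of the sequence `x : Fin c → A`. -/
def KoszulH1 (A : Type u) [CommRing A] {c : ℕ} (x : Fin c → A) : Type u :=
  koszulZ1 A x ⧸ (koszulB1 A x).comap (koszulZ1 A x).subtype

noncomputable instance (A : Type u) [CommRing A] {c : ℕ} (x : Fin c → A) :
    AddCommGroup (KoszulH1 A x) :=
  inferInstanceAs (AddCommGroup (koszulZ1 A x ⧸ (koszulB1 A x).comap (koszulZ1 A x).subtype))

noncomputable instance (A : Type u) [CommRing A] {c : ℕ} (x : Fin c → A) :
    Module A (KoszulH1 A x) :=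
  inferInstanceAs (Module A (koszulZ1 A x ⧸ (koszulB1 A x).comap (koszulZ1 A x).subtype))

/-- `H₁(K(σ))` is a free `T̂`-module:  for any Cohen factorization
`S → S'' → T̂` of the semi-completion of `σ` and any finite generating set `x` of
`ker (S'' → T̂)`, the first Koszul homology of `x`, base-changed to `T̂`
(it is killed by `ker (S'' → T̂)`), is a free `T̂`-module. -/
def KoszulH1FreeHom (S T : Type u) [CommRing S] [CommRing T] [IsLocalRing S] [IsLocalRing T]
    (σ : S →+* T) : Prop :=
  ∀ (S'' : Type u) (_ : CommRing S'') (f : S →+* S'')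
    (g : S'' →+* AdicCompletion (maximalIdeal T) T),
    IsCohenFactorizationAt S T σ (maximalIdeal T) S'' f g →
    ∀ (c : ℕ) (x : Fin c → S''), Ideal.span (Set.range x) = RingHom.ker g →
      (letI := g.toAlgebra;
       Module.Free (AdicCompletion (maximalIdeal T) T)
         ((AdicCompletion (maximalIdeal T) T) ⊗[S''] (KoszulH1 S'' x)))

/-! ### Separability (MacLane) -/

/-- A field extension `ℓ/k` is separable (in the sense of MacLane, allowing
non-algebraic extensions) iff `K ⊗_k ℓ` is reduced for every field extension `K/k`. -/
def IsSeparableFieldExtension (k ℓ : Type u) [Field k] [Field ℓ] [Algebra k ℓ] : Prop :=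
  ∀ (K : Type u) (_ : Field K) (_ : Algebra k K), IsReduced (K ⊗[k] ℓ)

end


set_option linter.all false

section P1
open CategoryTheory

lemma dual_shortExact {Q : Type u} [CommRing Q] {K F N : Type u} [AddCommGroup K] [Module Q K]
    [AddCommGroup F] [Module Q F] [AddCommGroup N] [Module Q N] (i : K →ₗ[Q] F) (f : F →ₗ[Q] N)
    (hi : Function.Injective i) (hf : Function.Surjective f) (hex : Function.Exact i f) :
    (ModuleCat.shortComplexOfCompEqZero (CharacterModule.dual f) (CharacterModule.dual i)
      (by rw [← CharacterModule.dual_comp, hex.linearMap_comp_eq_zero,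
        CharacterModule.dual_zero])).ShortExact := by
  apply ModuleCat.shortComplex_shortExact
  · intro c
    constructor
    · intro hc
      have hc' : ∀ x, c (i x) = 0 := fun x => DFunLike.congr_fun hc x
      -- descend
      let c' : F →+ AddCircle (1:ℚ) := c
      have hker : (f.toAddMonoidHom).ker ≤ c'.ker := by
        intro x hx
        obtain ⟨y, rfl⟩ := (hex x).1 hx
        exact hc' y
      refine ⟨AddMonoidHom.liftOfSurjective f.toAddMonoidHom hf ⟨c', hker⟩, ?_⟩
      ext x
      exact DFunLike.congr_fun (AddMonoidHom.liftOfRightInverse_comp f.toAddMonoidHom _ _ ⟨c', hker⟩) x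
    · rintro ⟨d, rfl⟩
      ext x
      show d (f (i x)) = 0
      rw [hex.apply_apply_eq_zero]; exact map_zero d
  · exact CharacterModule.dual_injective_of_surjective f hf
  · exact CharacterModule.dual_surjective_of_injective i hi

lemma flatDimLE_iff {Q : Type u} [CommRing Q] (n : ℕ) (N : Type u) [AddCommGroup N] [Module Q N] :
    FlatDimLE Q n N ↔ HasInjectiveDimensionLT (ModuleCat.of Q (CharacterModule N)) (n+1) := by
  induction n generalizing N with
  | zero =>
    show Module.Flat Q N ↔ _
    rw [Module.Flat.iff_characterModule_injective, zero_add, ← injective_iff_hasInjectiveDimensionLT_one,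
      Module.injective_iff_injective_object]
  | succ n ih =>
    have key : ∀ (F : Type u) [AddCommGroup F] [Module Q F] (f : F →ₗ[Q] N), Module.Flat Q F →
        Function.Surjective f → (FlatDimLE Q n (LinearMap.ker f) ↔
          HasInjectiveDimensionLT (ModuleCat.of Q (CharacterModule N)) (n+1+1)) := by
      intro F _ _ f hF hf
      rw [ih]
      have hs := dual_shortExact (LinearMap.ker f).subtype f (Submodule.subtype_injective _) hf
        (LinearMap.exact_subtype_ker_map f)
      refine hs.hasInjectiveDimensionLT_X₃_iff n ?_
      exact (Module.injective_iff_injective_object Q _).1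
        ((Module.Flat.iff_characterModule_injective).1 hF)
    constructor
    · rintro ⟨F, _, _, f, hF, hf, h⟩
      exact (key F f hF hf).1 h
    · intro h
      refine ⟨N →₀ Q, inferInstance, inferInstance, Finsupp.linearCombination Q id, inferInstance,
        Finsupp.linearCombination_id_surjective Q N, (key _ _ inferInstance
        (Finsupp.linearCombination_id_surjective Q N)).2 h⟩

lemma FlatDimLE.congr {Q : Type u} [CommRing Q] {n : ℕ} {N N' : Type u} [AddCommGroup N] [Module Q N]
    [AddCommGroup N'] [Module Q N'] (e : N ≃ₗ[Q] N') (h : FlatDimLE Q n N) : FlatDimLE Q n N' := by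
  rw [flatDimLE_iff] at h ⊢
  exact (ModuleCat.hasInjectiveDimensionLE_iff_of_linearEquiv (CharacterModule.congr e) n).1 h

lemma FlatDimLE.mono {Q : Type u} [CommRing Q] {n m : ℕ} (hnm : n ≤ m) {N : Type u} [AddCommGroup N] [Module Q N]
    (h : FlatDimLE Q n N) : FlatDimLE Q m N := by
  rw [flatDimLE_iff] at h ⊢
  exact hasInjectiveDimensionLT_of_ge _ (n+1) (m+1) (by omega)

lemma FlatDimLE.ses {Q : Type u} [CommRing Q] {n : ℕ} {K F N : Type u} [AddCommGroup K] [Module Q K]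
    [AddCommGroup F] [Module Q F] [AddCommGroup N] [Module Q N] (i : K →ₗ[Q] F) (f : F →ₗ[Q] N)
    (hi : Function.Injective i) (hf : Function.Surjective f) (hex : Function.Exact i f)
    (hK : FlatDimLE Q n K) (hF : FlatDimLE Q n F) : FlatDimLE Q (n+1) N := by
  have hF' := hF.mono (Nat.le_succ n)
  rw [flatDimLE_iff] at *
  exact (dual_shortExact i f hi hf hex).hasInjectiveDimensionLT_X₁ (n+1) hK hF'

/-- transfer along a ring isomorphism -/
lemma FlatDimLE.semi {Q Q' : Type u} [CommRing Q] [CommRing Q'] {n : ℕ} {N : Type u} [AddCommGroup N]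
    [Module Q N] [Module Q' N] (e : Q ≃+* Q') (he : ∀ (q : Q) (x : N), e q • x = q • x)
    (h : FlatDimLE Q n N) : FlatDimLE Q' n N := by
  rw [flatDimLE_iff] at h ⊢
  let _ := RingHomInvPair.of_ringEquiv e
  let _ := RingHomInvPair.symm (e : Q →+* Q') (e.symm : Q' →+* Q)
  let E : CharacterModule N ≃ₛₗ[RingHomClass.toRingHom e] CharacterModule N :=
    { AddEquiv.refl _ with
      map_smul' := by
        intro q c
        ext x
        show c (q • x) = c (e q • x)
        rw [he] }
  exact (ModuleCat.hasInjectiveDimensionLE_iff_of_semiLinearEquiv e E n).1 h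

lemma FlatDimLE.baseChange {Q Q' : Type u} [CommRing Q] [CommRing Q'] [Algebra Q Q'] [Module.Flat Q Q']
    {n : ℕ} {N : Type u} [AddCommGroup N] [Module Q N]
    (h : FlatDimLE Q n N) : FlatDimLE Q' n (Q' ⊗[Q] N) := by
  induction n generalizing N with
  | zero =>
    have : Module.Flat Q N := h
    show Module.Flat Q' (Q' ⊗[Q] N)
    infer_instance
  | succ n ih =>
    obtain ⟨F, _, _, f, hF, hf, h⟩ := h
    refine ⟨Q' ⊗[Q] F, inferInstance, inferInstance, f.baseChange Q', inferInstance,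
      LinearMap.lTensor_surjective Q' hf, ?_⟩
    have h1 := ih h
    let g : Q' ⊗[Q] LinearMap.ker f →ₗ[Q'] Q' ⊗[Q] F := (LinearMap.ker f).subtype.baseChange Q'
    have hg : Function.Injective g := Module.Flat.lTensor_preserves_injective_linearMap _ (Submodule.subtype_injective _)
    have hex : Function.Exact g (f.baseChange Q') :=
      lTensor_exact Q' (LinearMap.exact_subtype_ker_map f) hf
    have : LinearMap.ker (f.baseChange Q') = LinearMap.range g := hex.linearMap_ker_eq
    rw [this]
    exact h1.congr (LinearEquiv.ofInjective g hg)

lemma FlatDimLE.isBaseChange {Q Q' : Type u} [CommRing Q] [CommRing Q'] [Algebra Q Q'] [Module.Flat Q Q']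
    {n : ℕ} {N N' : Type u} [AddCommGroup N] [Module Q N] [AddCommGroup N'] [Module Q N'] [Module Q' N']
    [IsScalarTower Q Q' N'] (f : N →ₗ[Q] N') (hf : IsBaseChange Q' f)
    (h : FlatDimLE Q n N) : FlatDimLE Q' n N' :=
  h.baseChange.congr hf.equiv

lemma projDimLE_iff {Q : Type u} [CommRing Q] (n : ℕ) (N : Type u) [AddCommGroup N] [Module Q N] :
    ProjDimLE Q n N ↔ HasProjectiveDimensionLT (ModuleCat.of Q N) (n+1) := by
  induction n generalizing N with
  | zero =>
    show Module.Projective Q N ↔ _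
    rw [zero_add, ← projective_iff_hasProjectiveDimensionLT_one, IsProjective.iff_projective]
  | succ n ih =>
    have key : ∀ (F : Type u) [AddCommGroup F] [Module Q F] (f : F →ₗ[Q] N), Module.Projective Q F →
        Function.Surjective f → (ProjDimLE Q n (LinearMap.ker f) ↔
          HasProjectiveDimensionLT (ModuleCat.of Q N) (n+1+1)) := by
      intro F _ _ f hF hf
      rw [ih]
      have hs := LinearMap.shortExact_shortComplexKer hf
      refine (hs.hasProjectiveDimensionLT_X₃_iff n ?_).symm
      exact (IsProjective.iff_projective F).1 hF
    constructor
    · rintro ⟨F, _, _, f, hF, hf, h⟩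
      exact (key F f hF hf).1 h
    · intro h
      refine ⟨N →₀ Q, inferInstance, inferInstance, Finsupp.linearCombination Q id, inferInstance,
        Finsupp.linearCombination_id_surjective Q N, (key _ _ inferInstance
        (Finsupp.linearCombination_id_surjective Q N)).2 h⟩

lemma projDimFinite_of_regular {Q : Type u} [CommRing Q] [IsLocalRing Q] [IsNoetherianRing Q]
    {R : Type u} [CommRing R] [Algebra Q R] (hs : Function.Surjective (algebraMap Q R))
    (hg : GeneratedByRegularSequence Q (RingHom.ker (algebraMap Q R))) : ProjDimFinite Q R := by
  obtain ⟨rs, hrs, hI⟩ := hg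
  refine ⟨rs.length, ?_⟩
  rw [projDimLE_iff]
  have h := ModuleCat.projectiveDimension_quotient_eq_length.{u} rs hrs
  have h1 := (projectiveDimension_le_iff _ _).1 h.le
  have e : Shrink.{u} (Q ⧸ Ideal.ofList rs) ≃ₗ[Q] R :=
    (Shrink.linearEquiv Q (Q ⧸ Ideal.ofList rs)).trans <|
    (Submodule.quotEquivOfEq _ _ (hI.trans (by rfl))).trans
      ((Algebra.linearMap Q R).quotKerEquivOfSurjective hs)
  exact hasProjectiveDimensionLT_of_iso e.toModuleIso _

end P1


section P2
open Polynomial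
lemma FlatDimLE.polynomial {C : Type u} [CommRing C] {a : ℕ} {N : Type u} [AddCommGroup N] [Module C N]
    [Module C[X] N] [IsScalarTower C C[X] N] (h : FlatDimLE C a N) : FlatDimLE C[X] (a+1) N := by
  let x : N →ₗ[C] N := 
    { toFun := fun n => (X : C[X]) • n
      map_add' := smul_add _
      map_smul' := fun c n => by simp only [RingHom.id_apply]; rw [← algebraMap_smul C[X] c, ← algebraMap_smul C[X] c, smul_comm] }
  let d : C[X] ⊗[C] N →ₗ[C[X]] C[X] ⊗[C] N := LinearMap.lsmul C[X] _ X - x.baseChange C[X]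
  let ev : C[X] ⊗[C] N →ₗ[C[X]] N := (LinearMap.id : N →ₗ[C] N).liftBaseChange C[X]
  have ev_tmul : ∀ p n, ev (p ⊗ₜ n) = p • n := fun p n => by simp [ev]
  have d_tmul : ∀ p n, d (p ⊗ₜ n) = (X * p) ⊗ₜ n - p ⊗ₜ ((X : C[X]) • n) := fun p n => by 
    simp [d, x, TensorProduct.smul_tmul']
  let e := TensorProduct.equivFinsuppOfBasisLeft (N := N) (Polynomial.basisMonomials C)
  have e_tmul : ∀ p n k, e (p ⊗ₜ n) k = p.coeff k • n := fun p n k => by 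
    simp [e, TensorProduct.equivFinsuppOfBasisLeft_apply_tmul_apply]; rfl
  have e0 : ∀ z, e (d z) 0 = - ((X : C[X]) • e z 0) := by
    intro z
    induction z with
    | zero => simp
    | add x y hx hy => simp only [map_add, Finsupp.add_apply, hx, hy, smul_add]; abel
    | tmul p n => 
      simp only [d_tmul, map_sub, Finsupp.sub_apply, e_tmul, Polynomial.coeff_X_mul_zero, zero_smul, zero_sub]
      rw [← algebraMap_smul C[X] (p.coeff 0), ← algebraMap_smul C[X] (p.coeff 0), smul_comm]
  have e1 : ∀ z k, e (d z) (k+1) = e z k - ((X : C[X]) • e z (k+1)) := by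
    intro z k
    induction z with
    | zero => simp
    | add x y hx hy => simp only [map_add, Finsupp.add_apply, hx, hy, smul_add]; abel
    | tmul p n => 
      simp only [d_tmul, map_sub, Finsupp.sub_apply, e_tmul, Polynomial.coeff_X_mul]
      rw [← algebraMap_smul C[X] (p.coeff (k+1)), ← algebraMap_smul C[X] (p.coeff (k+1)), smul_comm]
  refine FlatDimLE.ses d ev ?_ ?_ ?_ h.baseChange h.baseChange
  · rw [injective_iff_map_eq_zero]
    intro z hz
    have h2 : ∀ k, e z k = (X : C[X]) • e z (k+1) := by
      intro k
      have := e1 z k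
      rw [hz, map_zero, Finsupp.zero_apply] at this
      exact (sub_eq_zero.1 this.symm)
    have h3 : ∀ j k, e z k = (X : C[X])^j • e z (k+j) := by
      intro j
      induction j with
      | zero => simp
      | succ j ih => 
        intro k
        rw [ih k, h2, smul_smul, ← pow_succ]; rfl
    have h4 : e z = 0 := by
      ext k
      obtain ⟨B, hB⟩ := (e z).support.exists_nat_subset_range
      rw [h3 B k]
      have : k + B ∉ (e z).support := fun hh => by
        have := Finset.mem_range.1 (hB hh); omega
      rw [Finsupp.notMem_support_iff.1 this]; simp
    exact e.map_eq_zero_iff.1 h4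
  · intro n; exact ⟨1 ⊗ₜ n, by simp [ev_tmul]⟩
  · intro z
    have key : ∀ k n, (X^k : C[X]) ⊗ₜ[C] n - 1 ⊗ₜ ((X^k : C[X]) • n) ∈ LinearMap.range d := by
      intro k
      induction k with
      | zero => intro n; simp
      | succ k ih => 
        intro n
        have h1 := ih ((X : C[X]) • n)
        have h2 : d ((X^k : C[X]) ⊗ₜ n) ∈ LinearMap.range d := ⟨_, rfl⟩
        have := add_mem h1 h2
        rw [d_tmul, smul_smul] at this
        convert this using 1
        rw [← pow_succ, ← pow_succ']
        abel
    have key2 : ∀ z, z - 1 ⊗ₜ ev z ∈ LinearMap.range d := by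
      intro z
      induction z with
      | zero => simp
      | add x y hx hy => 
        have := add_mem hx hy
        rw [map_add, tmul_add]
        convert this using 1; abel
      | tmul p n =>
        induction p using Polynomial.induction_on' with
        | add p q hp hq => 
          have := add_mem hp hq
          rw [add_tmul, map_add, tmul_add]
          convert this using 1; abel
        | monomial k c => 
          have := key k (c • n)
          rw [ev_tmul, ← Polynomial.C_mul_X_pow_eq_monomial]
          convert this using 2
          · rw [← Polynomial.smul_eq_C_mul, TensorProduct.smul_tmul]
          · rw [← algebraMap_smul C[X] c, smul_smul, mul_comm]; rfl
    constructor
    · intro hz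
      have := key2 z
      rw [hz] at this; simpa using this
    · rintro ⟨w, rfl⟩
      induction w with
      | zero => simp
      | add x y hx hy => simp [hx, hy]
      | tmul p n => rw [d_tmul, map_sub, ev_tmul, ev_tmul, smul_smul, mul_comm, sub_self]

lemma FlatDimLE.mvPolynomial {C : Type u} [CommRing C] {a : ℕ} (n : ℕ) {N : Type u} [AddCommGroup N] [Module C N]
    [i1 : Module (MvPolynomial (Fin n) C) N] [i2 : IsScalarTower C (MvPolynomial (Fin n) C) N] (h : FlatDimLE C a N) :
    FlatDimLE (MvPolynomial (Fin n) C) (a+n) N := by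
  revert i1 i2
  induction n with
  | zero => 
    intro i1 i2
    refine FlatDimLE.semi (MvPolynomial.isEmptyRingEquiv C (Fin 0)).symm ?_ h
    intro q x
    rw [MvPolynomial.isEmptyRingEquiv_symm_apply]
    exact algebraMap_smul (MvPolynomial (Fin 0) C) q x
  | succ n ih => 
    intro i1 i2
    let ε := (MvPolynomial.finSuccEquiv C n).toRingEquiv
    let _ : Module (MvPolynomial (Fin n) C)[X] N := Module.compHom N (ε.symm : _ →+* MvPolynomial (Fin (n+1)) C)
    let _ : Module (MvPolynomial (Fin n) C) N := Module.compHom N (Polynomial.C : MvPolynomial (Fin n) C →+* _)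
    have : IsScalarTower (MvPolynomial (Fin n) C) (MvPolynomial (Fin n) C)[X] N := 
      IsScalarTower.of_algebraMap_smul fun _ _ => rfl
    have : IsScalarTower C (MvPolynomial (Fin n) C) N := 
      IsScalarTower.of_algebraMap_smul fun c x => by
        show (ε.symm (algebraMap C _ c)) • x = c • x
        rw [← algebraMap_smul (MvPolynomial (Fin (n+1)) C) c x]
        congr 1
        exact (MvPolynomial.finSuccEquiv C n).symm.commutes c
    refine FlatDimLE.semi (Q := (MvPolynomial (Fin n) C)[X]) ε.symm (fun q x => rfl) ?_
    exact ih.polynomial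
end P2


section P3
open RingTheory.Sequence

lemma ofList_perm {A : Type*} [CommRing A] {l l' : List A} (h : l.Perm l') :
    Ideal.ofList l = Ideal.ofList l' := by
  unfold Ideal.ofList
  congr 1; ext x; exact h.mem_iff

lemma smulReg_quot_iff {A : Type*} [CommRing A] (I : Ideal A) (r : A) :
    IsSMulRegular (A ⧸ (I • ⊤ : Submodule A A)) r ↔ ∀ a, r * a ∈ I → a ∈ I := by
  rw [isSMulRegular_quotient_iff_mem_of_smul_mem]
  simp [Ideal.smul_top_eq_map]

lemma wr_append_single {A : Type*} [CommRing A] (l : List A) (r : A) :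
    IsWeaklyRegular A (l ++ [r]) ↔ IsWeaklyRegular A l ∧ 
      ∀ a, r * a ∈ Ideal.ofList l → a ∈ Ideal.ofList l := by
  rw [isWeaklyRegular_append_iff, isWeaklyRegular_singleton_iff, smulReg_quot_iff]

lemma isRegular_ring_iff {A : Type*} [CommRing A] (l : List A) :
    IsRegular A l ↔ IsWeaklyRegular A l ∧ Ideal.ofList l ≠ ⊤ := by
  rw [isRegular_iff, ne_comm]
  simp [Ideal.smul_top_eq_map]

lemma ofList_replace_last {A : Type*} [CommRing A] (l : List A) (r g u : A) (hu : IsUnit u)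
    (hg : g - u * r ∈ Ideal.ofList l) : Ideal.ofList (l ++ [g]) = Ideal.ofList (l ++ [r]) := by
  simp only [Ideal.ofList_append, Ideal.ofList_singleton]
  apply le_antisymm
  · refine sup_le le_sup_left ?_
    rw [Ideal.span_singleton_le_iff_mem]
    have : g = (g - u * r) + u * r := by ring
    rw [this]
    exact add_mem (Ideal.mem_sup_left hg) (Ideal.mem_sup_right (Ideal.mul_mem_left _ _ (Ideal.mem_span_singleton_self r)))
  · refine sup_le le_sup_left ?_
    rw [Ideal.span_singleton_le_iff_mem]
    obtain ⟨v, hv⟩ := hu.exists_left_inv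
    have : r = (-v) * (g - u * r) + v * g := by linear_combination -r * hv
    rw [this]
    exact add_mem (Ideal.mem_sup_left (Ideal.mul_mem_left _ _ hg)) (Ideal.mem_sup_right (Ideal.mul_mem_left _ _ (Ideal.mem_span_singleton_self _)))

lemma wr_replace_last {A : Type*} [CommRing A] (l : List A) (r g u : A) (hu : IsUnit u)
    (hg : g - u * r ∈ Ideal.ofList l) (h : IsWeaklyRegular A (l ++ [r])) : IsWeaklyRegular A (l ++ [g]) := by
  rw [wr_append_single] at h ⊢
  refine ⟨h.1, fun a ha => h.2 a ?_⟩
  have h1 : u * (r * a) ∈ Ideal.ofList l := by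
    have : u * (r * a) = g * a - a * (g - u * r) := by ring
    rw [this]; exact sub_mem ha (Ideal.mul_mem_left _ _ hg)
  exact (Ideal.unit_mul_mem_iff_mem _ hu).1 h1

variable {V : Type*} [CommRing V] [IsLocalRing V]

lemma exists_unit_coeff (rs : List V) (g : V) (hg : g ∈ Ideal.ofList rs) :
    g ∈ maximalIdeal V * Ideal.ofList rs ∨ ∃ a r b u, rs = a ++ r :: b ∧ IsUnit u ∧ 
      g - u * r ∈ Ideal.ofList (a ++ b) := by
  induction rs generalizing g with
  | nil => left; simpa using hg
  | cons r rs ih =>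
    rw [Ideal.ofList_cons, Ideal.mem_span_singleton_sup] at hg
    obtain ⟨c, y, hy, rfl⟩ := hg
    by_cases hc : IsUnit c
    · right; exact ⟨[], r, rs, c, rfl, hc, by simpa using hy⟩
    · rcases ih y hy with h | ⟨a, r', b, u, rfl, hu, h⟩
      · left
        refine add_mem (Ideal.mul_mem_mul hc (Ideal.subset_span (by simp))) ?_
        exact Ideal.mul_mono_right (Ideal.span_mono (by intro x hx; simp at hx ⊢; tauto)) h
      · right
        refine ⟨r :: a, r', b, u, rfl, hu, ?_⟩
        have : c * r + y - u * r' = c * r + (y - u * r') := by ring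
        rw [this, List.cons_append, Ideal.ofList_cons, Ideal.mem_span_singleton_sup]
        exact ⟨c, _, h, rfl⟩

lemma exchange [IsNoetherianRing V] (pre rs : List V) (h : IsRegular V (pre ++ rs)) (g : V)
    (hg : g ∈ Ideal.ofList (pre ++ rs)) (hg' : g ∉ Ideal.ofList pre ⊔ maximalIdeal V * Ideal.ofList (pre ++ rs)) :
    ∃ rs', IsRegular V (pre ++ g :: rs') ∧ Ideal.ofList (pre ++ g :: rs') = Ideal.ofList (pre ++ rs) ∧ 
      rs'.length < rs.length := by
  rw [Ideal.ofList_append, Submodule.mem_sup] at hg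
  obtain ⟨p, hp, y, hy, rfl⟩ := hg
  rcases exists_unit_coeff rs y hy with h1 | ⟨a, r, b, u, rfl, hu, h1⟩
  · refine absurd (add_mem (Ideal.mem_sup_left hp) (Ideal.mem_sup_right (Ideal.mul_mono_right ?_ h1))) hg'
    rw [Ideal.ofList_append]; exact le_sup_right
  · have hperm : (pre ++ (a ++ r :: b)).Perm ((pre ++ (a ++ b)) ++ [r]) := by
      rw [List.append_assoc]
      refine List.Perm.append_left pre ?_
      refine List.perm_middle.trans ?_
      exact (List.perm_append_comm (l₁ := [r]))
    have hperm2 : (pre ++ (p+y) :: (a ++ b)).Perm ((pre ++ (a ++ b)) ++ [p+y]) := by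
      rw [List.append_assoc]
      exact List.Perm.append_left pre (List.perm_append_comm (l₁ := [p+y]))
    have h2 := IsLocalRing.isRegular_of_perm h hperm
    have h3 : (p + y) - u * r ∈ Ideal.ofList (pre ++ (a ++ b)) := by
      rw [Ideal.ofList_append pre, add_sub_assoc]
      exact add_mem (Ideal.mem_sup_left hp) (Ideal.mem_sup_right h1)
    have h4 := ofList_replace_last _ r _ u hu h3
    have h5 : IsRegular V ((pre ++ (a ++ b)) ++ [p + y]) := by
      rw [isRegular_ring_iff] at h2 ⊢
      exact ⟨wr_replace_last _ r _ u hu h3 h2.1, h4 ▸ h2.2⟩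
    refine ⟨a ++ b, IsLocalRing.isRegular_of_perm h5 hperm2.symm, ?_, by simp⟩
    rw [ofList_perm hperm2, ofList_perm hperm, h4]

lemma exchange_span [IsNoetherianRing V] (G : Set V) (n : ℕ) : ∀ (pre rs : List V), rs.length ≤ n → 
    IsRegular V (pre ++ rs) → Ideal.ofList (pre ++ rs) = Ideal.ofList pre ⊔ Ideal.span G →
    ∃ gs, (∀ g ∈ gs, g ∈ G) ∧ IsRegular V (pre ++ gs) ∧ Ideal.ofList (pre ++ gs) = Ideal.ofList (pre ++ rs) := by
  induction n with
  | zero => 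
    intro pre rs hn h1 h2
    obtain rfl : rs = [] := List.length_eq_zero_iff.1 (by omega)
    exact ⟨[], by simp, h1, rfl⟩
  | succ n ih =>
    intro pre rs hn h1 h2
    rcases rs with _ | ⟨r, rs⟩
    · exact ⟨[], by simp, h1, rfl⟩
    · have hex : ∃ g ∈ G, g ∉ Ideal.ofList pre ⊔ maximalIdeal V * Ideal.ofList (pre ++ r :: rs) := by
        by_contra! hcon
        have hle : Ideal.ofList (pre ++ r :: rs) ≤ Ideal.ofList pre := by
          refine Submodule.le_of_le_smul_of_le_jacobson_bot (I := maximalIdeal V) (IsNoetherian.noetherian _) 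
            (IsLocalRing.maximalIdeal_le_jacobson _) ?_
          conv_lhs => rw [h2]
          exact sup_le le_sup_left (Ideal.span_le.2 hcon)
        have hr : r ∈ Ideal.ofList pre := hle (Ideal.subset_span (by simp))
        rw [isRegular_ring_iff] at h1
        have h3 : IsWeaklyRegular V (pre ++ [r]) := by
          have := h1.1
          rw [show pre ++ r :: rs = (pre ++ [r]) ++ rs by simp, isWeaklyRegular_append_iff] at this
          exact this.1
        have h4 := (wr_append_single _ _).1 h3
        have h5 := h4.2 1 (by simpa using hr)
        apply h1.2
        rw [Ideal.eq_top_iff_one]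
        rw [Ideal.ofList_append]
        exact Ideal.mem_sup_left h5
      obtain ⟨g, hgG, hg⟩ := hex
      obtain ⟨rs', h3, h4, h5⟩ := exchange pre (r :: rs) h1 g (by rw [h2]; exact Ideal.mem_sup_right (Ideal.subset_span hgG)) hg
      have e : ∀ t, pre ++ g :: t = (pre ++ [g]) ++ t := fun t => by simp
      rw [e] at h3 h4
      obtain ⟨gs, h6, h7, h8⟩ := ih (pre ++ [g]) rs' (by omega) h3 (by 
        rw [h4, h2]
        rw [Ideal.ofList_append]
        apply le_antisymm
        · exact sup_le (le_sup_of_le_left le_sup_left) le_sup_right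
        · refine sup_le (sup_le le_sup_left ?_) le_sup_right
          rw [Ideal.ofList_singleton, Ideal.span_singleton_le_iff_mem]
          exact Ideal.mem_sup_right (Ideal.subset_span hgG))
      rw [← e] at h7 h8
      refine ⟨g :: gs, by simpa using ⟨hgG, h6⟩, h7, h8.trans h4⟩

lemma exchange_chain [IsNoetherianRing V] (l : List V) : ∀ (pre rs : List V), IsRegular V (pre ++ rs) →
    (∀ a x b, l = a ++ x :: b → x ∈ Ideal.ofList (pre ++ rs) ∧ 
      x ∉ Ideal.ofList (pre ++ a) ⊔ maximalIdeal V * Ideal.ofList (pre ++ rs)) → 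
    ∃ rs', IsRegular V (pre ++ l ++ rs') ∧ Ideal.ofList (pre ++ l ++ rs') = Ideal.ofList (pre ++ rs) := by
  induction l with
  | nil => intro pre rs h _; exact ⟨rs, by simpa using h, by simp⟩
  | cons g l ih =>
    intro pre rs h hl
    obtain ⟨h1, h2⟩ := hl [] g l rfl
    obtain ⟨rs', h3, h4, -⟩ := exchange pre rs h g h1 (by simpa using h2)
    have e : ∀ t, pre ++ g :: t = (pre ++ [g]) ++ t := fun t => by simp
    rw [e] at h3 h4
    obtain ⟨rs'', h5, h6⟩ := ih (pre ++ [g]) rs' h3 (by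
      intro a x b hab
      have := hl (g :: a) x b (by simp [hab])
      rw [h4, ← e]
      exact this)
    refine ⟨rs'', by simpa using h5, ?_⟩
    rw [← h4, ← h6]; simp

end P3


section P4
open RingTheory.Sequence
variable {A B N : Type*} [CommRing A] [CommRing B] [Algebra A B] [AddCommGroup N] [Module A N] [Module B N]
  [IsScalarTower A B N]

open Pointwise

/-- The colon ideal `(I : a)`. -/
def icolon {A : Type*} [CommRing A] (I : Ideal A) (a : A) : Ideal A := Submodule.comap (LinearMap.mulLeft A a) I

lemma mem_map_smul_top_iff {l : ℕ} (c : Fin l → A) (x : N) :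
    x ∈ ((Ideal.span (Set.range c)).map (algebraMap A B) • ⊤ : Submodule B N) ↔ 
      ∃ y : Fin l → N, x = ∑ i, c i • y i := by
  constructor
  · let φ : (Fin l → N) →ₗ[B] N := ∑ i, (algebraMap A B (c i)) • LinearMap.proj i
    have hφ : ∀ y, φ y = ∑ i, c i • y i := by
      intro y; simp [φ, algebraMap_smul]
    intro hx
    have : ((Ideal.span (Set.range c)).map (algebraMap A B) • ⊤ : Submodule B N) ≤ LinearMap.range φ := by
      rw [Ideal.map_span, Submodule.span_smul_eq, Submodule.set_smul_le_iff]
      rintro _ n ⟨_, ⟨i, rfl⟩, rfl⟩ -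
      refine ⟨Pi.single i n, ?_⟩
      rw [hφ, Finset.sum_eq_single i]
      · simp [algebraMap_smul]
      · intro j _ hj; simp [Pi.single_eq_of_ne hj]
      · simp
    obtain ⟨y, hy⟩ := this hx
    exact ⟨y, by rw [← hy, hφ]⟩
  · rintro ⟨y, rfl⟩
    refine Submodule.sum_mem _ fun i _ => ?_
    rw [← algebraMap_smul B (c i) (y i)]
    exact Submodule.smul_mem_smul (Ideal.mem_map_of_mem _ (Ideal.subset_span ⟨i, rfl⟩)) trivial

lemma exists_fin_gen [IsNoetherianRing A] (I : Ideal A) : ∃ (l : ℕ) (c : Fin l → A), I = Ideal.span (Set.range c) := by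
  obtain ⟨l, c, hc⟩ := Submodule.fg_iff_exists_fin_generating_family.1 (IsNoetherian.noetherian I)
  exact ⟨l, c, hc.symm⟩

lemma mem_map_of_sum {l : ℕ} (I : Ideal A) (d : Fin l → A) (hd : ∀ i, d i ∈ I) (y : Fin l → N) :
    ∑ i, d i • y i ∈ (I.map (algebraMap A B) • ⊤ : Submodule B N) := by
  refine Submodule.sum_mem _ fun i _ => ?_
  rw [← algebraMap_smul B (d i) (y i)]
  exact Submodule.smul_mem_smul (Ideal.mem_map_of_mem _ (hd i)) trivial

lemma flat_colon [IsNoetherianRing A] [Module.Flat A N] (I : Ideal A) (a : A) (x : N) 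
    (hx : a • x ∈ (I.map (algebraMap A B) • ⊤ : Submodule B N)) : 
    x ∈ (Ideal.map (algebraMap A B) (icolon I a) • ⊤ : Submodule B N) := by
  obtain ⟨l, c, rfl⟩ := exists_fin_gen I
  obtain ⟨y, hy⟩ := (mem_map_smul_top_iff c _).1 hx
  have h : ∑ i : Option (Fin l), (i.elim a fun i => - c i : A) • (i.elim x y : N) = 0 := by
    rw [Fintype.sum_option]
    simp [hy]
  obtain ⟨k, d, z, h1, h2⟩ := Module.Flat.isTrivialRelation_of_sum_smul_eq_zero h
  have := h1 none
  simp only [Option.elim] at this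
  rw [this]
  refine mem_map_of_sum _ _ (fun j => ?_) _
  have h3 := h2 j
  rw [Fintype.sum_option] at h3
  simp only [Option.elim] at h3
  show a * d none j ∈ Ideal.span (Set.range c)
  rw [add_eq_zero_iff_eq_neg] at h3
  rw [h3]
  refine neg_mem (sum_mem fun i _ => ?_)
  exact Ideal.mul_mem_right _ _ (neg_mem (Ideal.subset_span ⟨i, rfl⟩))

variable [IsLocalRing A] [IsLocalRing B] [IsLocalHom (algebraMap A B)] [IsNoetherianRing A]
  [IsNoetherianRing B] [Module.Finite B N] [Module.Flat A N]

lemma localcrit_aux (b : B) (hreg : ∀ x : N, b • x ∈ ((maximalIdeal A).map (algebraMap A B) • ⊤ : Submodule B N) → 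
      x ∈ ((maximalIdeal A).map (algebraMap A B) • ⊤ : Submodule B N)) (I : Ideal A) : 
    ∀ x : N, b • x ∈ (Ideal.map (algebraMap A B) I • ⊤ : Submodule B N) → 
      x ∈ (Ideal.map (algebraMap A B) I • ⊤ : Submodule B N) := by
  induction I using IsNoetherian.induction with
  | hgt I ih =>
    by_cases htop : I = ⊤
    · subst htop; intro x _; simp [Ideal.map_top]
    by_cases hmax : maximalIdeal A ≤ I
    · rw [← (IsLocalRing.maximalIdeal.isMaximal A).eq_of_le htop hmax]; exact hreg
    obtain ⟨a, ha, haI⟩ := SetLike.not_le_iff_exists.1 hmax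
    have hcol : I ≤ (icolon I a) := fun x hx => Ideal.mul_mem_left _ _ hx
    have hlt : I < I ⊔ Ideal.span {a} := lt_of_le_of_ne le_sup_left (fun h => haI (by 
      rw [h]; exact Ideal.mem_sup_right (Ideal.mem_span_singleton_self a)))
    have key : ∀ x : N, b • x ∈ (Ideal.map (algebraMap A B) I • ⊤ : Submodule B N) → 
        ∃ z ∈ (Ideal.map (algebraMap A B) I • ⊤ : Submodule B N), ∃ y : N, x = z + a • y ∧ 
        b • y ∈ (Ideal.map (algebraMap A B) (icolon I a) • ⊤ : Submodule B N) := by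
      intro x hx
      have h1 : x ∈ (Ideal.map (algebraMap A B) (I ⊔ Ideal.span {a}) • ⊤ : Submodule B N) := by
        refine ih _ hlt x ?_
        exact Submodule.smul_mono_left (Ideal.map_mono le_sup_left) hx
      rw [Ideal.map_sup, Submodule.sup_smul, Submodule.mem_sup] at h1
      obtain ⟨z, hz, w, hw, rfl⟩ := h1
      rw [Ideal.map_span, Set.image_singleton, Submodule.ideal_span_singleton_smul, Submodule.mem_smul_pointwise_iff_exists] at hw
      obtain ⟨y, -, rfl⟩ := hw
      refine ⟨z, hz, y, by rw [algebraMap_smul], flat_colon _ _ _ ?_⟩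
      have h2 : a • b • y = b • (z + algebraMap A B a • y) - b • z := by
        rw [smul_add, add_sub_cancel_left, ← algebraMap_smul B a, smul_comm]
      rw [h2]
      exact sub_mem hx (Submodule.smul_mem _ _ hz)
    by_cases hc : I = (icolon I a)
    · rw [← hc] at key
      let K : Submodule B N := Submodule.comap (LinearMap.lsmul B N b) (Ideal.map (algebraMap A B) I • ⊤ : Submodule B N)
      have hK : K ≤ (Ideal.map (algebraMap A B) I • ⊤ : Submodule B N) := by
        have : IsNoetherian B N := isNoetherian_of_isNoetherianRing_of_finite B N
        refine Submodule.le_of_le_smul_of_le_jacobson_bot (I := maximalIdeal B) (IsNoetherian.noetherian _) 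
            (IsLocalRing.maximalIdeal_le_jacobson _) ?_
        intro x hx
        obtain ⟨z, hz, y, rfl, hy⟩ := key x hx
        refine add_mem (Submodule.mem_sup_left hz) (Submodule.mem_sup_right ?_)
        rw [← algebraMap_smul B a]
        refine Submodule.smul_mem_smul ?_ hy
        exact (map_mem_nonunits_iff (algebraMap A B) a).2 ha
      exact fun x hx => hK hx
    · intro x hx
      obtain ⟨z, hz, y, rfl, hy⟩ := key x hx
      have := ih _ (lt_of_le_of_ne hcol hc) y hy
      refine add_mem hz ?_
      obtain ⟨l, c, hcI⟩ := exists_fin_gen (icolon I a)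
      rw [hcI] at this
      obtain ⟨w, rfl⟩ := (mem_map_smul_top_iff c _).1 this
      rw [Finset.smul_sum]
      simp_rw [smul_smul]
      refine mem_map_of_sum I _ (fun i => ?_) _
      have : c i ∈ (icolon I a) := by
        rw [hcI]; exact Ideal.subset_span ⟨i, rfl⟩
      exact this

lemma localcrit_one (b : B) (hreg : ∀ x : N, b • x ∈ ((maximalIdeal A).map (algebraMap A B) • ⊤ : Submodule B N) → 
      x ∈ ((maximalIdeal A).map (algebraMap A B) • ⊤ : Submodule B N)) :
    IsSMulRegular N b ∧ Module.Flat A (QuotSMulTop b N) := by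
  have key := localcrit_aux b hreg
  constructor
  · rw [isSMulRegular_iff_right_eq_zero_of_smul]
    intro x hx
    have := key ⊥ x (by rw [hx]; exact zero_mem _)
    simpa [Ideal.map_bot] using this
  · apply Module.Flat.of_forall_isTrivialRelation
    intro l f x hx
    choose y hy using fun i => Submodule.mkQ_surjective (b • (⊤ : Submodule B N)) (x i)
    have h1 : ∑ i, f i • y i ∈ b • (⊤ : Submodule B N) := by
      rw [← Submodule.Quotient.mk_eq_zero, ← hx, ← Submodule.mkQ_apply, map_sum]
      refine Finset.sum_congr rfl fun i _ => ?_
      rw [← hy, ← algebraMap_smul B (f i), map_smul, algebraMap_smul]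
    obtain ⟨w, -, hw⟩ := (Submodule.mem_smul_pointwise_iff_exists _ _ _).1 h1
    have h2 := key (Ideal.span (Set.range f)) w (by rw [hw]; exact mem_map_of_sum (Ideal.span (Set.range f)) f (fun i => Ideal.subset_span ⟨i, rfl⟩) y)
    obtain ⟨v, rfl⟩ := (mem_map_smul_top_iff f _).1 h2
    have h3 : ∑ i, f i • (y i - b • v i) = 0 := by
      simp_rw [smul_sub]
      rw [Finset.sum_sub_distrib, ← hw, Finset.smul_sum, sub_eq_zero]
      refine Finset.sum_congr rfl fun i _ => ?_
      rw [← algebraMap_smul B (f i), ← algebraMap_smul B (f i), smul_comm]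
    obtain ⟨k, d, z, h4, h5⟩ := Module.Flat.isTrivialRelation_of_sum_smul_eq_zero h3
    refine ⟨k, d, fun j => Submodule.mkQ _ (z j), fun i => ?_, h5⟩
    rw [← hy i]
    have : y i = (∑ j, d i j • z j) + b • v i := by rw [← h4]; simp only [sub_add_cancel]
    rw [this, map_add, map_sum, Submodule.mkQ_apply _ (b • v i), 
      (Submodule.Quotient.mk_eq_zero _).2 (Submodule.smul_mem_pointwise_smul _ b ⊤ trivial), add_zero]
    refine Finset.sum_congr rfl fun j _ => ?_
    rw [← algebraMap_smul B (d i j), map_smul, algebraMap_smul]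

end P4


section P5
open RingTheory.Sequence Pointwise

/-- `(N/IN)/b ≅ (N/b)/I(N/b)` -/
noncomputable def quotComm {B N : Type*} [CommRing B] [AddCommGroup N] [Module B N] (I : Ideal B) (b : B) :
    QuotSMulTop b (N ⧸ (I • ⊤ : Submodule B N)) ≃ₗ[B] (QuotSMulTop b N) ⧸ (I • ⊤ : Submodule B (QuotSMulTop b N)) :=
  (Submodule.quotEquivOfEq _ _ (by 
      rw [Submodule.map_pointwise_smul, Submodule.map_top, Submodule.range_mkQ])) ≪≫ₗ
  (Submodule.quotientQuotientEquivQuotientSup (I • ⊤ : Submodule B N) (b • ⊤ : Submodule B N)) ≪≫ₗ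
  (Submodule.quotEquivOfEq _ _ (sup_comm _ _)) ≪≫ₗ
  (Submodule.quotientQuotientEquivQuotientSup (b • ⊤ : Submodule B N) (I • ⊤ : Submodule B N)).symm ≪≫ₗ
  (Submodule.quotEquivOfEq _ _ (by 
      rw [Submodule.map_smul'', Submodule.map_top, Submodule.range_mkQ]))

theorem localcrit_list {A B : Type*} [CommRing A] [CommRing B] [Algebra A B]  
    [IsLocalRing A] [IsLocalRing B] [IsLocalHom (algebraMap A B)] [IsNoetherianRing A]
  [IsNoetherianRing B] (ls : List B) {N : Type*} [AddCommGroup N] [Module A N] [Module B N]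
  [IsScalarTower A B N] [Module.Finite B N] [Module.Flat A N]
  (h : IsWeaklyRegular (N ⧸ ((maximalIdeal A).map (algebraMap A B) • ⊤ : Submodule B N)) ls) :
  IsWeaklyRegular N ls ∧ Module.Flat A (N ⧸ (Ideal.ofList ls • ⊤ : Submodule B N)) := by
  induction ls generalizing N with
  | nil => 
    refine ⟨IsWeaklyRegular.nil _ _, ?_⟩
    have h0 : (Ideal.ofList ([] : List B) • ⊤ : Submodule B N) = ⊥ := by simp
    exact Module.Flat.of_linearEquiv ((Submodule.quotEquivOfEqBot _ h0).restrictScalars A)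
  | cons b ls ih =>
    rw [isWeaklyRegular_cons_iff] at h ⊢
    obtain ⟨h1, h2⟩ := h
    obtain ⟨h3, h4⟩ := localcrit_one (A := A) (N := N) b (by
      rwa [isSMulRegular_quotient_iff_mem_of_smul_mem] at h1)
    obtain ⟨h5, h6⟩ := ih (N := QuotSMulTop b N) (((quotComm _ b).isWeaklyRegular_congr ls).1 h2)
    refine ⟨⟨h3, h5⟩, ?_⟩
    exact Module.Flat.of_linearEquiv ((Submodule.quotOfListConsSMulTopEquivQuotSMulTopInner N b ls).restrictScalars A)

end P5


section P6
open RingTheory.Sequence Pointwise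

lemma wr_descent {A B : Type*} [CommRing A] [CommRing B] [Algebra A B] [Module.FaithfullyFlat A B]
    (l : List A) (h : IsWeaklyRegular B (l.map (algebraMap A B))) : IsWeaklyRegular A l := by
  induction l using List.reverseRecOn with
  | nil => exact IsWeaklyRegular.nil _ _
  | append_singleton l r ih =>
    rw [List.map_append, List.map_singleton, wr_append_single] at h
    rw [wr_append_single]
    refine ⟨ih h.1, fun a ha => ?_⟩
    have := h.2 (algebraMap A B a) (by rw [← map_mul, ← Ideal.map_ofList]; exact Ideal.mem_map_of_mem _ ha)
    rw [← Ideal.map_ofList, ← Ideal.mem_comap, Ideal.comap_map_eq_self_of_faithfullyFlat] at this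
    exact this

theorem abstract_ci {A B S T : Type u} [CommRing A] [CommRing B] [Algebra A B]
    [IsLocalRing A] [IsLocalRing B] [IsLocalHom (algebraMap A B)] [IsNoetherianRing A]
    [IsNoetherianRing B] [Module.Flat A B] [CommRing S] [CommRing T] [Algebra S T] [Module.Flat S T]
    (σ : A →+* S) (hσ : Function.Surjective σ) (π : B →+* T) (hπ : Function.Surjective π)
    (hcomm : ∀ a, π (algebraMap A B a) = algebraMap S T (σ a))
    (hmax : maximalIdeal B ≤ (maximalIdeal A).map (algebraMap A B) ⊔ RingHom.ker π)
    (hJ : GeneratedByRegularSequence B (RingHom.ker π))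
    (l0 : List B) (hl0 : IsWeaklyRegular (B ⧸ ((maximalIdeal A).map (algebraMap A B) • ⊤ : Submodule B B)) l0)
    (hl0max : Ideal.ofList l0 ⊔ (maximalIdeal A).map (algebraMap A B) = maximalIdeal B) :
    GeneratedByRegularSequence A (RingHom.ker σ) := by
  set I := RingHom.ker σ with hI
  set J := RingHom.ker π with hJdef
  set nB := (maximalIdeal A).map (algebraMap A B) with hnB
  have hIJ : I.map (algebraMap A B) ≤ J := by
    rw [Ideal.map_le_iff_le_comap]
    intro a ha
    rw [Ideal.mem_comap, hJdef, RingHom.mem_ker, hcomm, (RingHom.mem_ker).1 ha, map_zero]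
  obtain ⟨rsJ, hrsJ, hrsJ'⟩ := hJ
  change Ideal.ofList rsJ = J at hrsJ'
  have hJtop : J ≠ ⊤ := by rw [← hrsJ']; exact ((isRegular_ring_iff _).1 hrsJ).2
  have hJmax : J ≤ maximalIdeal B := IsLocalRing.le_maximalIdeal hJtop
  have hnBmax : nB ≤ maximalIdeal B := hl0max ▸ le_sup_right
  -- step a
  have ha : ∀ x : B, ∃ j : B, x ∈ l0 → j ∈ J ∧ x - j ∈ nB := by
    intro x
    by_cases hx : x ∈ l0
    · have h1 : x ∈ nB ⊔ J := hmax (hl0max ▸ Ideal.mem_sup_left (Ideal.subset_span hx))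
      obtain ⟨y, hy, j, hj, rfl⟩ := Submodule.mem_sup.1 h1
      exact ⟨j, fun _ => ⟨hj, by simpa using hy⟩⟩
    · exact ⟨0, fun h => absurd h hx⟩
  choose jj hjj using ha
  set l := l0.map jj with hl
  have hlJ : ∀ x ∈ l, x ∈ J := by
    intro x hx
    obtain ⟨y, hy, rfl⟩ := List.mem_map.1 hx
    exact (hjj y hy).1
  have hlJ' : Ideal.ofList l ≤ J := Ideal.span_le.2 hlJ
  have hlreg : IsWeaklyRegular (B ⧸ (nB • ⊤ : Submodule B B)) l := by
    refine ((AddEquiv.refl _).isWeaklyRegular_congr ?_).1 hl0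
    rw [hl, List.forall₂_map_right_iff, List.forall₂_same]
    intro x hx e
    obtain ⟨e, rfl⟩ := Submodule.mkQ_surjective _ e
    simp only [AddEquiv.refl_apply]
    rw [← map_smul, ← map_smul, ← sub_eq_zero, ← map_sub, Submodule.mkQ_apply, Submodule.Quotient.mk_eq_zero,
      ← sub_smul]
    exact Submodule.smul_mem_smul (hjj x hx).2 trivial
  have hlmax : Ideal.ofList l ⊔ nB = maximalIdeal B := by
    apply le_antisymm (sup_le (hlJ'.trans hJmax) hnBmax)
    rw [← hl0max]
    refine sup_le (Ideal.span_le.2 ?_) le_sup_right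
    intro x hx
    have : x = jj x + (x - jj x) := by ring
    rw [this]
    exact add_mem (Ideal.mem_sup_left (Ideal.subset_span (List.mem_map_of_mem hx))) (Ideal.mem_sup_right (hjj x hx).2)
  -- step b
  obtain ⟨-, hflat⟩ := localcrit_list (A := A) l (N := B) hlreg
  -- step c
  have hJeq : J = Ideal.ofList l ⊔ I.map (algebraMap A B) := by
    apply le_antisymm _ (sup_le hlJ' hIJ)
    refine Submodule.le_of_le_smul_of_le_jacobson_bot (I := maximalIdeal B) (IsNoetherian.noetherian _) 
            (IsLocalRing.maximalIdeal_le_jacobson _) ?_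
    intro y hy
    have h1 : y ∈ Ideal.ofList l ⊔ nB := by rw [hlmax]; exact hJmax hy
    obtain ⟨z, hz, w, hw, rfl⟩ := Submodule.mem_sup.1 h1
    refine add_mem (Submodule.mem_sup_left (Ideal.mem_sup_left hz)) ?_
    have hwJ : w ∈ J := by
      have := sub_mem hy (hlJ' hz)
      simpa using this
    obtain ⟨r, a, hra⟩ := exists_fin_gen (maximalIdeal A)
    have hw' : w ∈ ((Ideal.span (Set.range a)).map (algebraMap A B) • ⊤ : Submodule B B) := by
      rw [← hra]; simpa using hw
    obtain ⟨c, rfl⟩ := (mem_map_smul_top_iff a w).1 hw'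
    have h2 : ∑ i, σ (a i) • π (c i) = 0 := by
      have : π (∑ i, a i • c i) = 0 := hwJ
      rw [map_sum] at this
      rw [← this]
      refine Finset.sum_congr rfl fun i _ => ?_
      rw [Algebra.smul_def, Algebra.smul_def, map_mul, hcomm]
    obtain ⟨k, s, t, h3, h4⟩ := Module.Flat.isTrivialRelation_of_sum_smul_eq_zero
      (R := S) (M := T) (f := fun i => σ (a i)) (x := fun i => π (c i)) h2
    beta_reduce at h3 h4
    choose d hd using fun i j => hσ (s i j)
    choose e he using fun j => hπ (t j)
    have h5 : ∑ i, a i • c i = (∑ j, (algebraMap A B (∑ i, a i * d i j)) * e j) + 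
        ∑ i, algebraMap A B (a i) • (c i - ∑ j, algebraMap A B (d i j) * e j) := by
      simp only [map_sum, map_mul, Finset.sum_mul, smul_eq_mul, mul_sub, Finset.mul_sum, Finset.sum_sub_distrib]
      rw [Finset.sum_comm]
      simp only [Algebra.smul_def, mul_assoc]
      ring
    rw [h5]
    refine add_mem (Submodule.mem_sup_left (Ideal.mem_sup_right ?_)) (Submodule.mem_sup_right ?_)
    · refine sum_mem fun j _ => Ideal.mul_mem_right _ _ (Ideal.mem_map_of_mem _ ?_)
      rw [hI, RingHom.mem_ker, map_sum, ← h4 j]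
      exact Finset.sum_congr rfl fun i _ => by rw [map_mul, hd]
    · refine sum_mem fun i _ => Submodule.smul_mem_smul (hnBmax (Ideal.mem_map_of_mem _ ?_)) ?_
      · rw [hra]; exact Ideal.subset_span ⟨i, rfl⟩
      · rw [hJdef, RingHom.mem_ker, map_sub, h3 i, map_sum, sub_eq_zero]
        exact Finset.sum_congr rfl fun j _ => by rw [map_mul, hcomm, hd, he, Algebra.smul_def]
  -- step d
  have hchain : ∀ a x b, l = a ++ x :: b → x ∈ Ideal.ofList ([] ++ rsJ) ∧ 
      x ∉ Ideal.ofList ([] ++ a) ⊔ maximalIdeal B * Ideal.ofList ([] ++ rsJ) := by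
    intro a x b hab
    simp only [List.nil_append, hrsJ']
    refine ⟨hlJ x (by simp [hab]), fun hx => ?_⟩
    have hP : maximalIdeal B ≤ Ideal.ofList (a ++ b) ⊔ nB := by
      refine Submodule.le_of_le_smul_of_le_jacobson_bot (I := maximalIdeal B) (IsNoetherian.noetherian _) 
            (IsLocalRing.maximalIdeal_le_jacobson _) ?_
      conv_lhs => rw [← hlmax, hab]
      refine sup_le ?_ (le_sup_of_le_left le_sup_right)
      rw [Ideal.ofList_append, Ideal.ofList_cons, Ideal.ofList_append]
      refine sup_le (le_sup_of_le_left (le_sup_of_le_left le_sup_left)) 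
        (sup_le ?_ (le_sup_of_le_left (le_sup_of_le_left le_sup_right)))
      rw [Ideal.span_singleton_le_iff_mem]
      refine (sup_le ?_ ?_ : Ideal.ofList a ⊔ maximalIdeal B * J ≤ _) hx
      · exact (le_sup_of_le_left (le_sup_of_le_left le_sup_left))
      · exact le_sup_of_le_right (Ideal.mul_mono_right hJmax)
    have hperm : l.Perm ((a ++ b) ++ [x]) := by
      rw [hab]
      refine List.perm_middle.trans ?_
      exact (List.perm_append_comm (l₁ := [x]))
    have h1 := IsLocalRing.isWeaklyRegular_of_perm_of_subset_maximalIdeal hlreg hperm (fun r hr => hJmax (hlJ r hr))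
    rw [isWeaklyRegular_append_iff, isWeaklyRegular_singleton_iff, isSMulRegular_quotient_iff_mem_of_smul_mem] at h1
    have hmem : ∀ y : B, (nB • ⊤ : Submodule B B).mkQ y ∈ (Ideal.ofList (a ++ b) • ⊤ : Submodule B (B ⧸ (nB • ⊤ : Submodule B B))) ↔ 
        y ∈ Ideal.ofList (a ++ b) ⊔ nB := by
      intro y
      have : (Ideal.ofList (a ++ b) • ⊤ : Submodule B (B ⧸ (nB • ⊤ : Submodule B B))) = 
          Submodule.map (nB • ⊤ : Submodule B B).mkQ (Ideal.ofList (a ++ b)) := by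
        conv_rhs => rw [← Ideal.mul_top (Ideal.ofList (a ++ b))]
        rw [← smul_eq_mul, Submodule.map_smul'', Submodule.map_top, Submodule.range_mkQ]
      rw [this, ← Submodule.mem_comap, Submodule.comap_map_mkQ, sup_comm]
      simp
    have h2 := h1.2 ((nB • ⊤ : Submodule B B).mkQ 1) (by
      rw [← map_smul, hmem, smul_eq_mul, mul_one]
      rw [← hlmax] at hP
      exact hP (Ideal.mem_sup_left (Ideal.subset_span (by simp [hab]))))
    rw [hmem] at h2
    have h3 : Ideal.ofList (a ++ b) ⊔ nB ≤ maximalIdeal B := by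
      refine sup_le (Ideal.span_le.2 fun y hy => ?_) hnBmax
      refine hJmax (hlJ y ?_)
      simp only [Set.mem_setOf_eq, List.mem_append] at hy
      simp only [hab, List.mem_append, List.mem_cons]; tauto
    exact (Ideal.ne_top_iff_one _).1 (IsLocalRing.maximalIdeal.isMaximal B).ne_top (h3 h2)
  -- step e
  obtain ⟨rs', h1, h2⟩ := exchange_chain l [] rsJ (by simpa using hrsJ) hchain
  simp only [List.nil_append] at h1 h2
  rw [hrsJ'] at h2
  obtain ⟨gs, h3, h4, h5⟩ := exchange_span (algebraMap A B '' I) _ l rs' le_rfl h1 (by rw [h2, hJeq]; rfl)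
  obtain ⟨gs0, hgs0, rfl⟩ : ∃ gs0 : List A, (∀ g ∈ gs0, g ∈ I) ∧ gs0.map (algebraMap A B) = gs := by
    clear h4 h5
    induction gs with
    | nil => exact ⟨[], by simp, rfl⟩
    | cons g gs ih =>
      obtain ⟨gs0, h6, rfl⟩ := ih (fun x hx => h3 x (List.mem_cons_of_mem _ hx))
      obtain ⟨g0, hg0, rfl⟩ := h3 g List.mem_cons_self
      exact ⟨g0 :: gs0, by simpa using ⟨hg0, h6⟩, rfl⟩
  have : Module.FaithfullyFlat A B := Module.FaithfullyFlat.of_flat_of_isLocalHom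
  have h6 := IsLocalRing.isRegular_of_perm h4 List.perm_append_comm
  have h7 : IsWeaklyRegular A gs0 := by
    apply wr_descent (B := B)
    exact ((isWeaklyRegular_append_iff _ _ _).1 h6.1).1
  have hIle : Ideal.ofList gs0 ≤ I := Ideal.span_le.2 hgs0
  have hItop : I ≠ ⊤ := by
    intro h
    rw [h, Ideal.map_top, top_le_iff] at hIJ
    exact hJtop hIJ
  refine ⟨gs0, (isRegular_ring_iff _).2 ⟨h7, fun h => hItop (top_le_iff.1 (h ▸ hIle))⟩, ?_⟩
  change Ideal.ofList gs0 = I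
  apply le_antisymm hIle
  -- step g
  have hltop : Ideal.ofList l ≠ ⊤ := fun h => hJtop (top_le_iff.1 (h ▸ hlJ'))
  have : Nontrivial (B ⧸ Ideal.ofList l) := Ideal.Quotient.nontrivial_iff.2 hltop
  have : IsLocalRing (B ⧸ Ideal.ofList l) := .of_surjective' _ Ideal.Quotient.mk_surjective
  have : Module.Flat A (B ⧸ Ideal.ofList l) := by
    have e : (B ⧸ Ideal.ofList l) ≃ₗ[B] (B ⧸ (Ideal.ofList l • ⊤ : Submodule B B)) := 
      Submodule.quotEquivOfEq _ _ (by simp)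
    exact Module.Flat.of_linearEquiv (e.restrictScalars A)
  have : IsLocalHom (algebraMap A (B ⧸ Ideal.ofList l)) := by
    rw [IsScalarTower.algebraMap_eq A B (B ⧸ Ideal.ofList l)]
    have : IsLocalHom (algebraMap B (B ⧸ Ideal.ofList l)) := .of_surjective _ Ideal.Quotient.mk_surjective
    exact RingHom.isLocalHom_comp _ _
  have : Module.FaithfullyFlat A (B ⧸ Ideal.ofList l) := Module.FaithfullyFlat.of_flat_of_isLocalHom
  rw [← Ideal.comap_map_eq_self_of_faithfullyFlat (B := B ⧸ Ideal.ofList l) (Ideal.ofList gs0), ← Ideal.map_le_iff_le_comap]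
  rw [IsScalarTower.algebraMap_eq A B (B ⧸ Ideal.ofList l), ← Ideal.map_map, ← Ideal.map_map]
  have h8 : I.map (algebraMap A B) ≤ Ideal.ofList l ⊔ (Ideal.ofList gs0).map (algebraMap A B) := by
    rw [Ideal.map_ofList, ← Ideal.ofList_append, h5, h2]; exact hIJ
  refine (Ideal.map_mono h8).trans ?_
  rw [Ideal.map_sup]
  refine sup_le ?_ le_rfl
  rw [Ideal.Quotient.algebraMap_eq, Ideal.map_quotient_self]
  exact bot_le

end P6


section P7
open RingTheory.Sequence Pointwise

lemma ofList_lift {P C : Type*} [CommRing P] [CommRing C] (e : P →+* C) (he : Function.Surjective e)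
    (Xs l : List P) (hker : Ideal.ofList Xs = RingHom.ker e) :
    Ideal.ofList (Xs ++ l) = (Ideal.ofList (l.map e)).comap e := by
  rw [Ideal.ofList_append, ← Ideal.map_ofList, Ideal.comap_map_of_surjective e he, sup_comm, hker]
  rfl

lemma wr_lift {P C : Type*} [CommRing P] [CommRing C] (e : P →+* C) (he : Function.Surjective e)
    (Xs l : List P) (hker : Ideal.ofList Xs = RingHom.ker e) (hX : IsWeaklyRegular P Xs)
    (hl : IsWeaklyRegular C (l.map e)) : IsWeaklyRegular P (Xs ++ l) := by
  induction l using List.reverseRecOn with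
  | nil => simpa using hX
  | append_singleton l r ih =>
    rw [List.map_append, List.map_singleton, wr_append_single] at hl
    rw [← List.append_assoc, wr_append_single]
    refine ⟨ih hl.1, fun a ha => ?_⟩
    rw [ofList_lift e he Xs l hker, Ideal.mem_comap] at ha ⊢
    rw [map_mul] at ha
    exact hl.2 _ ha

lemma isRegular_X_sub_C {σ C : Type*} [CommRing C] (b : σ → C) (i : σ) (a : MvPolynomial σ C)
    (h : (MvPolynomial.X i - MvPolynomial.C (b i)) * a = 0) : a = 0 := by
  let T : MvPolynomial σ C →ₐ[C] MvPolynomial σ C := MvPolynomial.aeval fun i => MvPolynomial.X i + MvPolynomial.C (b i)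
  let T' : MvPolynomial σ C →ₐ[C] MvPolynomial σ C := MvPolynomial.aeval fun i => MvPolynomial.X i - MvPolynomial.C (b i)
  have hT : ∀ x, T' (T x) = x := by
    intro x
    have : T'.comp T = AlgHom.id _ _ := by
      apply MvPolynomial.algHom_ext
      intro j
      simp [T, T']
    exact congr($this x)
  have h1 := congrArg T h
  rw [map_mul, map_zero] at h1
  have h2 : T (MvPolynomial.X i - MvPolynomial.C (b i)) = MvPolynomial.X i := by simp [T]
  rw [h2] at h1
  have h3 : T a = 0 := (MvPolynomial.isRegular_X (n := i)).left (by simpa using h1)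
  rw [← hT a, h3, map_zero]

open Classical in
lemma wr_X_sub_C {σ C : Type*} [CommRing C] (b : σ → C) (L : List σ) (hL : L.Nodup) :
    IsWeaklyRegular (MvPolynomial σ C) (L.map fun i => MvPolynomial.X i - MvPolynomial.C (b i)) ∧
    Ideal.ofList (L.map fun i => MvPolynomial.X i - MvPolynomial.C (b i)) =
      RingHom.ker (MvPolynomial.aeval (fun i => if i ∈ L then MvPolynomial.C (b i) else MvPolynomial.X i) : 
        MvPolynomial σ C →ₐ[C] MvPolynomial σ C) := by
  have key : ∀ L : List σ, Ideal.ofList (L.map fun i => MvPolynomial.X i - MvPolynomial.C (b i)) =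
      RingHom.ker (MvPolynomial.aeval (fun i => if i ∈ L then MvPolynomial.C (b i) else MvPolynomial.X i) : 
        MvPolynomial σ C →ₐ[C] MvPolynomial σ C) := by
    intro L
    apply le_antisymm
    · refine Ideal.span_le.2 ?_
      intro x hx
      obtain ⟨i, hi, rfl⟩ := List.mem_map.1 hx
      simp [RingHom.mem_ker, hi]
    · intro f hf
      set I := Ideal.ofList (L.map fun i => MvPolynomial.X i - MvPolynomial.C (b i))
      have : (Ideal.Quotient.mkₐ C I).comp (MvPolynomial.aeval (fun i => if i ∈ L then MvPolynomial.C (b i) else MvPolynomial.X i) : 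
        MvPolynomial σ C →ₐ[C] MvPolynomial σ C) = Ideal.Quotient.mkₐ C I := by
        apply MvPolynomial.algHom_ext
        intro i
        simp only [AlgHom.comp_apply, MvPolynomial.aeval_X]
        split_ifs with h
        · symm
          simp only [Ideal.Quotient.mkₐ_eq_mk]
          rw [Ideal.Quotient.eq]
          exact Ideal.subset_span (List.mem_map.2 ⟨i, h, rfl⟩)
        · rfl
      have h2 := congr($this f)
      simp only [AlgHom.comp_apply] at h2
      rw [(RingHom.mem_ker).1 hf, map_zero] at h2
      exact Ideal.Quotient.eq_zero_iff_mem.1 h2.symm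
  refine ⟨?_, key L⟩
  induction L using List.reverseRecOn with
  | nil => exact IsWeaklyRegular.nil _ _
  | append_singleton l i ih =>
    rw [List.nodup_append] at hL
    rw [List.map_append, List.map_singleton, wr_append_single]
    refine ⟨ih hL.1, fun a ha => ?_⟩
    rw [key l, RingHom.mem_ker] at ha ⊢
    have : i ∉ l := fun hi => hL.2.2 i hi i (by simp) rfl
    rw [map_mul] at ha
    simp only [map_sub, MvPolynomial.aeval_X, this, if_false, MvPolynomial.algHom_C, 
      MvPolynomial.algebraMap_eq] at ha
    exact isRegular_X_sub_C b i _ ha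

/-- Lemma X -/
lemma wr_eval {n : ℕ} {C : Type*} [CommRing C] (b : Fin n → C) (l : List C) (hl : IsWeaklyRegular C l) :
    IsWeaklyRegular (MvPolynomial (Fin n) C) 
      ((List.finRange n).map (fun i => MvPolynomial.X i - MvPolynomial.C (b i)) ++ l.map MvPolynomial.C) ∧
    Ideal.ofList ((List.finRange n).map (fun i => MvPolynomial.X i - MvPolynomial.C (b i)) ++ l.map MvPolynomial.C) = 
      (Ideal.ofList l).comap (MvPolynomial.aeval b : MvPolynomial (Fin n) C →ₐ[C] C) := by
  classical
  obtain ⟨h1, h2⟩ := wr_X_sub_C b (List.finRange n) (List.nodup_finRange n)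
  have hs : Function.Surjective (MvPolynomial.aeval b : MvPolynomial (Fin n) C →ₐ[C] C).toRingHom := 
    fun c => ⟨MvPolynomial.C c, by simp⟩
  have hk : Ideal.ofList ((List.finRange n).map fun i => MvPolynomial.X i - MvPolynomial.C (b i)) =
      RingHom.ker (MvPolynomial.aeval b : MvPolynomial (Fin n) C →ₐ[C] C).toRingHom := by
    rw [h2]
    ext f
    simp only [RingHom.mem_ker, List.mem_finRange, if_true]
    have : (MvPolynomial.aeval fun i => MvPolynomial.C (b i) : MvPolynomial (Fin n) C →ₐ[C] MvPolynomial (Fin n) C) = 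
      (Algebra.ofId C _).comp (MvPolynomial.aeval b) := by
      apply MvPolynomial.algHom_ext
      intro i
      simp [Algebra.ofId_apply]
    rw [this]
    simp [Algebra.ofId_apply]
  have hm : (l.map (MvPolynomial.C (σ := Fin n))).map (MvPolynomial.aeval b : MvPolynomial (Fin n) C →ₐ[C] C).toRingHom = l := by
    rw [List.map_map]
    conv_rhs => rw [← List.map_id l]
    apply List.map_congr_left
    intro a _
    simp
  refine ⟨wr_lift _ hs _ _ hk h1 (by rw [hm]; exact hl), ?_⟩
  rw [ofList_lift _ hs _ _ hk, hm]
  rfl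

end P7


section P8

lemma exists_sep_basis (k ℓ : Type u) [Field k] [Field ℓ] [Algebra k ℓ] [Algebra.EssFiniteType k ℓ]
    (h : IsSeparableFieldExtension k ℓ) :
    ∃ (d : ℕ) (t : Fin d → ℓ), AlgebraicIndependent k t ∧
      Algebra.IsSeparable (IntermediateField.adjoin k (Set.range t)) ℓ := by
  suffices h' : ∃ s : Finset ℓ, IsTranscendenceBasis k ((↑) : s → ℓ) ∧
      Algebra.IsSeparable (IntermediateField.adjoin k (s : Set ℓ)) ℓ by
    obtain ⟨s, h1, h2⟩ := h'
    refine ⟨s.card, fun i => (s.equivFin.symm i : ℓ), ?_, ?_⟩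
    · exact h1.1.comp _ s.equivFin.symm.injective
    · have : Set.range (fun i => (s.equivFin.symm i : ℓ)) = s := by
        ext x
        constructor
        · rintro ⟨i, rfl⟩; exact (s.equivFin.symm i).2
        · intro hx; exact ⟨s.equivFin ⟨x, hx⟩, by simp⟩
      rw [this]; exact h2
  obtain _ | ⟨p, hp, hpk⟩ := CharP.exists' k
  · exact exists_isTranscendenceBasis_and_isSeparable_of_perfectField k ℓ
  have : ExpChar k p := .prime hp.out
  refine exists_isTranscendenceBasis_and_isSeparable_of_linearIndepOn_pow_of_essFiniteType
    p hp.out fun s hs ↦ ?_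
  have hred := h (AlgebraicClosure k) inferInstance inferInstance
  rw [linearIndepOn_finset_iff]
  intro f hf i hi
  have hpp : ∀ a : k, ∃ b : AlgebraicClosure k, b ^ p = algebraMap _ _ a := fun a => 
    IsAlgClosed.exists_pow_nat_eq _ hp.out.pos
  choose b hb using hpp
  have : CharP (AlgebraicClosure k ⊗[k] ℓ) p := 
    charP_of_injective_algebraMap (algebraMap k _).injective p
  have : ExpChar (AlgebraicClosure k ⊗[k] ℓ) p := .prime hp.out
  have h0 : (∑ j ∈ s, b (f j) ⊗ₜ[k] j : AlgebraicClosure k ⊗[k] ℓ) ^ p = 0 := by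
    rw [sum_pow_char]
    simp only [Algebra.TensorProduct.tmul_pow, hb]
    simp only [Algebra.algebraMap_eq_smul_one, TensorProduct.smul_tmul]
    rw [← TensorProduct.tmul_sum, hf, TensorProduct.tmul_zero]
  have h1 : (∑ j ∈ s, b (f j) ⊗ₜ[k] j : AlgebraicClosure k ⊗[k] ℓ) = 0 := by
    exact pow_eq_zero_iff hp.out.ne_zero |>.1 h0
  have h2 : LinearIndependent (AlgebraicClosure k) (fun j : s => (1 : AlgebraicClosure k) ⊗ₜ[k] (j : ℓ)) :=
    Module.Flat.linearIndependent_one_tmul (v := fun j : s => (j : ℓ)) hs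
  rw [Fintype.linearIndependent_iff] at h2
  have h3 := h2 (fun j => b (f j)) (by
    rw [← Finset.sum_coe_sort] at h1
    simpa [TensorProduct.smul_tmul'] using h1) ⟨i, hi⟩
  have h4 := hb (f i)
  simp only at h3
  rw [h3, zero_pow hp.out.ne_zero] at h4
  exact (map_eq_zero _).1 h4.symm

end P8


section P9
open RingTheory.Sequence

lemma wr_of_flat {A B : Type u} [CommRing A] [CommRing B] (f : A →+* B) (hf : f.Flat) (l : List A)
    (hl : IsWeaklyRegular A l) : IsWeaklyRegular B (l.map f) := by
  algebraize [f]
  exact hl.of_flat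

lemma flat_aeval {k ℓ : Type u} [Field k] [Field ℓ] [Algebra k ℓ] {d : ℕ} (t : Fin d → ℓ)
    (ht : AlgebraicIndependent k t) : 
    ((MvPolynomial.aeval t : MvPolynomial (Fin d) k →ₐ[k] ℓ) : MvPolynomial (Fin d) k →+* ℓ).Flat := by
  letI : Algebra (MvPolynomial (Fin d) k) ℓ := (MvPolynomial.aeval t : MvPolynomial (Fin d) k →ₐ[k] ℓ).toAlgebra
  have : FaithfulSMul (MvPolynomial (Fin d) k) ℓ := by
    rw [faithfulSMul_iff_algebraMap_injective]
    exact ht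
  letI := FractionRing.liftAlgebra (MvPolynomial (Fin d) k) ℓ
  have := Module.Flat.trans (MvPolynomial (Fin d) k) (FractionRing (MvPolynomial (Fin d) k)) ℓ
  exact this

lemma wr_tensor {k ℓ C E : Type u} [Field k] [Field ℓ] [Algebra k ℓ] [CommRing C] [Algebra k C] [CommRing E]
    (θ : C ⊗[k] ℓ →+* E) (hθ : θ.Flat) {d : ℕ} (t : Fin d → ℓ) (ht : AlgebraicIndependent k t)
    (bs : Fin d → C) (rs : List C) (hrs : IsWeaklyRegular C rs) :
    IsWeaklyRegular E ((List.finRange d).map (fun i => θ (1 ⊗ₜ t i) - θ (bs i ⊗ₜ 1)) ++ 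
      rs.map (fun r => θ (r ⊗ₜ 1))) := by
  let ψ : MvPolynomial (Fin d) C →+* E := (θ.comp (Algebra.TensorProduct.map (AlgHom.id C C) 
    (MvPolynomial.aeval t : MvPolynomial (Fin d) k →ₐ[k] ℓ)).toRingHom).comp 
      (MvPolynomial.algebraTensorAlgEquiv k C).symm.toRingEquiv.toRingHom
  have hψ : ψ.Flat := by
    refine RingHom.Flat.comp (RingHom.Flat.of_bijective (RingEquiv.bijective _)) 
      (RingHom.Flat.comp ?_ hθ)
    exact RingHom.Flat.tensorProductMap (S := C) (RingHom.Flat.id C) (flat_aeval t ht)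
  have := wr_of_flat ψ hψ _ (wr_eval bs rs hrs).1
  convert this using 1
  rw [List.map_append, List.map_map, List.map_map]
  congr 1
  · apply List.map_congr_left
    intro i _
    simp only [ψ, Function.comp_apply, RingHom.comp_apply, map_sub]
    congr 1
    · congr 1
      simp
    · congr 1
      have : (MvPolynomial.algebraTensorAlgEquiv (σ := Fin d) k C).symm (MvPolynomial.C (bs i)) = bs i ⊗ₜ 1 := by
        rw [← MvPolynomial.algebraMap_eq, AlgEquiv.commutes]; rfl
      simp [this]
  · apply List.map_congr_left
    intro i _
    simp only [ψ, Function.comp_apply, RingHom.comp_apply]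
    congr 1
    have : (MvPolynomial.algebraTensorAlgEquiv (σ := Fin d) k C).symm (MvPolynomial.C i) = i ⊗ₜ 1 := by
        rw [← MvPolynomial.algebraMap_eq, AlgEquiv.commutes]; rfl
    simp [this]

lemma gen_tensor {k ℓ C E : Type u} [Field k] [Field ℓ] [Algebra k ℓ] [CommRing C] [Algebra k C] [CommRing E]
    [IsLocalRing C] [IsLocalRing E] [IsNoetherianRing E]
    (θ : C ⊗[k] ℓ →+* E) {d : ℕ} (t : Fin d → ℓ) 
    (hsep : Algebra.IsSeparable (IntermediateField.adjoin k (Set.range t)) ℓ)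
    (g : ℓ →+* ResidueField C) (hg : ∀ a : k, g (algebraMap k ℓ a) = residue C (algebraMap k C a))
    (bs : Fin d → C) (hbs : ∀ i, residue C (bs i) = g (t i)) (rs : List C) 
    (hrs : Ideal.ofList rs = maximalIdeal C)
    (h1 : ∀ b c, residue C b = g c → θ (1 ⊗ₜ c) - θ (b ⊗ₜ 1) ∈ maximalIdeal E)
    (h2 : ∀ I : Ideal E, (∀ b ∈ maximalIdeal C, θ (b ⊗ₜ 1) ∈ I) → 
      (∀ b c, residue C b = g c → θ (1 ⊗ₜ c) - θ (b ⊗ₜ 1) ∈ I) → maximalIdeal E ≤ I) :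
    Ideal.ofList ((List.finRange d).map (fun i => θ (1 ⊗ₜ t i) - θ (bs i ⊗ₜ 1)) ++ 
      rs.map (fun r => θ (r ⊗ₜ 1))) = maximalIdeal E := by
  set L := ((List.finRange d).map (fun i => θ (1 ⊗ₜ t i) - θ (bs i ⊗ₜ 1)) ++ 
      rs.map (fun r => θ (r ⊗ₜ 1))) with hL
  have h3 : ∀ b ∈ maximalIdeal C, θ (b ⊗ₜ 1) ∈ maximalIdeal E := by
    intro b hb
    have := h1 b 0 (by simpa using hb)
    simpa using this
  have hle : Ideal.ofList L ≤ maximalIdeal E := by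
    refine Ideal.span_le.2 ?_
    intro x hx
    rcases List.mem_append.1 hx with hx | hx
    · obtain ⟨i, -, rfl⟩ := List.mem_map.1 hx
      exact h1 _ _ (hbs i)
    · obtain ⟨r, hr, rfl⟩ := List.mem_map.1 hx
      exact h3 _ (hrs ▸ Ideal.subset_span hr)
  refine le_antisymm hle ?_
  set I := Ideal.ofList L with hI
  let α : C →+* E := θ.comp (Algebra.TensorProduct.includeLeft : C →ₐ[k] C ⊗[k] ℓ).toRingHom
  let β : ℓ →+* E := θ.comp (Algebra.TensorProduct.includeRight : ℓ →ₐ[k] C ⊗[k] ℓ).toRingHom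
  have hα : ∀ b, α b = θ (b ⊗ₜ 1) := fun _ => rfl
  have hβ : ∀ b, β b = θ (1 ⊗ₜ b) := fun _ => rfl
  have hIr : ∀ b ∈ maximalIdeal C, α b ∈ I := by
    have : maximalIdeal C ≤ I.comap α := by
      rw [← hrs]
      refine Ideal.span_le.2 fun r hr => ?_
      exact Ideal.subset_span (List.mem_append_right _ (List.mem_map.2 ⟨r, hr, rfl⟩))
    exact fun b hb => this hb
  have hIne : I ≠ ⊤ := fun h => (maximalIdeal.isMaximal E).ne_top (top_le_iff.1 (h ▸ hle))
  have : Nontrivial (E ⧸ I) := Ideal.Quotient.nontrivial_iff.2 hIne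
  have : IsLocalRing (E ⧸ I) := IsLocalRing.of_surjective' (Ideal.Quotient.mk I) Ideal.Quotient.mk_surjective
  let K0 := IntermediateField.adjoin k (Set.range t)
  let u1 : ℓ →+* E ⧸ I := (Ideal.Quotient.mk I).comp β
  let v : ResidueField C →+* E ⧸ I := Ideal.Quotient.lift (maximalIdeal C) ((Ideal.Quotient.mk I).comp α) 
    (fun b hb => Ideal.Quotient.eq_zero_iff_mem.2 (hIr b hb))
  have hv : ∀ b, v (residue C b) = Ideal.Quotient.mk I (α b) := fun b => rfl
  let u2 : ℓ →+* E ⧸ I := v.comp g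
  have hK0 : ∀ x ∈ K0, u1 x = u2 x := by
    intro x hx
    have hk : ∀ a : k, u1 (algebraMap k ℓ a) = u2 (algebraMap k ℓ a) := by
      intro a
      simp only [u1, u2, RingHom.comp_apply, hg, hv, hα, hβ]
      congr 2
      rw [Algebra.algebraMap_eq_smul_one, Algebra.algebraMap_eq_smul_one, TensorProduct.smul_tmul]
    have h5 : K0 ≤ ({ RingHom.eqLocusField u1 u2 with 
        algebraMap_mem' := hk } : IntermediateField k ℓ) := by
      rw [IntermediateField.adjoin_le_iff]
      rintro _ ⟨i, rfl⟩
      show u1 (t i) = u2 (t i)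
      simp only [u1, u2, RingHom.comp_apply, ← hbs, hv]
      rw [Ideal.Quotient.eq]
      exact Ideal.subset_span (List.mem_append_left _ (List.mem_map.2 ⟨i, by simp, rfl⟩))
    exact h5 hx
  letI : Algebra K0 (E ⧸ I) := (u1.comp (algebraMap K0 ℓ)).toAlgebra
  let w1 : ℓ →ₐ[K0] E ⧸ I := { u1 with commutes' := fun _ => rfl }
  let w2 : ℓ →ₐ[K0] E ⧸ I := { u2 with commutes' := fun x => (hK0 _ x.2).symm }
  have hmod : ∀ b c, residue C b = g c → Ideal.Quotient.mk I (α b) = u2 c := by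
    intro b c hbc
    simp only [u2, RingHom.comp_apply, ← hbc, hv]
  have hw : w1 = w2 := by
    haveI : Algebra.FormallyUnramified K0 ℓ := Algebra.FormallyUnramified.of_isSeparable _ _
    refine Algebra.FormallyUnramified.ext_of_iInf (I := maximalIdeal (E ⧸ I)) 
      (Ideal.iInf_pow_eq_bot_of_isLocalRing _ (maximalIdeal.isMaximal _).ne_top) ?_
    intro c
    obtain ⟨b, hb⟩ := residue_surjective (g c)
    show Ideal.Quotient.mk _ (u1 c) = Ideal.Quotient.mk _ (u2 c)
    rw [← hmod b c hb, Ideal.Quotient.eq]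
    simp only [u1, RingHom.comp_apply]
    rw [← map_sub]
    rw [mem_maximalIdeal, mem_nonunits_iff]
    have hloc : IsLocalHom (Ideal.Quotient.mk I) := 
      IsLocalHom.of_surjective _ Ideal.Quotient.mk_surjective
    intro hunit
    exact (h1 b c hb) (isUnit_of_map_unit (Ideal.Quotient.mk I) _ hunit)
  refine h2 I hIr fun b c hbc => ?_
  rw [← Ideal.Quotient.eq]
  have := congr($hw c)
  exact (show u1 c = u2 c from this).trans (hmod b c hbc).symm

end P9


section P10
open RingTheory.Sequence

lemma flat_of_retract {Z E : Type u} [CommRing Z] [CommRing E] [IsLocalRing E] (θ : Z →+* E)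
    (η : E →+* Localization.AtPrime ((maximalIdeal E).comap θ))
    (h1 : ∀ z, η (θ z) = algebraMap Z _ z) (h2 : Function.Injective η) : θ.Flat := by
  have hu : ∀ y : ((maximalIdeal E).comap θ).primeCompl, IsUnit (θ y) := by
    rintro ⟨y, hy⟩
    by_contra h
    exact hy h
  let θ' : Localization.AtPrime ((maximalIdeal E).comap θ) →+* E := IsLocalization.lift hu
  have h3 : η.comp θ' = RingHom.id _ := by
    apply IsLocalization.ringHom_ext ((maximalIdeal E).comap θ).primeCompl
    ext z
    simp [θ', h1]
  have h4 : Function.Bijective η := ⟨h2, fun z => ⟨θ' z, congr($h3 z)⟩⟩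
  have h5 : (η.comp θ).Flat := by
    have : η.comp θ = algebraMap _ _ := by ext z; exact h1 z
    rw [this, RingHom.flat_algebraMap_iff]
    exact IsLocalization.flat _ ((maximalIdeal E).comap θ).primeCompl
  exact (RingHom.Flat.comp_iff_of_bijective_left h4).1 h5

lemma theta_flat {R k ℓ B C A B' E : Type u} [CommRing R] [Field k] [Field ℓ] [CommRing B] [CommRing C]
    [CommRing A] [CommRing B'] [CommRing E] [IsLocalRing E] {n : ℕ}
    [Algebra k C] [Algebra k ℓ] [Algebra R B]
    [Algebra (MvPolynomial (Fin n) R) A] [Algebra (MvPolynomial (Fin n) B) B'] 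
    (rk : R →+* k) (mkC : B →+* C) (hmkC : Function.Surjective mkC)
    (hkC : ∀ a, mkC (algebraMap R B a) = algebraMap k C (rk a))
    (p : Ideal (MvPolynomial (Fin n) R)) [p.IsPrime] [IsLocalization.AtPrime A p]
    (q : Ideal (MvPolynomial (Fin n) B)) [q.IsPrime] [IsLocalization.AtPrime B' q]
    (ι : A →+* B') (hι : ∀ f, ι (algebraMap (MvPolynomial (Fin n) R) A f) = algebraMap (MvPolynomial (Fin n) B) B' (MvPolynomial.map (algebraMap R B) f))
    (r : A →+* ℓ) (hr : Function.Surjective r) 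
    (hrk : ∀ a, r (algebraMap (MvPolynomial (Fin n) R) A (MvPolynomial.C a)) = algebraMap k ℓ (rk a))
    (mkE : B' →+* E) (hmkE : Function.Surjective mkE) 
    (hker : RingHom.ker mkE = (RingHom.ker r).map ι)
    (θ : C ⊗[k] ℓ →+* E) (hθ1 : ∀ b, θ (mkC b ⊗ₜ 1) = mkE (algebraMap (MvPolynomial (Fin n) B) B' (MvPolynomial.C b)))
    (hθ2 : ∀ a, θ (1 ⊗ₜ r a) = mkE (ι a)) : θ.Flat := by
  have hlocmk : IsLocalHom mkE := by
    have : IsLocalRing B' := IsLocalization.AtPrime.isLocalRing B' q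
    exact IsLocalHom.of_surjective _ hmkE
  set qZ : Ideal (C ⊗[k] ℓ) := (maximalIdeal E).comap θ with hqZ
  let Zq := Localization.AtPrime qZ
  let j : C ⊗[k] ℓ →+* Zq := algebraMap _ _
  have hu : ∀ y : qZ.primeCompl, IsUnit (θ y) := by
    rintro ⟨y, hy⟩
    by_contra h
    exact hy h
  let θ' : Zq →+* E := IsLocalization.lift hu
  have hθ' : ∀ z, θ' (j z) = θ z := fun z => IsLocalization.lift_eq hu z
  have hθ'loc : IsLocalHom θ' := by
    constructor
    intro z hz
    obtain ⟨⟨a, s⟩, rfl⟩ := IsLocalization.mk'_surjective qZ.primeCompl z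
    refine (IsLocalization.AtPrime.isUnit_mk'_iff Zq qZ a s).2 ?_
    intro ha
    have : θ' (IsLocalization.mk' Zq a s) * θ s = θ a := by
      rw [← hθ', ← hθ', ← map_mul, IsLocalization.mk'_spec]
    have h2 : IsUnit (θ a) := this ▸ hz.mul (hu s)
    exact ha h2
  let η0 : MvPolynomial (Fin n) B →+* Zq := MvPolynomial.eval₂Hom 
    (j.comp ((Algebra.TensorProduct.includeLeft : C →ₐ[k] C ⊗[k] ℓ).toRingHom.comp mkC)) 
    (fun i => j (1 ⊗ₜ r (algebraMap (MvPolynomial (Fin n) R) A (MvPolynomial.X i))))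
  have hη0C : ∀ b, η0 (MvPolynomial.C b) = j (mkC b ⊗ₜ 1) := by
    intro b; simp [η0]
  have hη0X : ∀ i, η0 (MvPolynomial.X i) = j (1 ⊗ₜ r (algebraMap (MvPolynomial (Fin n) R) A (MvPolynomial.X i))) := by
    intro b; simp [η0]
  have hθη : ∀ f, θ' (η0 f) = mkE (algebraMap (MvPolynomial (Fin n) B) B' f) := by
    intro f
    have : θ'.comp η0 = mkE.comp (algebraMap (MvPolynomial (Fin n) B) B') := by
      apply MvPolynomial.ringHom_ext
      · intro b
        simp only [RingHom.comp_apply, hη0C, hθ', hθ1]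
      · intro i
        simp only [RingHom.comp_apply, hη0X, hθ', hθ2, hι, MvPolynomial.map_X]
    exact congr($this f)
  have hu1 : ∀ y : q.primeCompl, IsUnit (η0 y) := by
    intro y
    apply isUnit_of_map_unit θ'
    rw [hθη]
    exact (IsLocalization.map_units B' y).map mkE
  let η1 : B' →+* Zq := IsLocalization.lift hu1
  have hη1 : ∀ f, η1 (algebraMap (MvPolynomial (Fin n) B) B' f) = η0 f := fun f => IsLocalization.lift_eq hu1 f
  have hη1A : ∀ a, η1 (ι a) = j (1 ⊗ₜ r a) := by
    intro a
    have : η1.comp ι = j.comp ((Algebra.TensorProduct.includeRight : ℓ →ₐ[k] C ⊗[k] ℓ).toRingHom.comp r) := by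
      apply IsLocalization.ringHom_ext p.primeCompl
      apply MvPolynomial.ringHom_ext
      · intro a
        simp only [RingHom.comp_apply, hι, hη1, MvPolynomial.map_C, hη0C, hkC, hrk]
        congr 1
        simp only [AlgHom.toRingHom_eq_coe, RingHom.coe_coe, Algebra.TensorProduct.includeRight_apply]
        rw [Algebra.algebraMap_eq_smul_one, Algebra.algebraMap_eq_smul_one, TensorProduct.smul_tmul]
      · intro i
        simp only [RingHom.comp_apply, hι, hη1, MvPolynomial.map_X, hη0X]
        rfl
    exact congr($this a)
  have hkill : RingHom.ker mkE ≤ RingHom.ker η1 := by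
    rw [hker, Ideal.map_le_iff_le_comap]
    intro a ha
    rw [Ideal.mem_comap, RingHom.mem_ker, hη1A, (RingHom.mem_ker).1 ha, TensorProduct.tmul_zero, map_zero]
  let η : E →+* Zq := RingHom.liftOfSurjective mkE hmkE ⟨η1, hkill⟩
  have hη : ∀ y, η (mkE y) = η1 y := fun y => RingHom.liftOfRightInverse_comp_apply _ _ _ ⟨η1, hkill⟩ y
  refine flat_of_retract θ η ?_ ?_
  · intro z
    induction z using TensorProduct.induction_on with
    | zero => simp
    | add x y hx hy => simp only [map_add, hx, hy]
    | tmul c l =>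
      obtain ⟨b, rfl⟩ := hmkC c
      obtain ⟨a, rfl⟩ := hr l
      have : (mkC b ⊗ₜ[k] r a : C ⊗[k] ℓ) = (mkC b ⊗ₜ 1) * (1 ⊗ₜ r a) := by simp
      rw [this, map_mul, map_mul, map_mul, hθ1, hθ2, hη, hη, hη1, hη1A, hη0C]
  · have h6 : ∀ e, θ' (η e) = e := by
      intro e
      obtain ⟨y, rfl⟩ := hmkE e
      rw [hη]
      have : θ'.comp η1 = mkE := by
        apply IsLocalization.ringHom_ext q.primeCompl
        ext f
        · simp only [RingHom.comp_apply, hη1, hθη]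
        · simp only [RingHom.comp_apply, hη1, hθη]
      exact congr($this y)
    exact Function.LeftInverse.injective h6

end P10


section P11
open RingTheory.Sequence

lemma gen_localize {P P' T : Type u} [CommRing P] [CommRing P'] [CommRing T] [Nontrivial T] [Algebra P P']
    (W : Submonoid P) [IsLocalization W P'] (ψ : P →+* T) (π : P' →+* T)
    (hπ : ∀ f, π (algebraMap P P' f) = ψ f) (L : List P) (hL : IsWeaklyRegular P L)
    (hk : Ideal.ofList L = RingHom.ker ψ) : GeneratedByRegularSequence P' (RingHom.ker π) := by
  have hker : Ideal.ofList (L.map (algebraMap P P')) = RingHom.ker π := by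
    rw [← Ideal.map_ofList, hk]
    apply le_antisymm
    · rw [Ideal.map_le_iff_le_comap]
      intro f hf
      rw [Ideal.mem_comap, RingHom.mem_ker, hπ]; exact hf
    · intro y hy
      obtain ⟨⟨a, s⟩, rfl⟩ := IsLocalization.mk'_surjective W y
      rw [IsLocalization.mk'_mem_map_algebraMap_iff W]
      refine ⟨1, one_mem _, ?_⟩
      rw [one_mul, RingHom.mem_ker, ← hπ, ← IsLocalization.mk'_spec P' a s, map_mul, (RingHom.mem_ker).1 hy,
        zero_mul]
  refine ⟨L.map (algebraMap P P'), ?_, hker⟩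
  rw [isRegular_ring_iff, hker]
  refine ⟨?_, RingHom.ker_ne_top π⟩
  exact wr_of_flat _ (RingHom.flat_algebraMap_iff.2 (IsLocalization.flat P' W)) _ hL

lemma map_flat {R B : Type u} [CommRing R] [CommRing B] [Algebra R B] [Module.Flat R B] (n : ℕ) :
    (MvPolynomial.map (σ := Fin n) (algebraMap R B)).Flat := by
  have h1 : (algebraMap (MvPolynomial (Fin n) R) (MvPolynomial (Fin n) R ⊗[R] B)).Flat :=
    RingHom.flat_algebraMap_iff.2 inferInstance
  have h2 := RingHom.Flat.comp h1 (RingHom.Flat.of_bijective (f := 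
    (Algebra.TensorProduct.comm R (MvPolynomial (Fin n) R) B).toRingEquiv.toRingHom) (RingEquiv.bijective (Algebra.TensorProduct.comm R (MvPolynomial (Fin n) R) B).toRingEquiv))
  have h3 := RingHom.Flat.comp h2 (RingHom.Flat.of_bijective (f := 
    (MvPolynomial.algebraTensorAlgEquiv (σ := Fin n) R B).toRingEquiv.toRingHom) (RingEquiv.bijective _))
  convert h3 using 1
  ext i
  · simp
  · simp

lemma wr_quot_of {B E : Type u} [CommRing B] [CommRing E] (f : B →+* E) (hf : Function.Surjective f)
    (I : Ideal B) (hI : RingHom.ker f = I) (l : List B) (h : IsWeaklyRegular E (l.map f)) : 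
    IsWeaklyRegular (B ⧸ (I • ⊤ : Submodule B B)) l := by
  letI : Algebra B E := f.toAlgebra
  have h' : IsWeaklyRegular E l := (isWeaklyRegular_map_algebraMap_iff E E l).1 h
  have e1 : (I • ⊤ : Submodule B B) = LinearMap.ker (Algebra.linearMap B E) := by
    rw [Ideal.smul_eq_mul, Ideal.mul_top, ← hI]; rfl
  rw [e1]
  exact (LinearEquiv.isWeaklyRegular_congr (LinearMap.quotKerEquivOfSurjective _ hf) l).2 h'

set_option maxHeartbeats 1000000 in
lemma ci_fibre {R k ℓ B C A B' E : Type u} [CommRing R] [Field k] [Field ℓ] [CommRing B] [CommRing C]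
    [CommRing A] [CommRing B'] [CommRing E] [IsLocalRing E] [IsLocalRing A] [IsLocalRing B'] [IsLocalRing B] [IsLocalRing C]
    [IsNoetherianRing E] {n : ℕ}
    [Algebra k C] [Algebra k ℓ] [Algebra R B] [Algebra.EssFiniteType k ℓ]
    [Algebra (MvPolynomial (Fin n) R) A] [Algebra (MvPolynomial (Fin n) B) B'] 
    (rk : R →+* k) (hrks : Function.Surjective rk) (mkC : B →+* C) (hmkC : Function.Surjective mkC)
    (hkC : ∀ a, mkC (algebraMap R B a) = algebraMap k C (rk a))
    (hkerC : RingHom.ker mkC = (RingHom.ker rk).map (algebraMap R B))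
    (p : Ideal (MvPolynomial (Fin n) R)) [p.IsPrime] [IsLocalization.AtPrime A p]
    (q : Ideal (MvPolynomial (Fin n) B)) [q.IsPrime] [IsLocalization.AtPrime B' q]
    (ι : A →+* B') (hι : ∀ f, ι (algebraMap (MvPolynomial (Fin n) R) A f) = algebraMap (MvPolynomial (Fin n) B) B' (MvPolynomial.map (algebraMap R B) f))
    (hιloc : IsLocalHom ι)
    (r : A →+* ℓ) (hr : Function.Surjective r) (hrker : RingHom.ker r = maximalIdeal A)
    (hrk : ∀ a, r (algebraMap (MvPolynomial (Fin n) R) A (MvPolynomial.C a)) = algebraMap k ℓ (rk a))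
    (mkE : B' →+* E) (hmkE : Function.Surjective mkE) 
    (hker : RingHom.ker mkE = (RingHom.ker r).map ι)
    (b : Fin n → B) (evb : MvPolynomial (Fin n) B →ₐ[B] B) (hevb : evb = MvPolynomial.aeval b)
    (hq : q = (maximalIdeal B).comap evb)
    (ε : B' →+* B) (hε : ∀ f, ε (algebraMap (MvPolynomial (Fin n) B) B' f) = evb f)
    (hreg : GeneratedByRegularSequence C (maximalIdeal C))
    (hsep : IsSeparableFieldExtension k ℓ) :
    ∃ l0 : List B', IsWeaklyRegular E (l0.map mkE) ∧ Ideal.ofList (l0.map mkE) = maximalIdeal E := by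
  have hεs : Function.Surjective ε := fun c => ⟨algebraMap (MvPolynomial (Fin n) B) B' (MvPolynomial.C c), by rw [hε]; simp [hevb]⟩
  have hεloc : IsLocalHom ε := IsLocalHom.of_surjective _ hεs
  have hmkCloc : IsLocalHom mkC := IsLocalHom.of_surjective _ hmkC
  have hmkEloc : IsLocalHom mkE := IsLocalHom.of_surjective mkE hmkE
  -- maps to E
  have hαker : RingHom.ker mkC ≤ RingHom.ker (mkE.comp ((algebraMap (MvPolynomial (Fin n) B) B').comp MvPolynomial.C)) := by
    rw [hkerC, Ideal.map_le_iff_le_comap]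
    intro a ha
    rw [Ideal.mem_comap, RingHom.mem_ker]
    simp only [RingHom.comp_apply]
    rw [← MvPolynomial.map_C, ← hι, ← RingHom.mem_ker, hker]
    refine Ideal.mem_map_of_mem _ ?_
    rw [RingHom.mem_ker, hrk, (RingHom.mem_ker).1 ha, map_zero]
  let α : C →+* E := RingHom.liftOfSurjective mkC hmkC ⟨_, hαker⟩
  have hα : ∀ c, α (mkC c) = mkE (algebraMap (MvPolynomial (Fin n) B) B' (MvPolynomial.C c)) := fun c => RingHom.liftOfRightInverse_comp_apply _ _ _ ⟨_, hαker⟩ c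
  have hβker : RingHom.ker r ≤ RingHom.ker (mkE.comp ι) := by
    intro a ha
    rw [RingHom.mem_ker, RingHom.comp_apply, ← RingHom.mem_ker, hker]
    exact Ideal.mem_map_of_mem _ ha
  let β : ℓ →+* E := RingHom.liftOfSurjective r hr ⟨mkE.comp ι, hβker⟩
  have hβ : ∀ a, β (r a) = mkE (ι a) := fun y => RingHom.liftOfRightInverse_comp_apply _ _ _ ⟨mkE.comp ι, hβker⟩ y
  letI : Algebra (k) E := (α.comp (algebraMap k C)).toAlgebra
  let αa : C →ₐ[k] E := { α with commutes' := fun _ => rfl }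
  let βa : ℓ →ₐ[k] E := { β with 
    commutes' := by
      intro a
      obtain ⟨a, rfl⟩ := hrks a
      change β (algebraMap k ℓ (rk a)) = α (algebraMap k C (rk a))
      rw [← hrk, hβ, ← hkC, hα, hι, MvPolynomial.map_C] }
  let θ : C ⊗[k] ℓ →+* E := (Algebra.TensorProduct.productMap αa βa).toRingHom
  have hθα : ∀ c, θ (c ⊗ₜ 1) = α c := fun c => by
    change Algebra.TensorProduct.productMap αa βa (c ⊗ₜ 1) = αa c
    simp
  have hθβ : ∀ c, θ (1 ⊗ₜ c) = β c := fun c => by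
    change Algebra.TensorProduct.productMap αa βa (1 ⊗ₜ c) = βa c
    simp
  have hθ : θ.Flat := by
    refine theta_flat (R := R) (A := A) (B' := B') rk mkC hmkC hkC p q ι hι r hr hrk mkE hmkE ?_ θ ?_ ?_
    · exact hker
    · intro c; rw [hθα, hα]
    · intro a; rw [hθβ, hβ]
  -- residue field
  have hgkker : RingHom.ker r ≤ RingHom.ker ((residue C).comp (mkC.comp (ε.comp ι))) := by
    intro a ha
    rw [hrker] at ha
    rw [RingHom.mem_ker, RingHom.comp_apply, residue_eq_zero_iff, mem_maximalIdeal, mem_nonunits_iff, 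
      RingHom.comp_apply, isUnit_map_iff, RingHom.comp_apply, isUnit_map_iff, isUnit_map_iff]
    exact ha
  let gk : ℓ →+* ResidueField C := RingHom.liftOfSurjective r hr ⟨_, hgkker⟩
  have hgk : ∀ a, gk (r a) = residue C (mkC (ε (ι a))) := fun y => RingHom.liftOfRightInverse_comp_apply _ _ _ ⟨_, hgkker⟩ y
  obtain ⟨d, t, ht, hts⟩ := exists_sep_basis _ _ hsep
  choose bs hbs using fun i => residue_surjective (R := C) (gk (t i))
  obtain ⟨rs, hrs, hrs'⟩ := hreg
  have hwr := wr_tensor θ hθ t ht bs rs hrs.1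
  have hgen := gen_tensor θ t hts gk ?_ bs hbs rs hrs' ?_ ?_
  · set L := ((List.finRange d).map (fun i => θ (1 ⊗ₜ t i) - θ (bs i ⊗ₜ 1)) ++ 
      rs.map (fun r => θ (r ⊗ₜ 1))) with hL
    obtain ⟨l0, hl0⟩ := List.map_surjective_iff.2 hmkE L
    refine ⟨l0, ?_, ?_⟩
    · rw [hl0]; exact hwr
    · rw [hl0]; exact hgen
  · intro a
    obtain ⟨a, rfl⟩ := hrks a
    rw [← hrk, hgk, hι, hε, ← hkC]
    simp [hevb]
  · intro c l hcl
    obtain ⟨a, rfl⟩ := hr l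
    obtain ⟨c, rfl⟩ := hmkC c
    rw [hθα, hθβ, hα, hβ, ← map_sub, mem_maximalIdeal, mem_nonunits_iff, isUnit_map_iff, 
      ← isUnit_map_iff ε, ← isUnit_map_iff mkC, ← mem_nonunits_iff, ← mem_maximalIdeal,
      ← residue_eq_zero_iff, map_sub, map_sub, map_sub, ← hgk, hε, sub_eq_zero, ← hcl]
    simp [hevb]
  · intro I hI1 hI2
    have h1 : maximalIdeal B' ≤ I.comap mkE := by
      rw [← IsLocalization.AtPrime.map_eq_maximalIdeal q B', Ideal.map_le_iff_le_comap]
      intro f hf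
      have h3 : f - MvPolynomial.C (evb f) ∈ Ideal.ofList ((List.finRange n).map (fun i => MvPolynomial.X i - MvPolynomial.C (b i))) := by
        have h4 := (wr_eval b [] (IsWeaklyRegular.nil _ _)).2
        simp only [List.map_nil, List.append_nil, Ideal.ofList_nil] at h4
        rw [h4]
        simp [hevb]
      have h5 : Ideal.ofList ((List.finRange n).map (fun i => MvPolynomial.X i - MvPolynomial.C (b i))) ≤ 
          (I.comap mkE).comap (algebraMap (MvPolynomial (Fin n) B) B') := by
        refine Ideal.span_le.2 ?_
        intro y hy
        obtain ⟨i, -, rfl⟩ := List.mem_map.1 hy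
        have h6 := hI2 (mkC (b i)) (r (algebraMap (MvPolynomial (Fin n) R) A (MvPolynomial.X i))) (by
          rw [hgk, hι, hε]
          simp [hevb])
        rw [hθα, hθβ, hα, hβ, hι, MvPolynomial.map_X, ← map_sub, ← map_sub] at h6
        exact h6
      have h7 : algebraMap (MvPolynomial (Fin n) B) B' (MvPolynomial.C (evb f)) ∈ I.comap mkE := by
        have h6 := hI1 (mkC (evb f)) (by
          rw [mem_maximalIdeal, mem_nonunits_iff, isUnit_map_iff]
          rw [hq] at hf
          exact hf)
        rw [hθα, hα] at h6
        exact h6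
      have h8 := add_mem (h5 h3) h7
      have : f = f - MvPolynomial.C (evb f) + MvPolynomial.C (evb f) := by ring
      rw [this]
      exact h8
    intro e he
    obtain ⟨y, rfl⟩ := hmkE e
    refine h1 (?_ : y ∈ maximalIdeal B')
    rw [mem_maximalIdeal, mem_nonunits_iff, isUnit_map_iff] at he
    exact he

set_option maxHeartbeats 2000000 in
theorem ci_pres {R S B T : Type u} [CommRing R] [CommRing S] [CommRing B] [CommRing T]
    [IsLocalRing R] [IsLocalRing S] [IsLocalRing B] [IsLocalRing T]
    [IsNoetherianRing R] [IsNoetherianRing B] [Algebra R S] [IsLocalHom (algebraMap R S)]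
    [Algebra R B] [IsLocalHom (algebraMap R B)] [Module.Flat R B]
    [Algebra S T] [Module.Flat S T] [Algebra.EssFiniteType R S]
    (hmT : maximalIdeal T = (maximalIdeal S).map (algebraMap S T))
    (g : B →+* T) (hg : Function.Surjective g)
    (hgR : ∀ a, g (algebraMap R B a) = algebraMap S T (algebraMap R S a))
    (hgker : GeneratedByRegularSequence B (RingHom.ker g))
    [IsLocalRing (B ⧸ (maximalIdeal R).map (algebraMap R B))]
    (hreg : GeneratedByRegularSequence (B ⧸ (maximalIdeal R).map (algebraMap R B)) (maximalIdeal _))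
    (hsep : IsSeparableFieldExtension (ResidueField R) (ResidueField S))
    {n : ℕ} (x : Fin n → S) (p : Ideal (MvPolynomial (Fin n) R)) [p.IsPrime]
    (hp : p = (maximalIdeal S).comap (MvPolynomial.aeval x : MvPolynomial (Fin n) R →ₐ[R] S))
    (σ : Localization.AtPrime p →+* S) 
    (hσ : ∀ f, σ (algebraMap _ _ f) = (MvPolynomial.aeval x : MvPolynomial (Fin n) R →ₐ[R] S) f)
    (hσs : Function.Surjective σ) : GeneratedByRegularSequence (Localization.AtPrime p) (RingHom.ker σ) := by
  -- locality
  have hSTmem : ∀ s, algebraMap S T s ∈ maximalIdeal T ↔ s ∈ maximalIdeal S := by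
    intro s
    constructor
    · intro h
      by_contra hs
      rw [mem_maximalIdeal, mem_nonunits_iff, not_not] at hs
      exact h (hs.map _)
    · intro h
      rw [hmT]; exact Ideal.mem_map_of_mem _ h
  have hgloc : IsLocalHom g := IsLocalHom.of_surjective _ hg
  have hgmem : ∀ b, g b ∈ maximalIdeal T ↔ b ∈ maximalIdeal B := by
    intro b
    simp only [mem_maximalIdeal, mem_nonunits_iff, isUnit_map_iff]
  choose b hb using fun i => hg (algebraMap S T (x i))
  let evb : MvPolynomial (Fin n) B →ₐ[B] B := MvPolynomial.aeval b
  let q : Ideal (MvPolynomial (Fin n) B) := (maximalIdeal B).comap evb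
  have hq : q.IsPrime := Ideal.comap_isPrime _ _
  have hgev : ∀ f, g (evb (MvPolynomial.map (algebraMap R B) f)) = algebraMap S T (MvPolynomial.aeval x f) := by
    intro f
    have : (g.comp evb.toRingHom).comp (MvPolynomial.map (algebraMap R B)) = 
        (algebraMap S T).comp (MvPolynomial.aeval x : MvPolynomial (Fin n) R →ₐ[R] S).toRingHom := by
      apply MvPolynomial.ringHom_ext
      · intro a; simp [evb, hgR]
      · intro i; simp [evb, hb]
    exact congr($this f)
  have hpq : p = q.comap (MvPolynomial.map (algebraMap R B)) := by
    ext f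
    rw [hp, Ideal.mem_comap, Ideal.mem_comap, Ideal.mem_comap, ← hgmem, hgev, hSTmem]
  let A := Localization.AtPrime p
  let B' := Localization.AtPrime q
  let ι : A →+* B' := Localization.localRingHom p q _ hpq
  have hιloc : IsLocalHom ι := Localization.isLocalHom_localRingHom _ _ _ _
  have hι : ∀ f, ι (algebraMap _ A f) = algebraMap _ B' (MvPolynomial.map (algebraMap R B) f) := fun f => 
    Localization.localRingHom_to_map _ _ _ _ _
  have hιflat : ι.Flat := by
    apply RingHom.Flat.localRingHom
    exact map_flat n
  have hevu : ∀ y : q.primeCompl, IsUnit (evb y) := by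
    rintro ⟨y, hy⟩
    by_contra h
    exact hy h
  let ε : B' →+* B := IsLocalization.lift hevu
  have hε : ∀ f, ε (algebraMap _ B' f) = evb f := fun f => IsLocalization.lift_eq hevu f
  have hεs : Function.Surjective ε := fun c => ⟨algebraMap _ B' (MvPolynomial.C c), by rw [hε]; simp [evb]⟩
  have hεloc : IsLocalHom ε := IsLocalHom.of_surjective _ hεs
  let π : B' →+* T := g.comp ε
  have hπs : Function.Surjective π := hg.comp hεs
  have hπι : ∀ a, π (ι a) = algebraMap S T (σ a) := by
    intro a
    have : π.comp ι = (algebraMap S T).comp σ := by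
      apply IsLocalization.ringHom_ext p.primeCompl
      ext f
      · simp only [π, RingHom.comp_apply, hι, hε, hgev]
        exact congrArg _ (hσ _).symm
      · simp only [π, RingHom.comp_apply, hι, hε, hgev]
        exact congrArg _ (hσ _).symm
    exact congr($this a)
  letI : Algebra A B' := ι.toAlgebra
  haveI : IsLocalHom (algebraMap A B') := hιloc
  haveI : Module.Flat A B' := hιflat
  have hsurjA : maximalIdeal S ≤ (maximalIdeal A).map σ := by
    intro s hs
    obtain ⟨a, rfl⟩ := hσs s
    refine Ideal.mem_map_of_mem _ ?_
    rw [mem_maximalIdeal, mem_nonunits_iff]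
    intro ha
    exact hs (ha.map σ)
  have hmax : maximalIdeal B' ≤ (maximalIdeal A).map (algebraMap A B') ⊔ RingHom.ker π := by
    intro y hy
    have hπy : π y ∈ ((maximalIdeal A).map (algebraMap A B')).map π := by
      have h1 : π y ∈ maximalIdeal T := (hgmem _).2 (by
        rw [mem_maximalIdeal, mem_nonunits_iff, isUnit_map_iff]; exact hy)
      rw [hmT] at h1
      have h2 : (maximalIdeal S).map (algebraMap S T) ≤ ((maximalIdeal A).map (algebraMap A B')).map π := by
        rw [Ideal.map_map]
        have h3 : π.comp (algebraMap A B') = (algebraMap S T).comp σ := by ext a; exact hπι a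
        rw [h3, ← Ideal.map_map]
        exact Ideal.map_mono hsurjA
      exact h2 h1
    obtain ⟨z, hz, hzy⟩ := (Ideal.mem_map_iff_of_surjective π hπs).1 hπy
    rw [← sub_add_cancel y z, add_comm]
    refine Submodule.add_mem_sup hz ?_
    rw [RingHom.mem_ker, map_sub, hzy, sub_self]
  have hJ : GeneratedByRegularSequence B' (RingHom.ker π) := by
    obtain ⟨fs, hfs, hfs'⟩ := hgker
    obtain ⟨h1, h2⟩ := wr_eval b fs hfs.1
    refine gen_localize q.primeCompl (g.comp evb.toRingHom) π (fun f => ?_) _ h1 ?_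
    · simp only [π, RingHom.comp_apply, hε]; rfl
    · rw [h2]
      change Ideal.comap _ (Ideal.span _) = _
      rw [hfs']; rfl
  -- the fibre
  let C := B ⧸ (maximalIdeal R).map (algebraMap R B)
  let kC : ResidueField R →+* C := Ideal.Quotient.lift (maximalIdeal R) ((Ideal.Quotient.mk _).comp (algebraMap R B)) 
    (fun a ha => Ideal.Quotient.eq_zero_iff_mem.2 (Ideal.mem_map_of_mem _ ha))
  letI : Algebra (ResidueField R) C := kC.toAlgebra
  have hnB : (maximalIdeal A).map (algebraMap A B') ≤ maximalIdeal B' := ((local_hom_TFAE ι).out 0 2).1 hιloc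
  haveI : Nontrivial (B' ⧸ (maximalIdeal A).map (algebraMap A B')) := Ideal.Quotient.nontrivial_iff.2 
    (fun h => (maximalIdeal.isMaximal B').ne_top (top_le_iff.1 (h ▸ hnB)))
  haveI : IsLocalRing (B' ⧸ (maximalIdeal A).map (algebraMap A B')) := 
    IsLocalRing.of_surjective' (Ideal.Quotient.mk _) Ideal.Quotient.mk_surjective
  have hσloc : IsLocalHom σ := IsLocalHom.of_surjective _ hσs
  have hrker : RingHom.ker ((residue S).comp σ) = maximalIdeal A := by
    ext a
    rw [RingHom.mem_ker, RingHom.comp_apply, residue_eq_zero_iff, mem_maximalIdeal, mem_nonunits_iff, isUnit_map_iff]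
    rfl
  haveI : Algebra.EssFiniteType (ResidueField R) (ResidueField S) := by
    have h1 : Algebra.FiniteType S (ResidueField S) := 
      Algebra.FiniteType.of_surjective (Algebra.ofId S (ResidueField S)) residue_surjective
    have h2 : Algebra.EssFiniteType R (ResidueField S) := Algebra.EssFiniteType.comp R S _
    exact Algebra.EssFiniteType.of_comp R _ _
  obtain ⟨l0, h1, h2⟩ := ci_fibre (R := R) (k := ResidueField R) (ℓ := ResidueField S) (B := B) (C := C) (A := A) 
    (B' := B') (E := B' ⧸ (maximalIdeal A).map (algebraMap A B')) (n := n) (residue R) residue_surjective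
    (Ideal.Quotient.mk _) Ideal.Quotient.mk_surjective (fun a => rfl) (by rw [Ideal.mk_ker, IsLocalRing.ker_residue])
    p q ι hι hιloc ((residue S).comp σ) (residue_surjective.comp hσs) hrker (fun a => by
      change residue S (σ (algebraMap _ _ (MvPolynomial.C a))) = _
      rw [hσ, MvPolynomial.aeval_C]; rfl) (Ideal.Quotient.mk _) Ideal.Quotient.mk_surjective 
    (by rw [hrker]; exact Ideal.mk_ker) b evb rfl rfl ε hε hreg hsep
  refine abstract_ci σ hσs π hπs hπι hmax hJ l0 (wr_quot_of _ Ideal.Quotient.mk_surjective _ Ideal.mk_ker _ h1) ?_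
  have h3 : Ideal.ofList l0 ⊔ (maximalIdeal A).map (algebraMap A B') = (maximalIdeal (B' ⧸ (maximalIdeal A).map (algebraMap A B'))).comap (Ideal.Quotient.mk ((maximalIdeal A).map (algebraMap A B'))) := by
    rw [← h2, ← Ideal.map_ofList, Ideal.comap_map_of_surjective _ Ideal.Quotient.mk_surjective]
    congr 1
    exact Ideal.mk_ker.symm
  rw [h3]
  have hloc : IsLocalHom (Ideal.Quotient.mk ((maximalIdeal A).map (algebraMap A B'))) := IsLocalHom.of_surjective _ Ideal.Quotient.mk_surjective
  ext y
  rw [Ideal.mem_comap, mem_maximalIdeal, mem_maximalIdeal, mem_nonunits_iff, mem_nonunits_iff, isUnit_map_iff]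

end P11


section P12
open RingTheory.Sequence

lemma exists_pres (R S : Type u) [CommRing R] [CommRing S] [Algebra R S] [Algebra.EssFiniteType R S] :
    ∃ (n : ℕ) (x : Fin n → S), ∀ s : S, ∃ f h : MvPolynomial (Fin n) R,
      IsUnit (MvPolynomial.aeval x h) ∧ s * MvPolynomial.aeval x h = MvPolynomial.aeval x f := by
  obtain ⟨τ, hτ⟩ := (Algebra.essFiniteType_iff R S).1 inferInstance
  refine ⟨τ.card, fun i => (τ.equivFin.symm i : S), fun s => ?_⟩
  have hr : Set.range (fun i => (τ.equivFin.symm i : S)) = (τ : Set S) := by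
    have : (fun i => (τ.equivFin.symm i : S)) = Subtype.val ∘ τ.equivFin.symm := rfl
    rw [this, τ.equivFin.symm.surjective.range_comp]
    simp
  obtain ⟨t, ht, htu, hst⟩ := hτ s
  rw [← hr, Algebra.adjoin_range_eq_range_aeval] at ht hst
  obtain ⟨h, rfl⟩ := ht
  obtain ⟨f, hf⟩ := hst
  exact ⟨f, h, htu, hf.symm⟩

theorem ci_pres' (R S : Type u) [CommRing R] [CommRing S]
    [IsLocalRing R] [IsLocalRing S] [IsNoetherianRing R] [IsNoetherianRing S]
    [Algebra R S] [IsLocalHom (algebraMap R S)] [Algebra.EssFiniteType R S]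
    (hci : IsCIAt R S (algebraMap R S) (maximalIdeal S))
    (hsep : IsSeparableFieldExtension (ResidueField R) (ResidueField S)) :
    ∃ (n : ℕ) (x : Fin n → S) (p : Ideal (MvPolynomial (Fin n) R)) (_ : p.IsPrime) 
      (σ : Localization.AtPrime p →+* S), 
      p = (maximalIdeal S).comap (MvPolynomial.aeval x : MvPolynomial (Fin n) R →ₐ[R] S) ∧
      (∀ s : S, ∃ f h : MvPolynomial (Fin n) R,
      IsUnit (MvPolynomial.aeval x h) ∧ s * MvPolynomial.aeval x h = MvPolynomial.aeval x f) ∧ 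
      (∀ f, σ (algebraMap _ _ f) = (MvPolynomial.aeval x : MvPolynomial (Fin n) R →ₐ[R] S) f) ∧
      Function.Surjective σ ∧ GeneratedByRegularSequence (Localization.AtPrime p) (RingHom.ker σ) := by
  obtain ⟨n, x, hx⟩ := exists_pres R S
  set p := (maximalIdeal S).comap (MvPolynomial.aeval x : MvPolynomial (Fin n) R →ₐ[R] S) with hp
  have hpp : p.IsPrime := Ideal.comap_isPrime _ _
  have hu : ∀ y : p.primeCompl, IsUnit ((MvPolynomial.aeval x : MvPolynomial (Fin n) R →ₐ[R] S).toRingHom y) := by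
    rintro ⟨y, hy⟩
    by_contra h
    exact hy h
  have hσ : ∀ f, (IsLocalization.lift hu : Localization.AtPrime p →+* S) (algebraMap _ _ f) = (MvPolynomial.aeval x : MvPolynomial (Fin n) R →ₐ[R] S) f :=
    fun f => IsLocalization.lift_eq hu f
  have hs : Function.Surjective (IsLocalization.lift hu : Localization.AtPrime p →+* S) := by
    intro s
    obtain ⟨f, h, hh, hs⟩ := hx s
    have hh' : h ∈ p.primeCompl := fun h' => h' hh
    refine ⟨IsLocalization.mk' _ f ⟨h, hh'⟩, ?_⟩
    rw [IsLocalization.lift_mk'_spec, mul_comm]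
    exact hs.symm
  refine ⟨n, x, p, hpp, IsLocalization.lift hu, rfl, hx, hσ, hs, ?_⟩
  obtain ⟨B, _, f, g, ⟨hgf, hN, ⟨hB, -⟩, ⟨hfl, hflat, hNB, hBl, hreg⟩, hg, hgl⟩, hker⟩ := hci
  letI : Algebra R B := f.toAlgebra
  haveI : IsLocalHom (algebraMap R B) := hfl
  haveI : Module.Flat R B := hflat
  letI : IsLocalRing (B ⧸ (maximalIdeal R).map (algebraMap R B)) := hBl
  exact ci_pres (R := R) (S := S) (B := B) (T := AdicCompletion (maximalIdeal S) S) 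
    AdicCompletion.maximalIdeal_eq_map g hg (fun a => congr($hgf a)) hker hreg hsep x p hp _ hσ hs

end P12


section P13

lemma localized_descend {P D N W : Type u} [CommRing P] [CommRing D] [AddCommGroup N] [AddCommGroup W]
    [Module D N] [Module D W] [Module P N] [Module P W] (χ : P →+* D)
    (hN : ∀ (a : P) (y : N), a • y = χ a • y) (hW : ∀ (a : P) (y : W), a • y = χ a • y)
    (q : Ideal D) [q.IsPrime] (q2 : Ideal P) [q2.IsPrime] (hq2 : q2 = q.comap χ) 
    (f : N →ₗ[D] W) [IsLocalizedModule q.primeCompl f] (f' : N →ₗ[P] W) (hf' : ∀ y, f' y = f y)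
    (hfrac : ∀ d, ∃ h a, IsUnit (χ h) ∧ χ h * d = χ a) : IsLocalizedModule q2.primeCompl f' := by
  have hmem : ∀ a, a ∉ q2 ↔ χ a ∉ q := by
    intro a; rw [hq2, Ideal.mem_comap]
  have hkey : ∀ d ∉ q, ∃ h a, IsUnit (χ h) ∧ χ h * d = χ a ∧ a ∉ q2 := by
    intro d hd
    obtain ⟨h, a, hu, e⟩ := hfrac d
    refine ⟨h, a, hu, e, ?_⟩
    rw [hmem, ← e]
    intro h'
    rcases Ideal.IsPrime.mem_or_mem ‹_› h' with h1 | h1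
    · exact Ideal.IsPrime.ne_top ‹q.IsPrime› (Ideal.eq_top_of_isUnit_mem _ h1 hu)
    · exact hd h1
  constructor
  · rintro ⟨a, ha⟩
    have := IsLocalizedModule.map_units f (⟨χ a, (hmem a).1 ha⟩ : q.primeCompl)
    rw [Module.End.isUnit_iff] at this ⊢
    convert this using 1
    ext y
    exact hW a y
  · intro w
    obtain ⟨⟨y, t⟩, e⟩ := IsLocalizedModule.surj q.primeCompl f w
    obtain ⟨h, a, hu, e2, ha⟩ := hkey t t.2
    refine ⟨⟨h • y, ⟨a, ha⟩⟩, ?_⟩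
    change a • w = f' (h • y)
    change (t : D) • w = f y at e
    rw [hf', hW, ← e2, mul_smul, e, hN, map_smul]
  · intro y1 y2 h12
    rw [hf', hf'] at h12
    obtain ⟨t, ht⟩ := IsLocalizedModule.exists_of_eq (S := q.primeCompl) (f := f) h12
    obtain ⟨h, a, hu, e2, ha⟩ := hkey t t.2
    refine ⟨⟨a, ha⟩, ?_⟩
    change a • y1 = a • y2
    change (t : D) • y1 = (t : D) • y2 at ht
    rw [hN, hN, ← e2, mul_smul, mul_smul, ht]

lemma tensor_equiv (R S R' M : Type u) [CommRing R] [CommRing S] [CommRing R'] [Algebra R S] [Algebra R R']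
    [AddCommGroup M] [Module R M] [Module S M] [IsScalarTower R S M] :
    ∃ e : (S ⊗[R] R') ⊗[S] M ≃+ R' ⊗[R] M, ∀ s r m, e ((s ⊗ₜ r) ⊗ₜ m) = r ⊗ₜ (s • m) := by
  let e1 := TensorProduct.comm S (S ⊗[R] R') M
  let e2 := TensorProduct.AlgebraTensorModule.cancelBaseChange R S S M R'
  let e3 := TensorProduct.comm R M R'
  refine ⟨(e1.toAddEquiv.trans e2.toAddEquiv).trans e3.toAddEquiv, ?_⟩
  intro s r m
  simp [e1, e2, e3]

theorem fd_part {Q R R' S S' M Q2 : Type u} [CommRing Q] [CommRing R] [CommRing R'] [CommRing S] [CommRing S']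
    [CommRing Q2] [Algebra R S] [Algebra R R'] [AddCommGroup M] [Module R M] [Module S M] [IsScalarTower R S M]
    [Algebra S S'] [Algebra (S ⊗[R] R') S'] [IsScalarTower S (S ⊗[R] R') S']
    (q : Ideal (S ⊗[R] R')) [q.IsPrime] [IsLocalization.AtPrime S' q] {n : ℕ}
    (g : Q →+* R')
    (χ : MvPolynomial (Fin n) Q →+* S ⊗[R] R') (hχ : ∀ c, χ (MvPolynomial.C c) = 1 ⊗ₜ g c)
    (hfrac : ∀ d, ∃ h a, IsUnit (χ h) ∧ χ h * d = χ a)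
    (q2 : Ideal (MvPolynomial (Fin n) Q)) [q2.IsPrime] (hq2 : q2 = q.comap χ)
    [Algebra (MvPolynomial (Fin n) Q) Q2] [IsLocalization.AtPrime Q2 q2]
    (γ : Q2 →+* S') (hγ : ∀ f, γ (algebraMap (MvPolynomial (Fin n) Q) Q2 f) = algebraMap (S ⊗[R] R') S' (χ f))
    (hfd : letI : Module Q (R' ⊗[R] M) := Module.compHom _ g; FlatDimFinite Q (R' ⊗[R] M)) :
    letI : Module Q2 (S' ⊗[S] M) := Module.compHom _ γ; FlatDimFinite Q2 (S' ⊗[S] M) := by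
  letI i1 : Module Q (R' ⊗[R] M) := Module.compHom _ g
  letI i2 : Module Q2 (S' ⊗[S] M) := Module.compHom _ γ
  obtain ⟨a, ha⟩ := hfd
  letI i3 : Module (MvPolynomial (Fin n) Q) ((S ⊗[R] R') ⊗[S] M) := Module.compHom _ χ
  letI i4 : Module Q ((S ⊗[R] R') ⊗[S] M) := Module.compHom _ (χ.comp MvPolynomial.C)
  letI i5 : Module (MvPolynomial (Fin n) Q) (S' ⊗[S] M) := Module.compHom _ ((algebraMap (S ⊗[R] R') S').comp χ)
  haveI : IsScalarTower Q (MvPolynomial (Fin n) Q) ((S ⊗[R] R') ⊗[S] M) := by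
    refine IsScalarTower.of_algebraMap_smul ?_
    intro c y
    rfl
  haveI : IsScalarTower (MvPolynomial (Fin n) Q) Q2 (S' ⊗[S] M) := by
    refine IsScalarTower.of_algebraMap_smul ?_
    intro c y
    change γ (algebraMap _ _ c) • y = (algebraMap (S ⊗[R] R') S' (χ c)) • y
    rw [hγ]
  obtain ⟨e, he⟩ := tensor_equiv R S R' M
  have h1 : FlatDimLE Q a ((S ⊗[R] R') ⊗[S] M) := by
    refine FlatDimLE.congr (LinearEquiv.symm { e with map_smul' := ?_ }) ha
    intro c y
    change e (χ (MvPolynomial.C c) • y) = g c • e y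
    rw [hχ]
    induction y using TensorProduct.induction_on with
    | zero => simp
    | add x y hx hy => simp only [smul_add, map_add, hx, hy]
    | tmul d m =>
      rw [TensorProduct.smul_tmul', smul_eq_mul]
      induction d using TensorProduct.induction_on with
      | zero => simp
      | add x y hx hy => simp only [mul_add, TensorProduct.add_tmul, map_add, hx, hy, smul_add]
      | tmul s r =>
        rw [Algebra.TensorProduct.tmul_mul_tmul, he, he, one_mul, TensorProduct.smul_tmul', smul_eq_mul]
  have h2 := FlatDimLE.mvPolynomial n h1
  let f : (S ⊗[R] R') ⊗[S] M →ₗ[S ⊗[R] R'] S' ⊗[S] M := 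
    TensorProduct.AlgebraTensorModule.lift 
      (LinearMap.toSpanSingleton (S ⊗[R] R') (M →ₗ[S] S' ⊗[S] M) (TensorProduct.mk S S' M 1))
  have hf : ∀ m, f (1 ⊗ₜ m) = 1 ⊗ₜ m := by
    intro m
    simp [f]
  have hb : IsBaseChange S' f := by
    refine IsBaseChange.of_comp (R := S) (f := TensorProduct.mk S (S ⊗[R] R') M 1) (TensorProduct.isBaseChange S M (S ⊗[R] R')) ?_
    convert TensorProduct.isBaseChange S M S' using 1
    ext m
    exact hf m
  haveI hl : IsLocalizedModule q.primeCompl f := (isLocalizedModule_iff_isBaseChange q.primeCompl S' f).2 hb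
  let f' : (S ⊗[R] R') ⊗[S] M →ₗ[MvPolynomial (Fin n) Q] S' ⊗[S] M := 
    { f.toAddMonoidHom with map_smul' := fun c y => (f.map_smul (χ c) y).trans (algebraMap_smul S' (χ c) (f y)).symm }
  haveI hl' : IsLocalizedModule q2.primeCompl f' := localized_descend χ (fun _ _ => rfl) (fun a y => algebraMap_smul S' (χ a) y) q q2 hq2 f f' 
    (fun _ => rfl) hfrac
  haveI : Module.Flat (MvPolynomial (Fin n) Q) Q2 := IsLocalization.flat Q2 q2.primeCompl
  exact ⟨_, FlatDimLE.isBaseChange f' ((isLocalizedModule_iff_isBaseChange q2.primeCompl Q2 f').1 hl') h2⟩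

end P13


section P14
open RingTheory.Sequence

lemma pres_T {R R' S S' A T : Type u} [CommRing R] [CommRing R'] [CommRing S] [CommRing S']
    [CommRing A] [CommRing T] [IsLocalRing T] [IsLocalRing S'] [Algebra R S] [Algebra R R'] 
    [Algebra (S ⊗[R] R') S'] (q : Ideal (S ⊗[R] R')) [q.IsPrime] [IsLocalization.AtPrime S' q] {n : ℕ}
    (x : Fin n → S)
    [Algebra (MvPolynomial (Fin n) R) A] (p : Ideal (MvPolynomial (Fin n) R)) [p.IsPrime] [IsLocalization.AtPrime A p]
    (σ : A →+* S) (hσs : Function.Surjective σ) 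
    (hσ : ∀ f, σ (algebraMap (MvPolynomial (Fin n) R) A f) = (MvPolynomial.aeval x : MvPolynomial (Fin n) R →ₐ[R] S) f)
    (χ : MvPolynomial (Fin n) R' →+* S ⊗[R] R') (hχC : ∀ c, χ (MvPolynomial.C c) = 1 ⊗ₜ c) 
    (hχX : ∀ i, χ (MvPolynomial.X i) = x i ⊗ₜ 1)
    (q1 : Ideal (MvPolynomial (Fin n) R')) [q1.IsPrime] (hq1 : q1 = q.comap χ)
    [Algebra (MvPolynomial (Fin n) R') T] [IsLocalization.AtPrime T q1]
    (ι : A →+* T) (hι : ∀ f, ι (algebraMap (MvPolynomial (Fin n) R) A f) = algebraMap (MvPolynomial (Fin n) R') T (MvPolynomial.map (algebraMap R R') f))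
    (ψ : T →+* S') (hψ : ∀ f, ψ (algebraMap (MvPolynomial (Fin n) R') T f) = algebraMap (S ⊗[R] R') S' (χ f)) :
    Function.Surjective ψ ∧ RingHom.ker ψ = (RingHom.ker σ).map ι := by
  have hψι : ∀ a, ψ (ι a) = algebraMap (S ⊗[R] R') S' (σ a ⊗ₜ 1) := by
    intro a
    have : ψ.comp ι = ((algebraMap (S ⊗[R] R') S').comp (Algebra.TensorProduct.includeLeft : S →ₐ[R] S ⊗[R] R').toRingHom).comp σ := by
      apply IsLocalization.ringHom_ext p.primeCompl
      apply MvPolynomial.ringHom_ext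
      · intro c
        simp only [RingHom.comp_apply, hι, hψ, hσ, MvPolynomial.map_C, hχC, MvPolynomial.aeval_C]
        congr 1
        simp only [AlgHom.toRingHom_eq_coe, RingHom.coe_coe, Algebra.TensorProduct.includeLeft_apply]
        rw [Algebra.algebraMap_eq_smul_one, Algebra.algebraMap_eq_smul_one, TensorProduct.smul_tmul]
      · intro i
        simp only [RingHom.comp_apply, hι, hψ, hσ, MvPolynomial.map_X, hχX, MvPolynomial.aeval_X]
        rfl
    exact congr($this a)
  have hS'u : ∀ d, IsUnit (algebraMap (S ⊗[R] R') S' d) ↔ d ∉ q := by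
    intro d
    exact IsLocalization.AtPrime.isUnit_to_map_iff S' q d
  have hψloc : IsLocalHom ψ := by
    constructor
    intro t ht
    obtain ⟨⟨f, s⟩, rfl⟩ := IsLocalization.mk'_surjective q1.primeCompl t
    rw [IsLocalization.AtPrime.isUnit_mk'_iff T q1]
    intro hf
    have h1 : ψ (algebraMap (MvPolynomial (Fin n) R') T f) = ψ (IsLocalization.mk' T f s) * ψ (algebraMap (MvPolynomial (Fin n) R') T s) := by
      rw [← map_mul, IsLocalization.mk'_spec]
    have h2 : IsUnit (ψ (algebraMap _ T f)) := by
      rw [h1]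
      exact ht.mul ((IsLocalization.map_units T s).map ψ)
    rw [hψ, hS'u] at h2
    apply h2
    rw [hq1] at hf
    exact hf
  have hrange : ∀ d, algebraMap (S ⊗[R] R') S' d ∈ ψ.range := by
    intro d
    induction d using TensorProduct.induction_on with
    | zero => rw [map_zero]; exact zero_mem _
    | add x y hx hy => rw [map_add]; exact add_mem hx hy
    | tmul s r =>
      have : (s ⊗ₜ[R] r : S ⊗[R] R') = (s ⊗ₜ 1) * (1 ⊗ₜ r) := by simp
      rw [this, map_mul]
      refine mul_mem ?_ ?_
      · obtain ⟨a, rfl⟩ := hσs s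
        exact ⟨ι a, hψι a⟩
      · exact ⟨algebraMap _ T (MvPolynomial.C r), by rw [hψ, hχC]⟩
  have hψs : Function.Surjective ψ := by
    intro y
    obtain ⟨⟨d, t⟩, rfl⟩ := IsLocalization.mk'_surjective q.primeCompl y
    obtain ⟨d', hd'⟩ := hrange d
    obtain ⟨t', ht'⟩ := hrange t
    have htu : IsUnit t' := by
      apply hψloc.map_nonunit
      rw [ht', hS'u]; exact t.2
    obtain ⟨v, hv⟩ := htu
    refine ⟨d' * ↑v⁻¹, ?_⟩
    rw [IsLocalization.eq_mk'_iff_mul_eq, ← ht', ← hd', ← map_mul, ← hv, mul_assoc, Units.inv_mul, mul_one]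
  refine ⟨hψs, ?_⟩
  set J := (RingHom.ker σ).map ι with hJ
  have hJle : J ≤ RingHom.ker ψ := by
    rw [hJ, Ideal.map_le_iff_le_comap]
    intro a ha
    rw [Ideal.mem_comap, RingHom.mem_ker, hψι, (RingHom.mem_ker).1 ha, TensorProduct.zero_tmul, map_zero]
  refine le_antisymm ?_ hJle
  -- inverse map
  let ψb : T ⧸ J →+* S' := Ideal.Quotient.lift J ψ hJle
  have hψb : ∀ t, ψb (Ideal.Quotient.mk J t) = ψ t := fun t => rfl
  have hψbloc : ∀ y, IsUnit (ψb y) → IsUnit y := by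
    intro y hy
    obtain ⟨t, rfl⟩ := Ideal.Quotient.mk_surjective y
    exact (hψloc.map_nonunit t hy).map _
  let mk : T →+* T ⧸ J := Ideal.Quotient.mk J
  have hSk : RingHom.ker σ ≤ RingHom.ker (mk.comp ι) := by
    intro a ha
    exact Ideal.Quotient.eq_zero_iff_mem.2 (Ideal.mem_map_of_mem _ ha)
  let iS : S →+* T ⧸ J := RingHom.liftOfSurjective σ hσs ⟨mk.comp ι, hSk⟩
  have hiS : ∀ a, iS (σ a) = mk (ι a) := fun a => RingHom.liftOfRightInverse_comp_apply _ _ _ ⟨mk.comp ι, hSk⟩ a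
  let iR : R' →+* T ⧸ J := mk.comp ((algebraMap (MvPolynomial (Fin n) R') T).comp MvPolynomial.C)
  letI : Algebra R (T ⧸ J) := (iR.comp (algebraMap R R')).toAlgebra
  let iSa : S →ₐ[R] T ⧸ J := { iS with 
    commutes' := by
      intro a
      change iS _ = mk (algebraMap (MvPolynomial (Fin n) R') T (MvPolynomial.C (algebraMap R R' a)))
      rw [← MvPolynomial.map_C, ← hι, ← hiS, hσ, MvPolynomial.aeval_C] }
  let iRa : R' →ₐ[R] T ⧸ J := { iR with commutes' := fun a => rfl }
  let δ : S ⊗[R] R' →+* T ⧸ J := (Algebra.TensorProduct.productMap iSa iRa).toRingHom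
  have hδ1 : ∀ c, δ (c ⊗ₜ 1) = iS c := fun c => by
    change Algebra.TensorProduct.productMap iSa iRa (c ⊗ₜ 1) = iSa c
    simp
  have hδ2 : ∀ c, δ (1 ⊗ₜ c) = mk (algebraMap (MvPolynomial (Fin n) R') T (MvPolynomial.C c)) := fun c => by
    change Algebra.TensorProduct.productMap iSa iRa (1 ⊗ₜ c) = iRa c
    simp
  have hψδ : ∀ d, ψb (δ d) = algebraMap _ S' d := by
    intro d
    induction d using TensorProduct.induction_on with
    | zero => simp
    | add x y hx hy => simp only [map_add, hx, hy]
    | tmul s r =>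
      have : (s ⊗ₜ[R] r : S ⊗[R] R') = (s ⊗ₜ 1) * (1 ⊗ₜ r) := by simp
      obtain ⟨a, rfl⟩ := hσs s
      rw [this, map_mul, map_mul, map_mul, hδ1, hδ2, hiS]
      congr 1
      · exact hψι a
      · change ψ _ = _
        rw [hψ, hχC]
  have hδu : ∀ y : q.primeCompl, IsUnit (δ y) := by
    rintro ⟨y, hy⟩
    apply hψbloc
    rw [hψδ, hS'u]
    exact hy
  let δ' : S' →+* T ⧸ J := IsLocalization.lift hδu
  have hδ' : ∀ d, δ' (algebraMap _ S' d) = δ d := fun d => IsLocalization.lift_eq hδu d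
  have hfin : δ'.comp ψ = mk := by
    apply IsLocalization.ringHom_ext q1.primeCompl
    apply MvPolynomial.ringHom_ext
    · intro c
      simp only [RingHom.comp_apply, hψ, hδ', hχC, hδ2]
    · intro i
      simp only [RingHom.comp_apply, hψ, hδ', hχX, hδ1]
      have : x i = σ (algebraMap (MvPolynomial (Fin n) R) A (MvPolynomial.X i)) := by rw [hσ, MvPolynomial.aeval_X]
      rw [this, hiS, hι, MvPolynomial.map_X]
  intro t ht
  have : mk t = 0 := by
    rw [← hfin, RingHom.comp_apply, (RingHom.mem_ker).1 ht, map_zero]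
  exact Ideal.Quotient.eq_zero_iff_mem.1 this


lemma loc_surj_ker {P P' L L' : Type u} [CommRing P] [CommRing P'] [CommRing L] [CommRing L'] [Algebra P L] [Algebra P' L']
    (μ : P →+* P') (hμ : Function.Surjective μ) (q1 : Ideal P') [q1.IsPrime] (q2 : Ideal P) [q2.IsPrime]
    (hq : q2 = q1.comap μ) [IsLocalization.AtPrime L q2] [IsLocalization.AtPrime L' q1] (e : L →+* L')
    (he : ∀ f, e (algebraMap P L f) = algebraMap P' L' (μ f)) :
    Function.Surjective e ∧ RingHom.ker e = (RingHom.ker μ).map (algebraMap P L) := by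
  constructor
  · intro y
    obtain ⟨⟨f, s⟩, rfl⟩ := IsLocalization.mk'_surjective q1.primeCompl y
    obtain ⟨f, rfl⟩ := hμ f
    obtain ⟨s, hs⟩ := s
    obtain ⟨s, rfl⟩ := hμ s
    have hs' : s ∈ q2.primeCompl := by
      intro h; rw [hq] at h; exact hs h
    refine ⟨IsLocalization.mk' L f ⟨s, hs'⟩, ?_⟩
    rw [IsLocalization.eq_mk'_iff_mul_eq]
    change _ * algebraMap P' L' (μ s) = _
    rw [← he, ← he, ← map_mul]
    congr 1
    exact IsLocalization.mk'_spec L f ⟨s, hs'⟩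
  · apply le_antisymm
    · intro y hy
      obtain ⟨⟨a, s⟩, rfl⟩ := IsLocalization.mk'_surjective q2.primeCompl y
      rw [IsLocalization.mk'_mem_map_algebraMap_iff q2.primeCompl]
      have h1 : algebraMap P' L' (μ a) = 0 := by
        rw [← he, ← IsLocalization.mk'_spec L a s, map_mul, (RingHom.mem_ker).1 hy, zero_mul]
      obtain ⟨⟨t, ht⟩, h2⟩ := (IsLocalization.map_eq_zero_iff q1.primeCompl L' _).1 h1
      obtain ⟨t, rfl⟩ := hμ t
      refine ⟨t, ?_, ?_⟩
      · intro h; rw [hq] at h; exact ht h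
      · rw [RingHom.mem_ker, map_mul]; exact h2
    · rw [Ideal.map_le_iff_le_comap]
      intro a ha
      rw [Ideal.mem_comap, RingHom.mem_ker, he, (RingHom.mem_ker).1 ha, map_zero]

theorem pres_part {R R' S S' Q : Type u} [CommRing R] [CommRing R'] [CommRing S] [CommRing S'] [CommRing Q]
    [IsLocalRing S'] [IsLocalRing S] [Algebra R S] [Algebra R R'] [Module.Flat R R']
    [Algebra (S ⊗[R] R') S'] (q : Ideal (S ⊗[R] R')) [q.IsPrime] [IsLocalization.AtPrime S' q] {n : ℕ}
    (hqS : q.comap (Algebra.TensorProduct.includeLeft : S →ₐ[R] S ⊗[R] R') = maximalIdeal S)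
    (x : Fin n → S) (p : Ideal (MvPolynomial (Fin n) R)) [p.IsPrime]
    (hp : p = (maximalIdeal S).comap (MvPolynomial.aeval x : MvPolynomial (Fin n) R →ₐ[R] S))
    (σ : Localization.AtPrime p →+* S) (hσs : Function.Surjective σ) 
    (hσ : ∀ f, σ (algebraMap (MvPolynomial (Fin n) R) _ f) = (MvPolynomial.aeval x : MvPolynomial (Fin n) R →ₐ[R] S) f)
    (hσg : GeneratedByRegularSequence (Localization.AtPrime p) (RingHom.ker σ))
    (χ : MvPolynomial (Fin n) R' →+* S ⊗[R] R') (hχC : ∀ c, χ (MvPolynomial.C c) = 1 ⊗ₜ c) 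
    (hχX : ∀ i, χ (MvPolynomial.X i) = x i ⊗ₜ 1)
    (g : Q →+* R') (hg : Function.Surjective g) (hgg : GeneratedByRegularSequence Q (RingHom.ker g))
    (q2 : Ideal (MvPolynomial (Fin n) Q)) [q2.IsPrime] (hq2 : q2 = q.comap (χ.comp (MvPolynomial.map g)))
    (γ : Localization.AtPrime q2 →+* S') 
    (hγ : ∀ f, γ (algebraMap (MvPolynomial (Fin n) Q) _ f) = algebraMap (S ⊗[R] R') S' (χ (MvPolynomial.map g f))) :
    Function.Surjective γ ∧ GeneratedByRegularSequence (Localization.AtPrime q2) (RingHom.ker γ) := by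
  set q1 : Ideal (MvPolynomial (Fin n) R') := q.comap χ with hq1
  haveI hq1p : q1.IsPrime := Ideal.comap_isPrime _ _
  have hχm : ∀ f, χ (MvPolynomial.map (algebraMap R R') f) = (MvPolynomial.aeval x f) ⊗ₜ 1 := by
    intro f
    have : χ.comp (MvPolynomial.map (algebraMap R R')) = 
        (Algebra.TensorProduct.includeLeft : S →ₐ[R] S ⊗[R] R').toRingHom.comp (MvPolynomial.aeval x : MvPolynomial (Fin n) R →ₐ[R] S).toRingHom := by
      apply MvPolynomial.ringHom_ext
      · intro c
        simp only [RingHom.comp_apply, MvPolynomial.map_C, hχC, AlgHom.toRingHom_eq_coe, RingHom.coe_coe, MvPolynomial.aeval_C,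
          Algebra.TensorProduct.includeLeft_apply]
        rw [Algebra.algebraMap_eq_smul_one, Algebra.algebraMap_eq_smul_one, TensorProduct.smul_tmul]
      · intro i
        simp [hχX]
    exact congr($this f)
  have hpq : p = q1.comap (MvPolynomial.map (algebraMap R R')) := by
    ext f
    rw [hp, Ideal.mem_comap, Ideal.mem_comap, hq1, Ideal.mem_comap, hχm, ← hqS, Ideal.mem_comap]
    rfl
  have hq21 : q2 = q1.comap (MvPolynomial.map g) := by
    rw [hq2, hq1, Ideal.comap_comap]
  obtain ⟨ι, hι, hιflat⟩ : ∃ ι : Localization.AtPrime p →+* Localization.AtPrime q1, 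
      (∀ f, ι (algebraMap _ _ f) = algebraMap _ _ (MvPolynomial.map (algebraMap R R') f)) ∧ ι.Flat :=
    ⟨Localization.localRingHom p q1 _ hpq, fun f => Localization.localRingHom_to_map _ _ _ _ _, 
      RingHom.Flat.localRingHom (map_flat n) q1 p hpq⟩
  obtain ⟨e, he⟩ : ∃ e : Localization.AtPrime q2 →+* Localization.AtPrime q1, 
      (∀ f, e (algebraMap _ _ f) = algebraMap _ _ (MvPolynomial.map g f)) :=
    ⟨Localization.localRingHom q2 q1 _ hq21, fun f => Localization.localRingHom_to_map _ _ _ _ _⟩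
  have hψu : ∀ y : q1.primeCompl, IsUnit (((algebraMap (S ⊗[R] R') S').comp χ) y) := by
    rintro ⟨y, hy⟩
    rw [RingHom.comp_apply, IsLocalization.AtPrime.isUnit_to_map_iff S' q]
    exact hy
  obtain ⟨ψ, hψ⟩ : ∃ ψ : Localization.AtPrime q1 →+* S', 
      (∀ f, ψ (algebraMap _ _ f) = algebraMap (S ⊗[R] R') S' (χ f)) :=
    ⟨IsLocalization.lift hψu, fun f => IsLocalization.lift_eq hψu f⟩
  have hγe : γ = ψ.comp e := by
    apply IsLocalization.ringHom_ext q2.primeCompl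
    ext f
    · simp only [RingHom.comp_apply, he, hψ, hγ]
    · simp only [RingHom.comp_apply, he, hψ, hγ]
  obtain ⟨hψs, hψk⟩ := pres_T q x p σ hσs hσ χ hχC hχX q1 hq1 ι hι ψ hψ
  obtain ⟨hes, hek⟩ := loc_surj_ker (MvPolynomial.map g) (MvPolynomial.map_surjective g hg) q1 q2 hq21 e he
  obtain ⟨gs, hgs, hgs'⟩ := hσg
  obtain ⟨rs, hrs, hrs'⟩ := hgg
  change Ideal.ofList gs = _ at hgs'
  change Ideal.ofList rs = _ at hrs'
  have hγs : Function.Surjective γ := by rw [hγe]; exact hψs.comp hes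
  refine ⟨hγs, ?_⟩
  obtain ⟨l, hl⟩ := List.map_surjective_iff.2 hes (gs.map ι)
  set Xs := (rs.map MvPolynomial.C).map (algebraMap (MvPolynomial (Fin n) Q) (Localization.AtPrime q2)) with hXs
  have hXk : Ideal.ofList Xs = RingHom.ker e := by
    rw [hek, MvPolynomial.ker_map, ← hrs', hXs, Ideal.map_ofList, Ideal.map_ofList]
  have hXwr : IsWeaklyRegular (Localization.AtPrime q2) Xs := by
    refine wr_of_flat _ (RingHom.flat_algebraMap_iff.2 (IsLocalization.flat _ q2.primeCompl)) _ ?_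
    refine wr_of_flat _ ?_ _ hrs.1
    exact RingHom.flat_algebraMap_iff.2 (inferInstanceAs (Module.Flat Q (MvPolynomial (Fin n) Q)))
  have hlwr : IsWeaklyRegular (Localization.AtPrime q1) (l.map e) := by
    rw [hl]; exact wr_of_flat _ hιflat _ hgs.1
  have hk : Ideal.ofList (Xs ++ l) = RingHom.ker γ := by
    rw [ofList_lift e hes Xs l hXk, hl, ← Ideal.map_ofList, hgs', ← hψk, hγe]
    rfl
  refine ⟨Xs ++ l, ?_, hk⟩
  rw [isRegular_ring_iff, hk]
  exact ⟨wr_lift e hes Xs l hXk hXwr hlwr, RingHom.ker_ne_top γ⟩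

end P14


section P15
open RingTheory.Sequence

lemma exists_q {R S R' : Type u} [CommRing R] [CommRing S] [CommRing R'] [IsLocalRing R] [IsLocalRing S] [IsLocalRing R']
    [Algebra R S] [Algebra R R'] [IsLocalHom (algebraMap R S)] [IsLocalHom (algebraMap R R')]
    (hsep : IsSeparableFieldExtension (ResidueField R) (ResidueField S)) :
    ∃ (q : Ideal (S ⊗[R] R')) (_ : q.IsPrime), 
      q.comap (Algebra.TensorProduct.includeLeft : S →ₐ[R] S ⊗[R] R') = maximalIdeal S ∧
      q.comap (Algebra.TensorProduct.includeRight : R' →ₐ[R] S ⊗[R] R') = maximalIdeal R' ∧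
      ∀ y ∈ q, ∃ t ∉ q, t * y ∈ (maximalIdeal S).map (Algebra.TensorProduct.includeLeft : S →ₐ[R] S ⊗[R] R') ⊔
        (maximalIdeal R').map (Algebra.TensorProduct.includeRight : R' →ₐ[R] S ⊗[R] R') := by
  have hred0 := hsep (ResidueField R') inferInstance inferInstance
  have hred1 : IsReduced (ResidueField S ⊗[ResidueField R] ResidueField R') :=
    isReduced_of_injective (Algebra.TensorProduct.comm (ResidueField R) (ResidueField S) (ResidueField R')).toRingEquiv.toRingHom
      (Algebra.TensorProduct.comm (ResidueField R) (ResidueField S) (ResidueField R')).injective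
  haveI : TensorProduct.CompatibleSMul R (ResidueField R) (ResidueField S) (ResidueField R') := by
    constructor
    intro a m n
    obtain ⟨a, rfl⟩ := residue_surjective a
    have h1 : ∀ m : ResidueField S, residue R a • m = a • m := fun m => algebraMap_smul (ResidueField R) a m
    have h2 : ∀ m : ResidueField R', residue R a • m = a • m := fun m => algebraMap_smul (ResidueField R) a m
    rw [h1, h2, TensorProduct.smul_tmul]
  let e := Algebra.TensorProduct.equivOfCompatibleSMul (ResidueField R) R R (ResidueField S) (ResidueField R')
  haveI hred : IsReduced (ResidueField S ⊗[R] ResidueField R') := 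
    isReduced_of_injective e.toRingEquiv.toRingHom e.injective
  haveI hnt : Nontrivial (ResidueField S ⊗[R] ResidueField R') := e.toRingEquiv.toEquiv.nontrivial
  let fS : S →ₐ[R] ResidueField S := IsScalarTower.toAlgHom R S _
  let fR : R' →ₐ[R] ResidueField R' := IsScalarTower.toAlgHom R R' _
  have hfS : Function.Surjective fS := residue_surjective
  have hfR : Function.Surjective fR := residue_surjective
  let π : S ⊗[R] R' →ₐ[R] ResidueField S ⊗[R] ResidueField R' := Algebra.TensorProduct.map fS fR
  have hπs : Function.Surjective π := TensorProduct.map_surjective hfS hfR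
  have hker := Algebra.TensorProduct.map_ker fS fR hfS hfR
  have kS : RingHom.ker fS = maximalIdeal S := IsLocalRing.ker_residue
  have kR : RingHom.ker fR = maximalIdeal R' := IsLocalRing.ker_residue
  rw [kS, kR] at hker
  obtain ⟨P, hP⟩ := Ideal.nonempty_minimalPrimes (R := ResidueField S ⊗[R] ResidueField R') (I := ⊥) bot_ne_top
  haveI hPp : P.IsPrime := hP.1.1
  refine ⟨P.comap π, Ideal.comap_isPrime _ _, ?_, ?_, ?_⟩
  · symm
    refine (maximalIdeal.isMaximal S).eq_of_le (Ideal.comap_isPrime _ _).ne_top ?_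
    intro s hs
    have : π (s ⊗ₜ 1) = 0 := by
      have hs' : fS s = 0 := by rw [← kS] at hs; exact hs
      simp [π, hs']
    rw [Ideal.mem_comap, Ideal.mem_comap]
    change π (s ⊗ₜ 1) ∈ P
    rw [this]; exact zero_mem _
  · symm
    refine (maximalIdeal.isMaximal R').eq_of_le (Ideal.comap_isPrime _ _).ne_top ?_
    intro s hs
    have : π (1 ⊗ₜ s) = 0 := by
      have hs' : fR s = 0 := by rw [← kR] at hs; exact hs
      simp [π, hs']
    rw [Ideal.mem_comap, Ideal.mem_comap]
    change π (1 ⊗ₜ s) ∈ P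
    rw [this]; exact zero_mem _
  · intro y hy
    have : ∃ s ∉ P, s * π y = 0 := by
      have h1 := IsLocalization.AtPrime.radical_map_of_mem_minimalPrimes (Localization.AtPrime P) P (I := ⊥) hP
      have h2 : algebraMap _ (Localization.AtPrime P) (π y) ∈ maximalIdeal (Localization.AtPrime P) := by
        rw [← IsLocalization.AtPrime.map_eq_maximalIdeal P]
        exact Ideal.mem_map_of_mem _ hy
      rw [← IsLocalization.AtPrime.map_eq_maximalIdeal P, ← h1, Ideal.map_bot] at h2
      obtain ⟨n, hn⟩ := h2
      rw [← map_pow] at hn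
      obtain ⟨⟨t, ht⟩, h4⟩ := (IsLocalization.map_eq_zero_iff P.primeCompl (Localization.AtPrime P) _).1 hn
      refine ⟨t, ht, ?_⟩
      refine IsReduced.eq_zero _ ⟨n + 1, ?_⟩
      change t * π y ^ n = 0 at h4
      calc (t * π y) ^ (n + 1) = (t * π y ^ n) * (t ^ n * π y) := by ring
        _ = 0 := by rw [h4, zero_mul]
    obtain ⟨s, hs, hs'⟩ := this
    obtain ⟨t, rfl⟩ := hπs s
    refine ⟨t, hs, ?_⟩
    rw [← hker]
    change π (t * y) = 0
    rw [map_mul, hs']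

end P15


section P16
open RingTheory.Sequence

lemma theta2_flat {R k ℓ R' C S S' E : Type u} [CommRing R] [Field k] [Field ℓ] [CommRing R'] [CommRing C]
    [CommRing S] [CommRing S'] [CommRing E] [IsLocalRing E]
    [Algebra k C] [Algebra k ℓ] [Algebra R R'] [Algebra R S] [Algebra (S ⊗[R] R') S']
    (rk : R →+* k) (mkC : R' →+* C) (hmkC : Function.Surjective mkC)
    (hkC : ∀ a, mkC (algebraMap R R' a) = algebraMap k C (rk a))
    (q : Ideal (S ⊗[R] R')) [q.IsPrime] [IsLocalization.AtPrime S' q]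
    (r : S →+* ℓ) (hr : Function.Surjective r) 
    (hrk : ∀ a, r (algebraMap R S a) = algebraMap k ℓ (rk a))
    (f : S →+* S') (hf : ∀ s, f s = algebraMap (S ⊗[R] R') S' (s ⊗ₜ 1))
    (mkE : S' →+* E) (hmkE : Function.Surjective mkE) 
    (hker : RingHom.ker mkE = (RingHom.ker r).map f)
    (θ : C ⊗[k] ℓ →+* E) (hθ1 : ∀ b, θ (mkC b ⊗ₜ 1) = mkE (algebraMap (S ⊗[R] R') S' (1 ⊗ₜ b)))
    (hθ2 : ∀ a, θ (1 ⊗ₜ r a) = mkE (f a)) : θ.Flat := by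
  set qZ : Ideal (C ⊗[k] ℓ) := (maximalIdeal E).comap θ with hqZ
  let Zq := Localization.AtPrime qZ
  let j : C ⊗[k] ℓ →+* Zq := algebraMap _ _
  have hu : ∀ y : qZ.primeCompl, IsUnit (θ y) := by
    rintro ⟨y, hy⟩
    by_contra h
    exact hy h
  let θ' : Zq →+* E := IsLocalization.lift hu
  have hθ' : ∀ z, θ' (j z) = θ z := fun z => IsLocalization.lift_eq hu z
  have hθ'loc : IsLocalHom θ' := by
    constructor
    intro z hz
    obtain ⟨⟨a, s⟩, rfl⟩ := IsLocalization.mk'_surjective qZ.primeCompl z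
    refine (IsLocalization.AtPrime.isUnit_mk'_iff Zq qZ a s).2 ?_
    intro ha
    have : θ' (IsLocalization.mk' Zq a s) * θ s = θ a := by
      rw [← hθ', ← hθ', ← map_mul, IsLocalization.mk'_spec]
    have h2 : IsUnit (θ a) := this ▸ hz.mul (hu s)
    exact ha h2
  let iS : S →+* Zq := j.comp ((Algebra.TensorProduct.includeRight : ℓ →ₐ[k] C ⊗[k] ℓ).toRingHom.comp r)
  let iR : R' →+* Zq := j.comp ((Algebra.TensorProduct.includeLeft : C →ₐ[k] C ⊗[k] ℓ).toRingHom.comp mkC)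
  letI : Algebra R Zq := (iR.comp (algebraMap R R')).toAlgebra
  let iSa : S →ₐ[R] Zq := { iS with 
    commutes' := by
      intro a
      change j (1 ⊗ₜ r (algebraMap R S a)) = j (mkC (algebraMap R R' a) ⊗ₜ 1)
      rw [hkC, hrk]
      congr 1
      rw [Algebra.algebraMap_eq_smul_one, Algebra.algebraMap_eq_smul_one, TensorProduct.smul_tmul] }
  let iRa : R' →ₐ[R] Zq := { iR with commutes' := fun a => rfl }
  let η0 : S ⊗[R] R' →+* Zq := (Algebra.TensorProduct.productMap iSa iRa).toRingHom
  have hη01 : ∀ c, η0 (c ⊗ₜ 1) = j (1 ⊗ₜ r c) := fun c => by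
    change Algebra.TensorProduct.productMap iSa iRa (c ⊗ₜ 1) = iSa c
    simp
  have hη02 : ∀ c, η0 (1 ⊗ₜ c) = j (mkC c ⊗ₜ 1) := fun c => by
    change Algebra.TensorProduct.productMap iSa iRa (1 ⊗ₜ c) = iRa c
    simp
  have hθη : ∀ d, θ' (η0 d) = mkE (algebraMap (S ⊗[R] R') S' d) := by
    intro d
    induction d using TensorProduct.induction_on with
    | zero => simp
    | add x y hx hy => simp only [map_add, hx, hy]
    | tmul s b =>
      have : (s ⊗ₜ[R] b : S ⊗[R] R') = (s ⊗ₜ 1) * (1 ⊗ₜ b) := by simp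
      rw [this, map_mul, map_mul, map_mul, map_mul, hη01, hη02, hθ', hθ', hθ1, hθ2, hf]
  have hu1 : ∀ y : q.primeCompl, IsUnit (η0 y) := by
    intro y
    apply isUnit_of_map_unit θ'
    rw [hθη]
    exact (IsLocalization.map_units S' y).map mkE
  let η1 : S' →+* Zq := IsLocalization.lift hu1
  have hη1 : ∀ d, η1 (algebraMap (S ⊗[R] R') S' d) = η0 d := fun f => IsLocalization.lift_eq hu1 f
  have hkill : RingHom.ker mkE ≤ RingHom.ker η1 := by
    rw [hker, Ideal.map_le_iff_le_comap]
    intro a ha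
    rw [Ideal.mem_comap, RingHom.mem_ker, hf, hη1, hη01, (RingHom.mem_ker).1 ha, TensorProduct.tmul_zero, map_zero]
  let η : E →+* Zq := RingHom.liftOfSurjective mkE hmkE ⟨η1, hkill⟩
  have hη : ∀ y, η (mkE y) = η1 y := fun y => RingHom.liftOfRightInverse_comp_apply _ _ _ ⟨η1, hkill⟩ y
  refine flat_of_retract θ η ?_ ?_
  · intro z
    induction z using TensorProduct.induction_on with
    | zero => simp
    | add x y hx hy => simp only [map_add, hx, hy]
    | tmul c l =>
      obtain ⟨b, rfl⟩ := hmkC c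
      obtain ⟨a, rfl⟩ := hr l
      have : (mkC b ⊗ₜ[k] r a : C ⊗[k] ℓ) = (mkC b ⊗ₜ 1) * (1 ⊗ₜ r a) := by simp
      rw [this, map_mul, map_mul, map_mul, hθ1, hθ2, hη, hη, hf, hη1, hη1, hη01, hη02]
  · have h6 : ∀ e, θ' (η e) = e := by
      intro e
      obtain ⟨y, rfl⟩ := hmkE e
      rw [hη]
      have : θ'.comp η1 = mkE := by
        apply IsLocalization.ringHom_ext q.primeCompl
        apply RingHom.ext
        intro d
        simp only [RingHom.comp_apply, hη1, hθη]
      exact congr($this y)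
    exact Function.LeftInverse.injective h6

theorem wreg_part {R S R' S' : Type u} [CommRing R] [CommRing S] [CommRing R'] [CommRing S']
    [IsLocalRing R] [IsLocalRing S] [IsLocalRing R'] [IsLocalRing S'] [IsNoetherianRing S']
    [Algebra R S] [Algebra R R'] [IsLocalHom (algebraMap R S)] [IsLocalHom (algebraMap R R')]
    [Module.Flat R R'] [Algebra (S ⊗[R] R') S'] (q : Ideal (S ⊗[R] R')) [q.IsPrime] [IsLocalization.AtPrime S' q]
    (hqS : q.comap (Algebra.TensorProduct.includeLeft : S →ₐ[R] S ⊗[R] R') = maximalIdeal S)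
    (hqR : q.comap (Algebra.TensorProduct.includeRight : R' →ₐ[R] S ⊗[R] R') = maximalIdeal R')
    (hq : ∀ y ∈ q, ∃ t ∉ q, t * y ∈ (maximalIdeal S).map (Algebra.TensorProduct.includeLeft : S →ₐ[R] S ⊗[R] R') ⊔
        (maximalIdeal R').map (Algebra.TensorProduct.includeRight : R' →ₐ[R] S ⊗[R] R'))
    (hreg : IsRegularLocal (R' ⧸ (maximalIdeal R).map (algebraMap R R')))
    (f : S →+* S') (hf : ∀ s, f s = algebraMap (S ⊗[R] R') S' (s ⊗ₜ 1)) : IsWeaklyRegularHom S S' f := by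
  have hfD : f = (algebraMap (S ⊗[R] R') S').comp (algebraMap S (S ⊗[R] R')) := by
    ext s; rw [hf]; rfl
  have hflat : f.Flat := by
    rw [hfD]
    refine RingHom.Flat.comp (RingHom.flat_algebraMap_iff.2 inferInstance) 
      (RingHom.flat_algebraMap_iff.2 (IsLocalization.flat _ q.primeCompl))
  have hmem : ∀ d, algebraMap (S ⊗[R] R') S' d ∈ maximalIdeal S' ↔ d ∈ q := by
    intro d
    rw [mem_maximalIdeal, mem_nonunits_iff, IsLocalization.AtPrime.isUnit_to_map_iff S' q]
    exact not_not
  have hfloc : IsLocalHom f := by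
    constructor
    intro s hs
    by_contra h
    have h1 : s ∈ maximalIdeal S := h
    rw [← hqS] at h1
    rw [hf, IsLocalization.AtPrime.isUnit_to_map_iff S' q] at hs
    exact hs h1
  refine ⟨hfloc, hflat, ?_⟩
  have hfm : (maximalIdeal S).map f ≤ maximalIdeal S' := ((local_hom_TFAE f).out 0 2).1 hfloc
  haveI : Nontrivial (S' ⧸ (maximalIdeal S).map f) := Ideal.Quotient.nontrivial_iff.2 
    (fun h => (maximalIdeal.isMaximal S').ne_top (top_le_iff.1 (h ▸ hfm)))
  let mkE : S' →+* S' ⧸ (maximalIdeal S).map f := Ideal.Quotient.mk _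
  have hmkE : Function.Surjective mkE := Ideal.Quotient.mk_surjective
  haveI : IsLocalRing (S' ⧸ (maximalIdeal S).map f) := 
    IsLocalRing.of_surjective' mkE hmkE
  have hmkEloc : IsLocalHom mkE := IsLocalHom.of_surjective _ hmkE
  obtain ⟨-, hCl, rs, hrs, hrs'⟩ := hreg
  let E := S' ⧸ (maximalIdeal S).map f
  let C := R' ⧸ (maximalIdeal R).map (algebraMap R R')
  let k := ResidueField R
  let ℓ := ResidueField S
  let mkC : R' →+* C := Ideal.Quotient.mk _
  have hmkC : Function.Surjective mkC := Ideal.Quotient.mk_surjective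
  have hmkCloc : IsLocalHom mkC := IsLocalHom.of_surjective _ hmkC
  let kC : k →+* C := Ideal.Quotient.lift (maximalIdeal R) (mkC.comp (algebraMap R R')) 
    (fun a ha => Ideal.Quotient.eq_zero_iff_mem.2 (Ideal.mem_map_of_mem _ ha))
  letI : Algebra k C := kC.toAlgebra
  have hkC : ∀ a, mkC (algebraMap R R' a) = algebraMap k C (residue R a) := fun a => rfl
  have hrk : ∀ a, residue S (algebraMap R S a) = algebraMap k ℓ (residue R a) := fun a => rfl
  have hkerE : RingHom.ker mkE = (RingHom.ker (residue S)).map f := by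
    rw [IsLocalRing.ker_residue]; exact Ideal.mk_ker
  have hinc : ∀ a, algebraMap (S ⊗[R] R') S' (1 ⊗ₜ algebraMap R R' a) = f (algebraMap R S a) := by
    intro a
    rw [hf]
    congr 1
    rw [Algebra.algebraMap_eq_smul_one, Algebra.algebraMap_eq_smul_one, TensorProduct.smul_tmul]
  have hαker : RingHom.ker mkC ≤ RingHom.ker (mkE.comp ((algebraMap (S ⊗[R] R') S').comp (Algebra.TensorProduct.includeRight : R' →ₐ[R] S ⊗[R] R').toRingHom)) := by
    have : RingHom.ker mkC = (maximalIdeal R).map (algebraMap R R') := Ideal.mk_ker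
    rw [this, Ideal.map_le_iff_le_comap]
    intro a ha
    rw [Ideal.mem_comap, RingHom.mem_ker]
    change mkE (algebraMap (S ⊗[R] R') S' (1 ⊗ₜ algebraMap R R' a)) = 0
    rw [hinc, ← RingHom.mem_ker, hkerE]
    refine Ideal.mem_map_of_mem _ ?_
    rw [RingHom.mem_ker, hrk, (residue_eq_zero_iff a).2 ha, map_zero]
  let α : C →+* E := RingHom.liftOfSurjective mkC hmkC ⟨_, hαker⟩
  have hα : ∀ c, α (mkC c) = mkE (algebraMap (S ⊗[R] R') S' (1 ⊗ₜ c)) := fun c => RingHom.liftOfRightInverse_comp_apply _ _ _ ⟨_, hαker⟩ c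
  have hβker : RingHom.ker (residue S) ≤ RingHom.ker (mkE.comp f) := by
    intro a ha
    rw [RingHom.mem_ker, RingHom.comp_apply, ← RingHom.mem_ker, hkerE]
    exact Ideal.mem_map_of_mem _ ha
  let β : ℓ →+* E := RingHom.liftOfSurjective (residue S) residue_surjective ⟨mkE.comp f, hβker⟩
  have hβ : ∀ a, β (residue S a) = mkE (f a) := fun y => RingHom.liftOfRightInverse_comp_apply _ _ _ ⟨mkE.comp f, hβker⟩ y
  letI : Algebra k E := (α.comp (algebraMap k C)).toAlgebra
  let αa : C →ₐ[k] E := { α with commutes' := fun _ => rfl }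
  let βa : ℓ →ₐ[k] E := { β with 
    commutes' := by
      intro a
      obtain ⟨a, rfl⟩ := residue_surjective a
      change β (algebraMap k ℓ (residue R a)) = α (algebraMap k C (residue R a))
      rw [← hrk, hβ, ← hkC, hα, hinc] }
  let θ : C ⊗[k] ℓ →+* E := (Algebra.TensorProduct.productMap αa βa).toRingHom
  have hθα : ∀ c, θ (c ⊗ₜ 1) = α c := fun c => by
    change Algebra.TensorProduct.productMap αa βa (c ⊗ₜ 1) = αa c
    simp
  have hθβ : ∀ c, θ (1 ⊗ₜ c) = β c := fun c => by
    change Algebra.TensorProduct.productMap αa βa (1 ⊗ₜ c) = βa c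
    simp
  have hθ : θ.Flat := by
    refine theta2_flat (R := R) (k := k) (ℓ := ℓ) (R' := R') (C := C) (S := S) (S' := S') (E := E) 
      (residue R) mkC hmkC hkC q (residue S) residue_surjective hrk f hf mkE hmkE hkerE θ ?_ ?_
    · intro c; rw [hθα, hα]
    · intro a; rw [hθβ, hβ]
  have hαflat : α.Flat := by
    have h1 : α = θ.comp (algebraMap C (C ⊗[k] ℓ)) := by
      ext c; exact (hθα c).symm
    rw [h1]
    exact RingHom.Flat.comp (RingHom.flat_algebraMap_iff.2 inferInstance) hθ
  have hαmax : (maximalIdeal C).map α = maximalIdeal E := by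
    apply le_antisymm
    · rw [Ideal.map_le_iff_le_comap]
      intro c hc
      obtain ⟨b, rfl⟩ := hmkC c
      rw [Ideal.mem_comap, hα, mem_maximalIdeal, mem_nonunits_iff, isUnit_map_iff]
      rw [mem_maximalIdeal, mem_nonunits_iff, isUnit_map_iff] at hc
      refine (hmem _).2 ?_
      have : b ∈ maximalIdeal R' := hc
      rw [← hqR] at this
      exact this
    · intro e he
      obtain ⟨y, rfl⟩ := hmkE e
      rw [mem_maximalIdeal, mem_nonunits_iff, isUnit_map_iff] at he
      have h1 : maximalIdeal S' ≤ ((maximalIdeal C).map α).comap mkE := by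
        rw [← IsLocalization.AtPrime.map_eq_maximalIdeal q S', Ideal.map_le_iff_le_comap]
        intro d hd
        obtain ⟨t, ht, h⟩ := hq d hd
        have h2 : (maximalIdeal S).map (Algebra.TensorProduct.includeLeft : S →ₐ[R] S ⊗[R] R') ⊔
          (maximalIdeal R').map (Algebra.TensorProduct.includeRight : R' →ₐ[R] S ⊗[R] R') ≤ 
            (((maximalIdeal C).map α).comap mkE).comap (algebraMap (S ⊗[R] R') S') := by
          refine sup_le ?_ ?_
          · rw [Ideal.map_le_iff_le_comap]
            intro s hs
            rw [Ideal.mem_comap, Ideal.mem_comap, Ideal.mem_comap]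
            change mkE (algebraMap (S ⊗[R] R') S' (s ⊗ₜ 1)) ∈ _
            have h3 : mkE (f s) = 0 := by
              rw [← RingHom.mem_ker, hkerE, IsLocalRing.ker_residue]
              exact Ideal.mem_map_of_mem _ hs
            rw [← hf, h3]
            exact zero_mem _
          · rw [Ideal.map_le_iff_le_comap]
            intro s hs
            rw [Ideal.mem_comap, Ideal.mem_comap, Ideal.mem_comap]
            change mkE (algebraMap (S ⊗[R] R') S' (1 ⊗ₜ s)) ∈ _
            rw [← hα]
            refine Ideal.mem_map_of_mem _ ?_
            rw [mem_maximalIdeal, mem_nonunits_iff, isUnit_map_iff]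
            exact hs
        have h4 := h2 h
        rw [Ideal.mem_comap, map_mul] at h4
        have htu : IsUnit (algebraMap (S ⊗[R] R') S' t) := (IsLocalization.AtPrime.isUnit_to_map_iff S' q t).2 ht
        exact (Ideal.unit_mul_mem_iff_mem _ htu).1 h4
      exact h1 he
  refine ⟨inferInstance, inferInstance, rs.map α, ?_, ?_⟩
  · rw [isRegular_ring_iff]
    refine ⟨wr_of_flat α hαflat _ hrs.1, ?_⟩
    rw [← Ideal.map_ofList]
    change Ideal.map α (Ideal.span _) ≠ _
    rw [hrs', hαmax]
    exact (maximalIdeal.isMaximal _).ne_top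
  · change Ideal.ofList _ = _
    rw [← Ideal.map_ofList]
    change Ideal.map α (Ideal.span _) = _
    rw [hrs', hαmax]

end P16


section P17
open RingTheory.Sequence

lemma frac_part {Q R R' S : Type u} [CommRing Q] [CommRing R] [CommRing R'] [CommRing S]
    [Algebra R S] [Algebra R R'] {n : ℕ} (x : Fin n → S)
    (hx : ∀ s : S, ∃ f h : MvPolynomial (Fin n) R,
      IsUnit (MvPolynomial.aeval x h) ∧ s * MvPolynomial.aeval x h = MvPolynomial.aeval x f)
    (χ : MvPolynomial (Fin n) R' →+* S ⊗[R] R') (hχC : ∀ c, χ (MvPolynomial.C c) = 1 ⊗ₜ c) 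
    (hχX : ∀ i, χ (MvPolynomial.X i) = x i ⊗ₜ 1)
    (g : Q →+* R') (hg : Function.Surjective g) :
    ∀ d, ∃ h a, IsUnit (χ.comp (MvPolynomial.map g) h) ∧ χ.comp (MvPolynomial.map g) h * d = χ.comp (MvPolynomial.map g) a := by
  have hχm : ∀ f, χ (MvPolynomial.map (algebraMap R R') f) = (MvPolynomial.aeval x f) ⊗ₜ 1 := by
    intro f
    have : χ.comp (MvPolynomial.map (algebraMap R R')) = 
        (Algebra.TensorProduct.includeLeft : S →ₐ[R] S ⊗[R] R').toRingHom.comp (MvPolynomial.aeval x : MvPolynomial (Fin n) R →ₐ[R] S).toRingHom := by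
      apply MvPolynomial.ringHom_ext
      · intro c
        simp only [RingHom.comp_apply, MvPolynomial.map_C, hχC, AlgHom.toRingHom_eq_coe, RingHom.coe_coe, MvPolynomial.aeval_C,
          Algebra.TensorProduct.includeLeft_apply]
        rw [Algebra.algebraMap_eq_smul_one, Algebra.algebraMap_eq_smul_one, TensorProduct.smul_tmul]
      · intro i
        simp [hχX]
    exact congr($this f)
  have key : ∀ d, ∃ h a, IsUnit (χ h) ∧ χ h * d = χ a := by
    intro d
    induction d using TensorProduct.induction_on with
    | zero => exact ⟨1, 0, by simp, by simp⟩
    | add y z hy hz =>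
      obtain ⟨h, a, hu, e⟩ := hy
      obtain ⟨h', a', hu', e'⟩ := hz
      refine ⟨h * h', a * h' + h * a', by rw [map_mul]; exact hu.mul hu', ?_⟩
      rw [map_add, map_mul, map_mul, map_mul, ← e, ← e']
      ring
    | tmul s b =>
      obtain ⟨f, h, hu, e⟩ := hx s
      refine ⟨MvPolynomial.map (algebraMap R R') h, MvPolynomial.map (algebraMap R R') f * MvPolynomial.C b, ?_, ?_⟩
      · rw [hχm]
        exact hu.map (Algebra.TensorProduct.includeLeft : S →ₐ[R] S ⊗[R] R')
      · rw [map_mul, hχm, hχm, hχC, ← e]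
        simp [mul_comm]
  intro d
  obtain ⟨h, a, hu, e⟩ := key d
  obtain ⟨h, rfl⟩ := MvPolynomial.map_surjective g hg h
  obtain ⟨a, rfl⟩ := MvPolynomial.map_surjective g hg a
  exact ⟨h, a, hu, e⟩

theorem main_aux (R S M : Type u) [CommRing R] [CommRing S] [IsLocalRing R] [IsLocalRing S] [IsNoetherianRing R]
    [IsNoetherianRing S] [Algebra R S] [IsLocalHom (algebraMap R S)] [AddCommGroup M] [Module R M] [Module S M]
    [IsScalarTower R S M] [Algebra.EssFiniteType R S]
    (hci : IsCIAt R S (algebraMap R S) (maximalIdeal S))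
    (hsep : IsSeparableFieldExtension (ResidueField R) (ResidueField S))
    (hfd : HasFiniteUpperCIDim R M) : HasFiniteUpperCIDim S M := by
  obtain ⟨R', Q, _, _, f0, g, ⟨hR'l, hQl, hR'N, hQN, hf0l, hgl, hf0flat, hg, hgg⟩, ⟨-, -, hreg⟩, hfd, -⟩ := hfd
  letI : Algebra R R' := f0.toAlgebra
  haveI : IsLocalHom (algebraMap R R') := hf0l
  haveI : Module.Flat R R' := hf0flat
  obtain ⟨n, x, p, _, σ, hp, hx, hσ, hσs, hσg⟩ := ci_pres' R S hci hsep
  obtain ⟨q, _, hqS, hqR, hq⟩ := exists_q (R := R) (S := S) (R' := R') hsep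
  let χ : MvPolynomial (Fin n) R' →+* S ⊗[R] R' := MvPolynomial.eval₂Hom 
    (Algebra.TensorProduct.includeRight : R' →ₐ[R] S ⊗[R] R').toRingHom (fun i => x i ⊗ₜ 1)
  have hχC : ∀ c, χ (MvPolynomial.C c) = 1 ⊗ₜ c := fun c => by simp [χ]
  have hχX : ∀ i, χ (MvPolynomial.X i) = x i ⊗ₜ 1 := fun c => by simp [χ]
  have hfrac := frac_part x hx χ hχC hχX g hg
  obtain ⟨S', _, _, _⟩ : ∃ (S' : Type u) (_ : CommRing S') (_ : Algebra (S ⊗[R] R') S'), IsLocalization.AtPrime S' q :=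
    ⟨Localization.AtPrime q, inferInstance, inferInstance, inferInstance⟩
  haveI hS'l : IsLocalRing S' := IsLocalization.AtPrime.isLocalRing S' q
  let f : S →+* S' := (algebraMap (S ⊗[R] R') S').comp (algebraMap S (S ⊗[R] R'))
  have hf : ∀ s, f s = algebraMap (S ⊗[R] R') S' (s ⊗ₜ 1) := fun s => rfl
  let q2 : Ideal (MvPolynomial (Fin n) Q) := q.comap (χ.comp (MvPolynomial.map g))
  haveI hq2p : q2.IsPrime := Ideal.comap_isPrime _ _
  let Q2 := Localization.AtPrime q2
  have hu : ∀ y : q2.primeCompl, IsUnit (((algebraMap (S ⊗[R] R') S').comp (χ.comp (MvPolynomial.map g))) y) := by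
    rintro ⟨y, hy⟩
    rw [RingHom.comp_apply, IsLocalization.AtPrime.isUnit_to_map_iff S' q]
    exact hy
  obtain ⟨γ, hγ⟩ : ∃ γ : Q2 →+* S', ∀ y, γ (algebraMap (MvPolynomial (Fin n) Q) Q2 y) = algebraMap (S ⊗[R] R') S' (χ (MvPolynomial.map g y)) :=
    ⟨IsLocalization.lift hu, fun y => IsLocalization.lift_eq hu y⟩
  obtain ⟨hγs, hγg⟩ := pres_part q hqS x p hp σ hσs hσ hσg χ hχC hχX g hg hgg q2 rfl γ hγ
  haveI hNQ2 : IsNoetherianRing Q2 := IsLocalization.isNoetherianRing q2.primeCompl Q2 inferInstance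
  haveI hNS' : IsNoetherianRing S' := isNoetherianRing_of_surjective _ _ γ hγs
  have hwr : IsWeaklyRegularHom S S' f := wreg_part q hqS hqR hq hreg f hf
  have hproj : letI := γ.toAlgebra; ProjDimFinite Q2 S' := by
    letI := γ.toAlgebra
    exact projDimFinite_of_regular hγs hγg
  refine ⟨S', Q2, inferInstance, inferInstance, f, γ, ⟨inferInstance, inferInstance, hNS', hNQ2, hwr.1, 
    IsLocalHom.of_surjective _ hγs, hwr.2.1, hγs, hγg⟩, hwr, ?_, hproj⟩
  letI : Algebra S S' := f.toAlgebra
  haveI : IsScalarTower S (S ⊗[R] R') S' := IsScalarTower.of_algebraMap_eq (fun s => rfl)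
  exact fd_part q g (χ.comp (MvPolynomial.map g)) (fun c => by simp [hχC]) hfrac q2 rfl γ hγ hfd

end P17


variable (R S M : Type u) [CommRing R] [CommRing S]
  [IsLocalRing R] [IsLocalRing S] [IsNoetherianRing R] [IsNoetherianRing S]
  [Algebra R S] [IsLocalHom (algebraMap R S)]
  [AddCommGroup M] [Module R M] [Module S M] [IsScalarTower R S M] [Module.Finite S M]

/-- Ascent of complete intersection flat dimension. -/
theorem ascent_upperCIfd_of_flat_eft_ci_separable [Module.Flat R S] [Algebra.EssFiniteType R S]
    (hci : IsCIAt R S (algebraMap R S) (maximalIdeal S))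
    (hsep : letI := (IsLocalRing.ResidueField.map (algebraMap R S)).toAlgebra;
      IsSeparableFieldExtension (ResidueField R) (ResidueField S))
    (hfd : HasFiniteUpperCIDim R M) :
    HasFiniteUpperCIDim S M := by
  have e : (IsLocalRing.ResidueField.map (algebraMap R S)).toAlgebra = 
      (inferInstance : Algebra (ResidueField R) (ResidueField S)) := by
    apply Algebra.algebra_ext
    intro r
    rfl
  have hsep2 : IsSeparableFieldExtension (ResidueField R) (ResidueField S) := by
    have h := hsep
    rw [e] at h
    exact h
  exact main_aux R S M hci hsep2 hfd
end

section
/- Let φ: (R,m,k) → (S,n,ℓ) be a surjective local ring homomorphism between commutative Noetherian local rings whose kernel is generated by an R-regular sequence, and let M be a finitely generated S-module. If CI-fd_R M < ∞, then CI-dim_S M < ∞. -/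
/-!
Common definitions: André–Quillen homology via the standard (comonad/polynomial)
simplicial resolution, complete-intersection (flat) dimensions via quasi-deformations,
Cohen factorizations, Koszul homology `H₁`, and related notions.
-/

universe u

open TensorProduct IsLocalRing

namespace CIAscent

open CategoryTheory RingTheory.Sequence

theorem flatDimLE_congr (Q : Type u) [CommRing Q] (n : ℕ) : ∀ (N N' : Type u) [AddCommGroup N]
    [Module Q N] [AddCommGroup N'] [Module Q N'] (_ : N ≃ₗ[Q] N') (_ : FlatDimLE Q n N),
    FlatDimLE Q n N' := by
  cases n with
  | zero =>
    intro N N' _ _ _ _ e h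
    have : Module.Flat Q N := h
    exact Module.Flat.of_linearEquiv e.symm
  | succ n =>
    intro N N' _ _ _ _ e h
    obtain ⟨F, i1, i2, f, hF, hf, hk⟩ := h
    refine ⟨F, i1, i2, e.toLinearMap.comp f, hF, e.surjective.comp hf, ?_⟩
    have : LinearMap.ker (e.toLinearMap.comp f) = LinearMap.ker f := LinearEquiv.ker_comp e f
    rw [this]
    exact hk

theorem projDimLE_of_has (Q : Type u) [CommRing Q] (n : ℕ) : ∀ (N : Type u) [AddCommGroup N]
    [Module Q N] (_ : HasProjectiveDimensionLE (ModuleCat.of Q N) n), ProjDimLE Q n N := by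
  induction n with
  | zero =>
    intro N _ _ h
    rw [← projective_iff_hasProjectiveDimensionLE_zero, ← IsProjective.iff_projective] at h
    exact h
  | succ n ih =>
    intro N _ _ h
    refine ⟨N →₀ Q, inferInstance, inferInstance, Finsupp.linearCombination Q id,
      inferInstance, Finsupp.linearCombination_id_surjective Q N, ?_⟩
    apply ih
    have hS := LinearMap.shortExact_shortComplexKer
      (Finsupp.linearCombination_id_surjective Q N)
    refine (hS.hasProjectiveDimensionLT_X₃_iff n ?_).1 h
    exact (IsProjective.iff_projective (R := Q) (N →₀ Q)).1 inferInstance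

theorem projDimFinite_of_regular (Q : Type u) [CommRing Q] [IsLocalRing Q] [IsNoetherianRing Q]
    (rs : List Q) (hrs : IsRegular Q rs) (N : Type u) [AddCommGroup N] [Module Q N]
    (e : (Q ⧸ Ideal.ofList rs) ≃ₗ[Q] N) : ProjDimFinite Q N := by
  refine ⟨rs.length, projDimLE_of_has Q _ N ?_⟩
  rw [← projectiveDimension_le_iff, ← ModuleCat.projectiveDimension_quotient_eq_length.{u} rs hrs]
  exact le_of_eq (ModuleCat.projectiveDimension_eq_of_linearEquiv
    (M := ModuleCat.of Q N) (N := ModuleCat.of Q (Shrink.{u} (Q ⧸ Ideal.ofList rs)))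
    (e.symm.trans (Shrink.linearEquiv Q _).symm))

theorem append_regular (Q R' : Type u) [CommRing Q] [CommRing R'] [Algebra Q R']
    (hg : Function.Surjective (algebraMap Q R')) (rs₁ rs₂ : List Q)
    (h₁ : IsWeaklyRegular Q rs₁) (hk : Ideal.ofList rs₁ = RingHom.ker (algebraMap Q R'))
    (h₂ : IsWeaklyRegular R' (rs₂.map (algebraMap Q R'))) : IsWeaklyRegular Q (rs₁ ++ rs₂) := by
  rw [isWeaklyRegular_append_iff]
  refine ⟨h₁, ?_⟩
  rw [isWeaklyRegular_map_algebraMap_iff] at h₂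
  have e₁ : (Ideal.ofList rs₁ • ⊤ : Submodule Q Q) = LinearMap.ker (Algebra.linearMap Q R') := by
    rw [hk]; ext x; simp [RingHom.mem_ker]
  exact (LinearEquiv.isWeaklyRegular_congr ((Submodule.quotEquivOfEq _ _ e₁).trans
    (LinearMap.quotKerEquivOfSurjective (Algebra.linearMap Q R') hg)) rs₂).2 h₂

theorem ker_includeRight (R S R' : Type u) [CommRing R] [CommRing S] [CommRing R'] [Algebra R S]
    [Algebra R R'] (hsur : Function.Surjective (algebraMap R S)) :
    RingHom.ker (Algebra.TensorProduct.includeRight : R' →ₐ[R] S ⊗[R] R') =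
      (RingHom.ker (algebraMap R S)).map (algebraMap R R') := by
  have h := Algebra.TensorProduct.rTensor_ker (R := R) (C := R') (Algebra.ofId R S) hsur
  have h2 : (Algebra.TensorProduct.includeRight : R' →ₐ[R] S ⊗[R] R') =
    (Algebra.TensorProduct.map (Algebra.ofId R S) (AlgHom.id R R')).comp
      (Algebra.TensorProduct.lid R R').symm.toAlgHom := by
    ext x; simp
  have h3 : RingHom.ker (Algebra.TensorProduct.includeRight : R' →ₐ[R] S ⊗[R] R') =
    (RingHom.ker (Algebra.TensorProduct.map (Algebra.ofId R S) (AlgHom.id R R'))).comap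
      (Algebra.TensorProduct.lid R R').symm := by
    rw [h2]; rfl
  rw [h3, h]
  refine (Ideal.comap_symm (Algebra.TensorProduct.lid R R').toRingEquiv).trans ?_
  have h4 : Ideal.map (Algebra.TensorProduct.includeLeft : R →ₐ[R] R ⊗[R] R')
      (RingHom.ker (Algebra.ofId R S)) = Ideal.map
      (Algebra.TensorProduct.includeLeft : R →ₐ[R] R ⊗[R] R').toRingHom
      (RingHom.ker (algebraMap R S)) := rfl
  have h5 : ∀ J : Ideal (R ⊗[R] R'), Ideal.map (Algebra.TensorProduct.lid R R').toRingEquiv J =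
    Ideal.map (Algebra.TensorProduct.lid R R').toRingEquiv.toRingHom J := fun J => rfl
  rw [h4, h5, Ideal.map_map]
  congr 1
  ext x; simp [Algebra.algebraMap_eq_smul_one]

/-- The comparison isomorphism. -/
def tensorEquiv (R S M R' : Type u) [CommRing R] [CommRing S] [CommRing R'] [Algebra R S]
    [Algebra R R'] [AddCommGroup M] [Module R M] [Module S M] [IsScalarTower R S M] :
    ((S ⊗[R] R') ⊗[S] M) ≃+ (R' ⊗[R] M) :=
  (((TensorProduct.comm S (S ⊗[R] R') M).trans
    (TensorProduct.AlgebraTensorModule.cancelBaseChange R S S M R')).toAddEquiv).trans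
    (TensorProduct.comm R M R').toAddEquiv

theorem tensorEquiv_smul (R S M R' : Type u) [CommRing R] [CommRing S] [CommRing R'] [Algebra R S]
    [Algebra R R'] [AddCommGroup M] [Module R M] [Module S M] [IsScalarTower R S M] (a : R')
    (x : (S ⊗[R] R') ⊗[S] M) :
    tensorEquiv R S M R' ((1 ⊗ₜ[R] a : S ⊗[R] R') • x) = a • tensorEquiv R S M R' x := by
  induction x with
  | zero => simp
  | add x y hx hy => rw [smul_add, map_add, map_add, smul_add, hx, hy]
  | tmul t m =>
    induction t with
    | zero => simp
    | add x y hx hy =>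
      rw [TensorProduct.add_tmul, smul_add, map_add, map_add, smul_add, hx, hy]
    | tmul s b =>
      simp [tensorEquiv, TensorProduct.smul_tmul', Algebra.TensorProduct.tmul_mul_tmul]

theorem hasFin_mk (S M S' Q : Type u) [CommRing S] [CommRing S'] [CommRing Q] [AddCommGroup M]
    [Module S M] [inst : Algebra S S'] (h : Q →+* S')
    (hqd : IsQuasiDeformation S S' Q (algebraMap S S') h)
    (hf : letI : Module Q (S' ⊗[S] M) := Module.compHom _ h; FlatDimFinite Q (S' ⊗[S] M))
    (hp : letI := h.toAlgebra; ProjDimFinite Q S') : HasFiniteCIDim S M := by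
  obtain ⟨f, rfl⟩ : ∃ f : S →+* S', inst = f.toAlgebra :=
    ⟨algebraMap S S', toAlgebra_algebraMap.symm⟩
  exact ⟨S', Q, inferInstance, inferInstance, f, h, hqd, hf, hp⟩

theorem main (R S M R' Q : Type u) [CommRing R] [CommRing S] [IsLocalRing R] [IsLocalRing S]
    [IsNoetherianRing R] [IsNoetherianRing S] [Algebra R S]
    [AddCommGroup M] [Module R M] [Module S M] [IsScalarTower R S M]
    (hsur : Function.Surjective (algebraMap R S))
    (hker : GeneratedByRegularSequence R (RingHom.ker (algebraMap R S)))
    [CommRing R'] [CommRing Q] [IsLocalRing R'] [IsLocalRing Q] [IsNoetherianRing R']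
    [IsNoetherianRing Q] [Algebra R R'] [Algebra Q R'] [IsLocalHom (algebraMap R R')]
    [Module.Flat R R'] (hg : Function.Surjective (algebraMap Q R'))
    (hk : GeneratedByRegularSequence Q (RingHom.ker (algebraMap Q R')))
    (hfd : letI : Module Q (R' ⊗[R] M) := Module.compHom _ (algebraMap Q R')
      FlatDimFinite Q (R' ⊗[R] M)) : HasFiniteCIDim S M := by
  obtain ⟨xs, hxs, hxk⟩ := hker
  obtain ⟨rs, hrs, hrk⟩ := hk
  change Ideal.ofList rs = _ at hrk
  change Ideal.ofList xs = _ at hxk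
  let ι : R' →+* S ⊗[R] R' := (Algebra.TensorProduct.includeRight : R' →ₐ[R] S ⊗[R] R').toRingHom
  have hι : Function.Surjective ι :=
    Algebra.TensorProduct.includeRight_surjective R' hsur
  have hιk : RingHom.ker ι = Ideal.ofList (xs.map (algebraMap R R')) := by
    rw [← Ideal.map_ofList, hxk]; exact ker_includeRight R S R' hsur
  have hff : Module.FaithfullyFlat R R' := Module.FaithfullyFlat.of_flat_of_isLocalHom
  have hreg' : IsRegular R' (xs.map (algebraMap R R')) := hxs.of_faithfullyFlat
  obtain ⟨ys, hys⟩ : ∃ ys : List Q, ys.map (algebraMap Q R') = xs.map (algebraMap R R') :=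
    ⟨(xs.map (algebraMap R R')).map (Function.surjInv hg), by
      rw [List.map_map, (Function.rightInverse_surjInv hg).comp_eq_id, List.map_id]⟩
  have hwr : IsWeaklyRegular Q (rs ++ ys) :=
    append_regular Q R' hg rs ys hrs.1 hrk (hys ▸ hreg'.1)
  let h : Q →+* S ⊗[R] R' := ι.comp (algebraMap Q R')
  have hsurj : Function.Surjective h := hι.comp hg
  have hhk : RingHom.ker h = Ideal.ofList (rs ++ ys) := by
    rw [Ideal.ofList_append, hrk, ← RingHom.comap_ker, hιk, ← hys, ← Ideal.map_ofList,
      Ideal.comap_map_of_surjective' _ hg, sup_comm]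
  have hnt : Nontrivial (S ⊗[R] R') := by
    by_contra hn
    rw [not_nontrivial_iff_subsingleton] at hn
    have h1 : RingHom.ker ι = ⊤ := by
      rw [Ideal.eq_top_iff_one, RingHom.mem_ker]; exact Subsingleton.elim _ _
    apply hreg'.2
    rw [← hιk, h1]; simp
  have hrQL : IsRegular Q (rs ++ ys) := by
    refine ⟨hwr, ?_⟩
    rw [← hhk]
    simpa using (RingHom.ker_ne_top h).symm
  have : IsLocalRing (S ⊗[R] R') := IsLocalRing.of_surjective' ι hι
  have hιl : IsLocalHom ι := IsLocalHom.of_surjective ι hι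
  have hhl : IsLocalHom h := IsLocalHom.of_surjective h hsurj
  refine hasFin_mk S M (S ⊗[R] R') Q h
    ⟨inferInstance, inferInstance, isNoetherianRing_of_surjective _ _ ι hι, inferInstance,
      ⟨?_⟩, hhl, ?_, hsurj, ⟨rs ++ ys, hrQL, hhk.symm⟩⟩ ?_ ?_
  · intro s hs
    obtain ⟨r, rfl⟩ := hsur s
    have h1 : algebraMap S (S ⊗[R] R') (algebraMap R S r) = ι (algebraMap R R' r) := by
      rw [← IsScalarTower.algebraMap_apply]
      exact ((Algebra.TensorProduct.includeRight : R' →ₐ[R] S ⊗[R] R').commutes r).symm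
    rw [h1] at hs
    exact (isUnit_of_map_unit (algebraMap R R') r (isUnit_of_map_unit ι _ hs)).map _
  · rw [toAlgebra_algebraMap]; infer_instance
  · obtain ⟨n, hn⟩ := hfd
    refine ⟨n, ?_⟩
    letI : Module Q (R' ⊗[R] M) := Module.compHom _ (algebraMap Q R')
    letI : Module Q ((S ⊗[R] R') ⊗[S] M) := Module.compHom _ h
    refine flatDimLE_congr Q n (R' ⊗[R] M) _ (LinearEquiv.symm
      { tensorEquiv R S M R' with
        map_smul' := fun q x => tensorEquiv_smul R S M R' (algebraMap Q R' q) x }) hn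
  · letI := h.toAlgebra
    refine projDimFinite_of_regular Q (rs ++ ys) hrQL _ ?_
    refine (Submodule.quotEquivOfEq _ (LinearMap.ker (Algebra.linearMap Q (S ⊗[R] R'))) ?_).trans
      (LinearMap.quotKerEquivOfSurjective (Algebra.linearMap Q (S ⊗[R] R')) hsurj)
    rw [← hhk]; rfl

end CIAscent

variable (R S M : Type u) [CommRing R] [CommRing S]
  [IsLocalRing R] [IsLocalRing S] [IsNoetherianRing R] [IsNoetherianRing S]
  [Algebra R S] [IsLocalHom (algebraMap R S)]
  [AddCommGroup M] [Module R M] [Module S M] [IsScalarTower R S M] [Module.Finite S M]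

/-- Ascent of complete intersection flat dimension. -/
theorem ascent_CIfd_of_surjective_ci (hsur : Function.Surjective (algebraMap R S))
    (hker : GeneratedByRegularSequence R (RingHom.ker (algebraMap R S)))
    
    (hfd : HasFiniteCIDim R M) :
    HasFiniteCIDim S M := by
  obtain ⟨R', Q, _, _, f, g, ⟨h1, h2, h3, h4, h5, h6, h7, h8, h9⟩, hf, -⟩ := hfd
  let := f.toAlgebra
  let := g.toAlgebra
  have : Module.Flat R R' := h7
  have : IsLocalHom (algebraMap R R') := h5
  exact CIAscent.main R S M R' Q hsur hker h8 h9 hf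
end
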